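/- Under assumptions (A1) and (A2), suppose for each (x,μ) that π(·;x,μ) is an invariant probability measure of L_{x,μ} having finite moments of every order, uniformly bounded in (x,μ). Let h : ℝ^d×ℝ^d×P₂(ℝ^d) → ℝ be continuously differentiable in x, with h and ∇_x h, as well as ∇_x f and ∇_x a, jointly continuous, growing at most polynomially in y uniformly in (x,μ), and satisfying |g(x,y,μ) − g(x',y',μ)| ≤ K(1 ∧ |y−y'|^θ + |x−x'|)(1+|y|^m+|y'|^m) for g ∈ {h, ∇_x h, ∇_x f, ∇_x a}. Suppose for each (x,μ) there is v(x,·,μ) ∈ C²(ℝ^d) with v, ∇_y v, ∇²_y v growing at most polynomially in y uniformly in (x,μ), such that L_{x,μ}v(x,y,μ) = h(x,y,μ) − h̄(x,μ) for all y, where h̄(x,μ) = ∫ h(x,y,μ) π(dy;x,μ). Then for every μ the map x ↦ h̄(x,μ) is differentiable and, for j = 1,…,d, ∂_{x_j} h̄(x,μ) = ∫ [ ∂_{x_j}h(x,y,μ) − ∂_{x_j}f(x,y,μ)·∇_y v(x,y,μ) − ∂_{x_j}a(x,y,μ):∇²_y v(x,y,μ) ] π(dy;x,μ). -/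

import Mathlib

open MeasureTheory

noncomputable section

/-- First partial derivative of `φ : ℝ^d → ℝ` in the `i`-th coordinate direction. -/
def pd1 {d : ℕ} (φ : (Fin d → ℝ) → ℝ) (y : Fin d → ℝ) (i : Fin d) : ℝ :=
  fderiv ℝ φ y (Pi.single i 1)

/-- Second partial derivative of `φ : ℝ^d → ℝ` in the coordinate directions `i, j`. -/
def pd2 {d : ℕ} (φ : (Fin d → ℝ) → ℝ) (y : Fin d → ℝ) (i j : Fin d) : ℝ :=
  fderiv ℝ (fun z => fderiv ℝ φ z (Pi.single j 1)) y (Pi.single i 1)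

/-- The frozen generator `L φ (y) = f(y)·∇φ(y) + a(y):∇²φ(y)`. -/
def genL {d : ℕ} (f : (Fin d → ℝ) → Fin d → ℝ) (a : (Fin d → ℝ) → Fin d → Fin d → ℝ)
    (φ : (Fin d → ℝ) → ℝ) (y : Fin d → ℝ) : ℝ :=
  (∑ i, f y i * pd1 φ y i) + ∑ i, ∑ j, a y i j * pd2 φ y i j

/-- `C_b²` functions: twice continuously differentiable, bounded together with the
first and second derivatives. -/
def CbTwo {d : ℕ} (φ : (Fin d → ℝ) → ℝ) : Prop :=
  ContDiff ℝ 2 φ ∧ ∃ K : ℝ, ∀ y, |φ y| ≤ K ∧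
    ‖iteratedFDeriv ℝ 1 φ y‖ ≤ K ∧ ‖iteratedFDeriv ℝ 2 φ y‖ ≤ K

/-- An invariant probability measure of the frozen generator:
`∫ L φ dπ = 0` for every `φ ∈ C_b²`. -/
def IsInvariantMeasure {d : ℕ} (f : (Fin d → ℝ) → Fin d → ℝ)
    (a : (Fin d → ℝ) → Fin d → Fin d → ℝ) (π : Measure (Fin d → ℝ)) : Prop :=
  IsProbabilityMeasure π ∧
    ∀ φ : (Fin d → ℝ) → ℝ, CbTwo φ → ∫ y, genL f a φ y ∂π = 0

/-- `P₂(ℝ^d)`: Borel probability measures on `ℝ^d` with finite second moment.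
Its elements enter only as parameters. -/
def ProbMeas2 (d : ℕ) : Type :=
  {μ : Measure (Fin d → ℝ) // IsProbabilityMeasure μ ∧ Integrable (fun y => ‖y‖ ^ 2) μ}

/-- Assumption (A1): uniform ellipticity and boundedness of the symmetric diffusion
matrix `a`, two bounded `y`-derivatives, and uniform Hölder continuity in `y` of `a`
and these derivatives.  The parameter `p` ranges over the frozen data `(x, μ)`. -/
def AssumptionA1 {d : ℕ} {I : Type*} (a : I → (Fin d → ℝ) → Fin d → Fin d → ℝ) : Prop :=
  (∀ p y i j, a p y i j = a p y j i) ∧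
  (∃ lm lp : ℝ, 0 < lm ∧ lm ≤ lp ∧ ∀ p y (ξ : Fin d → ℝ),
      lm * ∑ i, ξ i ^ 2 ≤ 2 * ∑ i, ∑ j, ξ i * a p y i j * ξ j ∧
      2 * ∑ i, ∑ j, ξ i * a p y i j * ξ j ≤ lp * ∑ i, ξ i ^ 2) ∧
  (∃ K : ℝ, ∀ p y i j, |a p y i j| ≤ K) ∧
  (∀ p i j, ContDiff ℝ 2 (fun y => a p y i j)) ∧
  (∃ K : ℝ, ∀ p y i j,
      ‖iteratedFDeriv ℝ 1 (fun z => a p z i j) y‖ ≤ K ∧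
      ‖iteratedFDeriv ℝ 2 (fun z => a p z i j) y‖ ≤ K) ∧
  (∃ K θ : ℝ, 0 < θ ∧ θ ≤ 1 ∧ ∀ p y y' i j,
      |a p y i j - a p y' i j| ≤ K * ‖y - y'‖ ^ θ ∧
      ‖iteratedFDeriv ℝ 1 (fun z => a p z i j) y -
        iteratedFDeriv ℝ 1 (fun z => a p z i j) y'‖ ≤ K * ‖y - y'‖ ^ θ ∧
      ‖iteratedFDeriv ℝ 2 (fun z => a p z i j) y -
        iteratedFDeriv ℝ 2 (fun z => a p z i j) y'‖ ≤ K * ‖y - y'‖ ^ θ)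

/-- Assumption (A2): dissipativity and linear growth of the drift `f`, two bounded
`y`-derivatives, and uniform Hölder continuity in `y` of `f` and these derivatives.
The parameter `p` ranges over the frozen data `(x, μ)`. -/
def AssumptionA2 {d : ℕ} {I : Type*} (f : I → (Fin d → ℝ) → Fin d → ℝ) : Prop :=
  (∃ β C : ℝ, 0 < β ∧ 0 < C ∧ ∀ p y,
      (∑ i, f p y i * y i) ≤ -β * (∑ i, y i ^ 2) + C) ∧
  (∃ C : ℝ, ∀ p y, ‖f p y‖ ≤ C * (1 + ‖y‖)) ∧
  (∀ p i, ContDiff ℝ 2 (fun y => f p y i)) ∧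
  (∃ K : ℝ, ∀ p y i,
      ‖iteratedFDeriv ℝ 1 (fun z => f p z i) y‖ ≤ K ∧
      ‖iteratedFDeriv ℝ 2 (fun z => f p z i) y‖ ≤ K) ∧
  (∃ K θ : ℝ, 0 < θ ∧ θ ≤ 1 ∧ ∀ p y y' i,
      |f p y i - f p y' i| ≤ K * ‖y - y'‖ ^ θ ∧
      ‖iteratedFDeriv ℝ 1 (fun z => f p z i) y -
        iteratedFDeriv ℝ 1 (fun z => f p z i) y'‖ ≤ K * ‖y - y'‖ ^ θ ∧
      ‖iteratedFDeriv ℝ 2 (fun z => f p z i) y -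
        iteratedFDeriv ℝ 2 (fun z => f p z i) y'‖ ≤ K * ‖y - y'‖ ^ θ)

/-- Polynomial growth in `y`, uniformly in the parameters `(x, μ)`. -/
def PolyY {d : ℕ} {M : Type*} (g : (Fin d → ℝ) → (Fin d → ℝ) → M → ℝ) : Prop :=
  ∃ K : ℝ, ∃ m : ℕ, ∀ x y μ, |g x y μ| ≤ K * (1 + ‖y‖ ^ m)

/-- The mixed local Hölder / Lipschitz condition
`|g(x,y,μ) − g(x',y',μ)| ≤ K (1 ∧ |y−y'|^θ + |x−x'|)(1+|y|^m+|y'|^m)`. -/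
def MixedHolder {d : ℕ} {M : Type*} (g : (Fin d → ℝ) → (Fin d → ℝ) → M → ℝ) : Prop :=
  ∃ K θ : ℝ, ∃ m : ℕ, 0 < θ ∧ θ ≤ 1 ∧ ∀ x x' y y' μ,
    |g x y μ - g x' y' μ| ≤
      K * (min 1 (‖y - y'‖ ^ θ) + ‖x - x'‖) * (1 + ‖y‖ ^ m + ‖y'‖ ^ m)

section PA

theorem dtf_pow_expand (e : ℕ) (c : ℝ) (hc : 0 ≤ c) :
    ∃ K : ℝ, 0 ≤ K ∧ ∀ (Z α β δ τ : ℝ), |α| ≤ Z → |β| ≤ c * Z → |δ| ≤ c * Z → |τ| ≤ 1 →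
      |(α + τ * β + τ ^ 2 * δ) ^ e - α ^ e - τ * (e * α ^ (e - 1) * β)| ≤ K * τ ^ 2 * Z ^ e := by
  induction e with
  | zero => exact ⟨0, le_rfl, by intros; simp⟩
  | succ e ih =>
    obtain ⟨K, hK, ih⟩ := ih
    refine ⟨c + K * (1 + 2 * c) + e * c * (2 * c), by positivity, ?_⟩
    intro Z α β δ τ hα hβ hδ hτ
    have hZ : 0 ≤ Z := (abs_nonneg _).trans hα
    have h1 := ih Z α β δ τ hα hβ hδ hτ
    set X := α + τ * β + τ ^ 2 * δ with hX
    set R := X ^ e - α ^ e - τ * (e * α ^ (e - 1) * β) with hR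
    have hτ2 : τ ^ 2 ≤ 1 := by rw [← sq_abs]; exact pow_le_one₀ (abs_nonneg _) hτ
    have hXb : |X| ≤ (1 + 2 * c) * Z := by
      calc |X| ≤ |α| + |τ * β| + |τ ^ 2 * δ| := (abs_add_three _ _ _)
        _ ≤ Z + 1 * (c * Z) + 1 * (c * Z) := by
            rw [abs_mul, abs_mul]
            gcongr
            rw [abs_of_nonneg (sq_nonneg τ)]; exact hτ2
        _ = _ := by ring
    have hαe : |α ^ e| ≤ Z ^ e := by rw [abs_pow]; gcongr
    have hmid : |(e:ℝ) * α ^ (e - 1) * β * (β + τ * δ)| ≤ e * c * (2 * c) * Z ^ (e + 1) := by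
      rcases Nat.eq_zero_or_pos e with h0 | h0
      · simp [h0]
      · have : |α ^ (e-1)| ≤ Z ^ (e-1) := by rw [abs_pow]; gcongr
        have h3 : |β + τ * δ| ≤ 2 * c * Z := by
          calc |β + τ * δ| ≤ |β| + |τ * δ| := abs_add_le _ _
            _ ≤ c * Z + 1 * (c * Z) := by rw [abs_mul]; gcongr
            _ = _ := by ring
        calc |(e:ℝ) * α ^ (e - 1) * β * (β + τ * δ)| = e * |α ^ (e-1)| * |β| * |β + τ * δ| := by
              rw [abs_mul, abs_mul, abs_mul, Nat.abs_cast]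
          _ ≤ e * Z ^ (e-1) * (c * Z) * (2 * c * Z) := by gcongr
          _ = _ := by
              obtain ⟨m, rfl⟩ : ∃ m, e = m + 1 := ⟨e - 1, by omega⟩
              simp only [Nat.add_sub_cancel]; ring
    have key : X ^ (e+1) - α ^ (e+1) - τ * (((e+1 : ℕ):ℝ) * α ^ (e + 1 - 1) * β)
        = α ^ e * (τ ^ 2 * δ) + R * X + τ ^ 2 * (e * α ^ (e - 1) * β * (β + τ * δ)) := by
      have h5 : (e:ℝ) * α ^ e = e * α ^ (e-1) * α := by
        rcases Nat.eq_zero_or_pos e with h0 | h0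
        · simp [h0]
        · obtain ⟨m, rfl⟩ : ∃ m, e = m + 1 := ⟨e - 1, by omega⟩
          simp only [Nat.add_sub_cancel]; ring
      rw [hR]
      rw [Nat.add_sub_cancel]
      push_cast
      have : ((e:ℝ) + 1) * α ^ e * β = (e * α ^ (e-1) * α) * β + α ^ e * β := by rw [← h5]; ring
      rw [this, pow_succ, pow_succ, hX]
      ring
    rw [key]
    calc _ ≤ |α ^ e * (τ ^ 2 * δ)| + |R * X| + |τ ^ 2 * (e * α ^ (e - 1) * β * (β + τ * δ))| :=
          abs_add_three _ _ _
      _ ≤ Z ^ e * (τ ^ 2 * (c * Z)) + (K * τ ^ 2 * Z ^ e) * ((1 + 2 * c) * Z)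
          + τ ^ 2 * (e * c * (2 * c) * Z ^ (e + 1)) := by
          rw [abs_mul, abs_mul, abs_mul, abs_mul (τ^2), abs_of_nonneg (sq_nonneg τ)]
          gcongr
      _ = _ := by ring

variable {E F : Type*} [NormedAddCommGroup E] [InnerProductSpace ℝ E]
  [NormedAddCommGroup F] [NormedSpace ℝ F]

/-- weight of an `n`-jet of a curve -/
def jetW (n : ℕ) (γ : ℝ → E) : ℝ :=
  ∑ i ∈ Finset.Icc 1 n, (‖iteratedDeriv i γ 0‖ ^ 2) ^ (n.factorial / i)

/-- homogeneous size of an `n`-jet of a curve -/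
def jetD (n : ℕ) (γ : ℝ → E) : ℝ := jetW n γ ^ ((2 * n.factorial : ℕ) : ℝ)⁻¹

theorem jetW_nonneg (n : ℕ) (γ : ℝ → E) : 0 ≤ jetW n γ :=
  Finset.sum_nonneg fun i _ => by positivity

theorem jetD_nonneg (n : ℕ) (γ : ℝ → E) : 0 ≤ jetD n γ := Real.rpow_nonneg (jetW_nonneg n γ) _

theorem jetD_pow (n : ℕ) (γ : ℝ → E) : jetD n γ ^ (2 * n.factorial) = jetW n γ :=
  Real.rpow_inv_natCast_pow (jetW_nonneg n γ) (by have := n.factorial_ne_zero; omega)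

theorem jet_le (n : ℕ) (γ : ℝ → E) (i : ℕ) (h1 : 1 ≤ i) (hn : i ≤ n) :
    ‖iteratedDeriv i γ 0‖ ≤ jetD n γ ^ i := by
  have hdvd : i ∣ n.factorial := Nat.dvd_factorial h1 hn
  have he : i * (n.factorial / i) = n.factorial := Nat.mul_div_cancel' hdvd
  have hne : n.factorial / i ≠ 0 := by
    intro h; rw [h] at he; exact n.factorial_ne_zero (by simpa using he.symm)
  have h2 : (‖iteratedDeriv i γ 0‖ ^ 2) ^ (n.factorial / i) ≤ jetW n γ := by
    unfold jetW
    exact Finset.single_le_sum (f := fun i => (‖iteratedDeriv i γ 0‖ ^ 2) ^ (n.factorial / i))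
      (fun i _ => by positivity) (Finset.mem_Icc.2 ⟨h1, hn⟩)
  rw [← jetD_pow, show 2 * n.factorial = i * (2 * (n.factorial / i)) by
    rw [← Nat.mul_left_comm, he]] at h2
  have h3 : (‖iteratedDeriv i γ 0‖) ^ (2 * (n.factorial / i)) ≤
      (jetD n γ ^ i) ^ (2 * (n.factorial / i)) := by
    rw [← pow_mul] at h2 ⊢
    exact h2
  exact le_of_pow_le_pow_left₀ (by omega) (pow_nonneg (jetD_nonneg n γ) i) h3

/-- Faa di Bruno bound along a curve -/
theorem jet_comp_le (n : ℕ) {g : E → F} {γ : ℝ → E} (hg : ContDiff ℝ n g) (hγ : ContDiff ℝ n γ)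
    {C D : ℝ} (hC0 : 0 ≤ C)
    (hC : ∀ i, 1 ≤ i → i ≤ n → ∀ z, ‖iteratedFDeriv ℝ i g z‖ ≤ C)
    (hD : ∀ i, 1 ≤ i → i ≤ n → ‖iteratedDeriv i γ 0‖ ≤ D ^ i) (j : ℕ) (hj1 : 1 ≤ j) (hj : j ≤ n) :
    ‖iteratedDeriv j (fun t => g (γ t)) 0‖ ≤ j.factorial * C * D ^ j := by
  have h0 : (fun t => g (γ t)) = fun t => (g (γ 0)) + ((fun z => - g (γ 0) + g z) ∘ γ) t := by
    ext t; simp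
  rw [h0, iteratedDeriv_const_add (by omega), ← norm_iteratedFDeriv_eq_norm_iteratedDeriv]
  refine norm_iteratedFDeriv_comp_le (N := n) (contDiff_const.add hg) hγ (by exact_mod_cast hj) 0 ?_ ?_
  · intro i hi
    rcases Nat.eq_zero_or_pos i with h | h
    · subst h; simpa using hC0
    · have e1 : iteratedFDeriv ℝ i (fun z => - g (γ 0) + g z) =
          iteratedFDeriv ℝ i (fun _ => - g (γ 0)) + iteratedFDeriv ℝ i g :=
        iteratedFDeriv_add contDiff_const (hg.of_le (by exact_mod_cast hi.trans hj))
      rw [e1, iteratedFDeriv_const_of_ne (by omega), zero_add]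
      exact hC i h (hi.trans hj) _
  · intro i h1 hi
    rw [norm_iteratedFDeriv_eq_norm_iteratedDeriv]
    exact hD i h1 (hi.trans hj)

/-- the curve `γ + τ p(γ) + τ² b(γ)` -/
def eulerCurve (p b : E → E) (τ : ℝ) (γ : ℝ → E) : ℝ → E :=
  fun t => γ t + τ • p (γ t) + τ ^ 2 • b (γ t)

theorem eulerCurve_contDiff {n : ℕ} {p b : E → E} (hp : ContDiff ℝ n p) (hb : ContDiff ℝ n b)
    (τ : ℝ) {γ : ℝ → E} (hγ : ContDiff ℝ n γ) : ContDiff ℝ n (eulerCurve p b τ γ) := by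
  unfold eulerCurve
  exact (hγ.add (contDiff_const.smul (hp.comp hγ))).add (contDiff_const.smul (hb.comp hγ))

theorem eulerCurve_jet {n : ℕ} {p b : E → E} (hp : ContDiff ℝ n p) (hb : ContDiff ℝ n b)
    (τ : ℝ) {γ : ℝ → E} (hγ : ContDiff ℝ n γ) (i : ℕ) (hi : i ≤ n) :
    iteratedDeriv i (eulerCurve p b τ γ) 0 = iteratedDeriv i γ 0
      + τ • iteratedDeriv i (fun t => p (γ t)) 0 + τ ^ 2 • iteratedDeriv i (fun t => b (γ t)) 0 := by
  have hi' : ((i:ℕ) : WithTop ℕ∞) ≤ n := by exact_mod_cast hi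
  have e1 := (hγ.of_le hi').contDiffAt (x := (0:ℝ))
  have e2 := ((hp.comp hγ).of_le hi').contDiffAt (x := (0:ℝ))
  have e3 := ((hb.comp hγ).of_le hi').contDiffAt (x := (0:ℝ))
  have : eulerCurve p b τ γ = (γ + τ • (fun t => p (γ t))) + τ ^ 2 • (fun t => b (γ t)) := rfl
  have e2' : ContDiffAt ℝ i (τ • (fun t => p (γ t))) 0 := contDiffAt_const.smul e2
  have e3' : ContDiffAt ℝ i (τ ^ 2 • (fun t => b (γ t))) 0 := contDiffAt_const.smul e3
  have e4 : ContDiffAt ℝ i (γ + τ • (fun t => p (γ t))) 0 := e1.add e2'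
  rw [this, iteratedDeriv_add e4 e3', iteratedDeriv_add e1 e2',
    iteratedDeriv_const_smul (f := fun t => p (γ t)) e2,
    iteratedDeriv_const_smul (f := fun t => b (γ t)) e3]

theorem euler_W_step (n : ℕ) (C : ℝ) (hC0 : 0 ≤ C) : ∃ K : ℝ, 0 ≤ K ∧ ∀ (p b : E → E),
    ContDiff ℝ n p → ContDiff ℝ n b →
    (∀ i, 1 ≤ i → i ≤ n → ∀ z, ‖iteratedFDeriv ℝ i p z‖ ≤ C) →
    (∀ i, 1 ≤ i → i ≤ n → ∀ z, ‖iteratedFDeriv ℝ i b z‖ ≤ C) →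
    ∀ τ : ℝ, |τ| ≤ 1 → ∀ γ : ℝ → E, ContDiff ℝ n γ →
      jetW n (eulerCurve p b τ γ) + jetW n (eulerCurve p b (-τ) γ) ≤ 2 * (1 + K * τ ^ 2) * jetW n γ := by
  set c0 : ℝ := n.factorial * C with hc0
  have hc0' : 0 ≤ c0 := by positivity
  set c : ℝ := 2 * c0 + 4 * c0 ^ 2 with hc
  have hcn : 0 ≤ c := by positivity
  choose K hK hexp using fun e => dtf_pow_expand e c hcn
  refine ⟨∑ i ∈ Finset.Icc 1 n, K (n.factorial / i), Finset.sum_nonneg fun i _ => hK _, ?_⟩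
  intro p b hp hb hpC hbC τ hτ γ hγ
  set D := jetD n γ with hD
  have hD0 : 0 ≤ D := jetD_nonneg n γ
  have hterm : ∀ i ∈ Finset.Icc 1 n,
      (‖iteratedDeriv i (eulerCurve p b τ γ) 0‖ ^ 2) ^ (n.factorial / i) +
      (‖iteratedDeriv i (eulerCurve p b (-τ) γ) 0‖ ^ 2) ^ (n.factorial / i) ≤
      2 * (‖iteratedDeriv i γ 0‖ ^ 2) ^ (n.factorial / i) +
        2 * (K (n.factorial / i) * τ ^ 2 * jetW n γ) := by
    intro i hi
    obtain ⟨h1, hin⟩ := Finset.mem_Icc.1 hi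
    have hdvd : i ∣ n.factorial := Nat.dvd_factorial h1 hin
    have he : i * (n.factorial / i) = n.factorial := Nat.mul_div_cancel' hdvd
    set e := n.factorial / i with hedef
    set v := iteratedDeriv i γ 0 with hv
    set S := iteratedDeriv i (fun t => p (γ t)) 0 with hS
    set G := iteratedDeriv i (fun t => b (γ t)) 0 with hG
    have hfac : (i.factorial : ℝ) ≤ n.factorial := by exact_mod_cast Nat.factorial_le hin
    have hvb : ‖v‖ ≤ D ^ i := jet_le n γ i h1 hin
    have hSb : ‖S‖ ≤ c0 * D ^ i :=
      (jet_comp_le n hp hγ hC0 hpC (fun i h1 hi => jet_le n γ i h1 hi) i h1 hin).trans (by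
        rw [hc0]; gcongr)
    have hGb : ‖G‖ ≤ c0 * D ^ i :=
      (jet_comp_le n hb hγ hC0 hbC (fun i h1 hi => jet_le n γ i h1 hi) i h1 hin).trans (by
        rw [hc0]; gcongr)
    have hZ : ((D ^ i) ^ 2) ^ e = jetW n γ := by
      rw [← jetD_pow, ← pow_mul, ← pow_mul, ← hD]; congr 1; rw [← he]; ring
    have hDi : 0 ≤ D ^ i := pow_nonneg hD0 i
    have hsq : ∀ s : ℝ, ‖v + s • S + s ^ 2 • G‖ ^ 2 = ‖v‖ ^ 2 + s * (2 * inner ℝ v S)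
        + s ^ 2 * (‖S‖ ^ 2 + 2 * inner ℝ v G + 2 * s * inner ℝ S G + s ^ 2 * ‖G‖ ^ 2) := by
      intro s
      rw [← real_inner_self_eq_norm_sq, ← real_inner_self_eq_norm_sq, ← real_inner_self_eq_norm_sq,
        ← real_inner_self_eq_norm_sq]
      simp only [inner_add_left, inner_add_right, inner_smul_left, inner_smul_right]
      rw [real_inner_comm v S, real_inner_comm v G, real_inner_comm S G]
      simp
      ring
    have hvS : |inner ℝ v S| ≤ D ^ i * (c0 * D ^ i) :=
      (abs_real_inner_le_norm _ _).trans (by gcongr)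
    have hvG : |inner ℝ v G| ≤ D ^ i * (c0 * D ^ i) :=
      (abs_real_inner_le_norm _ _).trans (by gcongr)
    have hSG : |inner ℝ S G| ≤ (c0 * D ^ i) * (c0 * D ^ i) :=
      (abs_real_inner_le_norm _ _).trans (by gcongr)
    have hS2 : ‖S‖ ^ 2 ≤ (c0 * D ^ i) ^ 2 := by gcongr
    have hG2 : ‖G‖ ^ 2 ≤ (c0 * D ^ i) ^ 2 := by gcongr
    have hexp1 : ∀ s : ℝ, |s| ≤ 1 →
        |(‖v + s • S + s ^ 2 • G‖ ^ 2) ^ e - (‖v‖ ^ 2) ^ e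
          - s * (e * (‖v‖ ^ 2) ^ (e - 1) * (2 * inner ℝ v S))| ≤ K e * s ^ 2 * jetW n γ := by
      intro s hs
      rw [hsq s, ← hZ]
      refine hexp e ((D ^ i) ^ 2) (‖v‖ ^ 2) (2 * inner ℝ v S) _ s ?_ ?_ ?_ hs
      · rw [abs_of_nonneg (by positivity)]; gcongr
      · rw [abs_mul, abs_two, hc]
        nlinarith [hvS, sq_nonneg (c0 * D ^ i)]
      · have hs2 : s ^ 2 ≤ 1 := by rw [← sq_abs]; exact pow_le_one₀ (abs_nonneg _) hs
        have a1 : |2 * s * inner ℝ S G| ≤ 2 * ((c0 * D ^ i) * (c0 * D ^ i)) := by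
          rw [abs_mul, abs_mul, abs_two]
          calc 2 * |s| * |inner ℝ S G| ≤ 2 * 1 * ((c0 * D ^ i) * (c0 * D ^ i)) := by gcongr
            _ = _ := by ring
        have a2 : |s ^ 2 * ‖G‖ ^ 2| ≤ (c0 * D ^ i) ^ 2 := by
          rw [abs_of_nonneg (by positivity)]
          calc s ^ 2 * ‖G‖ ^ 2 ≤ 1 * (c0 * D ^ i) ^ 2 := by gcongr
            _ = _ := by ring
        have a3 := abs_le.1 a1
        have a4 := abs_le.1 a2
        have a5 := abs_le.1 hvG
        have a6 : 0 ≤ ‖S‖ ^ 2 := by positivity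
        have a7 : c * (D ^ i) ^ 2 = 2 * (D ^ i * (c0 * D ^ i)) + 4 * (c0 * D ^ i) ^ 2 := by
          rw [hc]; ring
        rw [a7, abs_le]
        constructor <;> nlinarith [sq_nonneg (c0 * D ^ i)]
    rw [eulerCurve_jet hp hb τ hγ i hin, eulerCurve_jet hp hb (-τ) hγ i hin]
    have b1 := (abs_le.1 (hexp1 τ hτ)).2
    have b2 := (abs_le.1 (hexp1 (-τ) (by rwa [abs_neg]))).2
    have : (-τ) ^ 2 = τ ^ 2 := by ring
    rw [this] at b2
    rw [this]
    linarith
  calc jetW n (eulerCurve p b τ γ) + jetW n (eulerCurve p b (-τ) γ)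
      ≤ ∑ i ∈ Finset.Icc 1 n, (2 * (‖iteratedDeriv i γ 0‖ ^ 2) ^ (n.factorial / i) +
        2 * (K (n.factorial / i) * τ ^ 2 * jetW n γ)) := by
        unfold jetW
        rw [← Finset.sum_add_distrib]
        exact Finset.sum_le_sum hterm
    _ = _ := by
        rw [Finset.sum_add_distrib, ← Finset.mul_sum, ← Finset.mul_sum, ← Finset.sum_mul,
          ← Finset.sum_mul]
        change 2 * jetW n γ + _ = _
        ring

end PA

section PB

variable {E : Type*} [NormedAddCommGroup E] [InnerProductSpace ℝ E] {ι : Type*} [Fintype ι]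

/-- `n`-th order bound along curves -/
def JB (n : ℕ) (M : ℝ) (u : E → ℝ) : Prop :=
  ∀ γ : ℝ → E, ContDiff ℝ n γ → |iteratedDeriv n (fun t => u (γ t)) 0| ≤ M * jetD n γ ^ n

def sg (b : Bool) : ℝ := if b then 1 else -1

/-- One step of the Euler chain -/
def eulerQ (p : ι → E → E) (b : E → E) (τ : ℝ) (u : E → ℝ) (x : E) : ℝ :=
  (Fintype.card (ι × Bool) : ℝ)⁻¹ *
    ∑ k : ι × Bool, u (x + (sg k.2 * τ) • p k.1 x + (sg k.2 * τ) ^ 2 • b x)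

/-- The generator, written with second derivatives along curves -/
def genC (p : ι → E → E) (b : E → E) (u : E → ℝ) (x : E) : ℝ :=
  (1 / 2) * ∑ k, iteratedDeriv 2 (fun t : ℝ => u (x + t • p k x + t ^ 2 • b x)) 0

theorem eulerQ_contDiff [Nonempty ι] {n : ℕ} {p : ι → E → E} {b : E → E} (hp : ∀ k, ContDiff ℝ n (p k))
    (hb : ContDiff ℝ n b) (τ : ℝ) {u : E → ℝ} (hu : ContDiff ℝ n u) :
    ContDiff ℝ n (eulerQ p b τ u) := by
  unfold eulerQ
  refine contDiff_const.mul (ContDiff.sum fun k _ => hu.comp ?_)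
  exact (contDiff_id.add (contDiff_const.smul (hp k.1))).add (contDiff_const.smul hb)

theorem eulerQ_bound [Nonempty ι] {p : ι → E → E} {b : E → E} {τ : ℝ} {u : E → ℝ} {B : ℝ}
    (hu : ∀ x, |u x| ≤ B) (x : E) : |eulerQ p b τ u x| ≤ B := by
  unfold eulerQ
  have hc : (0:ℝ) < Fintype.card (ι × Bool) := by exact_mod_cast Fintype.card_pos
  rw [abs_mul, abs_of_nonneg (by positivity), inv_mul_le_iff₀ hc]
  calc _ ≤ ∑ k : ι × Bool, B :=
        (Finset.abs_sum_le_sum_abs _ _).trans (Finset.sum_le_sum fun k _ => hu _)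
    _ = _ := by simp

theorem euler_J_step [Nonempty ι] (n : ℕ) (hn : 1 ≤ n) (C : ℝ) (hC0 : 0 ≤ C) :
    ∃ K : ℝ, 0 ≤ K ∧ ∀ (p : ι → E → E) (b : E → E),
    (∀ k, ContDiff ℝ n (p k)) → ContDiff ℝ n b →
    (∀ k, ∀ i, 1 ≤ i → i ≤ n → ∀ z, ‖iteratedFDeriv ℝ i (p k) z‖ ≤ C) →
    (∀ i, 1 ≤ i → i ≤ n → ∀ z, ‖iteratedFDeriv ℝ i b z‖ ≤ C) →
    ∀ τ : ℝ, |τ| ≤ 1 → ∀ u : E → ℝ, ContDiff ℝ n u → ∀ M, 0 ≤ M → JB n M u →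
      JB n ((1 + K * τ ^ 2) * M) (eulerQ p b τ u) := by
  obtain ⟨K, hK, hW⟩ := euler_W_step (E := E) n C hC0
  refine ⟨K, hK, ?_⟩
  intro p b hp hb hpC hbC τ hτ u hu M hM hJ γ hγ
  set c : ℝ := (Fintype.card (ι × Bool) : ℝ) with hcdef
  have hc : (0:ℝ) < c := by rw [hcdef]; exact_mod_cast Fintype.card_pos
  set Γ : ι × Bool → ℝ → E := fun k => eulerCurve (p k.1) b (sg k.2 * τ) γ with hΓ
  have hΓc : ∀ k, ContDiff ℝ n (Γ k) := fun k => eulerCurve_contDiff (hp _) hb _ hγ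
  have h1 : (fun t => eulerQ p b τ u (γ t)) = fun t => c⁻¹ * (∑ k, fun t => u (Γ k t)) t := by
    ext t; simp [eulerQ, hΓ, eulerCurve, hcdef]
  have huΓ : ∀ k, ContDiff ℝ n (fun t => u (Γ k t)) := fun k => hu.comp (hΓc k)
  have h2 : iteratedDeriv n (fun t => eulerQ p b τ u (γ t)) 0 =
      ∑ k, c⁻¹ * iteratedDeriv n (fun t => u (Γ k t)) 0 := by
    rw [h1, iteratedDeriv_const_mul_field, iteratedDeriv_sum, Finset.mul_sum]
    intro k _; exact (huΓ k).contDiffAt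
  set A : ℝ := ∑ k, c⁻¹ * jetD n (Γ k) ^ n with hA
  have h3 : |iteratedDeriv n (fun t => eulerQ p b τ u (γ t)) 0| ≤ M * A := by
    rw [h2, hA, Finset.mul_sum]
    refine (Finset.abs_sum_le_sum_abs _ _).trans (Finset.sum_le_sum fun k _ => ?_)
    rw [abs_mul, abs_of_nonneg (by positivity : (0:ℝ) ≤ c⁻¹)]
    calc c⁻¹ * |iteratedDeriv n (fun t => u (Γ k t)) 0| ≤ c⁻¹ * (M * jetD n (Γ k) ^ n) := by
          gcongr; exact hJ _ (hΓc k)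
      _ = _ := by ring
  set q := 2 * (n - 1).factorial with hq
  have hq0 : q ≠ 0 := by have := (n-1).factorial_ne_zero; omega
  have hnq : n * q = 2 * n.factorial := by
    rw [hq, ← Nat.mul_factorial_pred (by omega : n ≠ 0)]; ring
  have hAq : A ^ q ≤ (1 + K * τ ^ 2) * jetW n γ := by
    have := Real.pow_arith_mean_le_arith_mean_pow (Finset.univ : Finset (ι × Bool))
      (fun _ => c⁻¹) (fun k => jetD n (Γ k) ^ n) (fun _ _ => by positivity)
      (by rw [Finset.sum_const, Finset.card_univ, nsmul_eq_mul]; exact mul_inv_cancel₀ hc.ne') (fun k _ => pow_nonneg (jetD_nonneg _ _) _) q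
    refine this.trans ?_
    have h4 : ∀ k, (jetD n (Γ k) ^ n) ^ q = jetW n (Γ k) := by
      intro k; rw [← pow_mul, hnq, jetD_pow]
    simp only [h4]
    rw [← Finset.mul_sum, inv_mul_le_iff₀ hc, Fintype.sum_prod_type]
    have h5 : ∀ k : ι, ∑ y, jetW n (Γ (k, y)) ≤ 2 * (1 + K * τ ^ 2) * jetW n γ := by
      intro k
      rw [Fintype.sum_bool]
      simpa [hΓ, sg] using hW (p k) b (hp k) hb (hpC k) hbC τ hτ γ hγ
    refine (Finset.sum_le_sum fun k _ => h5 k).trans_eq ?_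
    simp [hcdef]
    ring
  have hA0 : 0 ≤ A := Finset.sum_nonneg fun k _ => mul_nonneg (by positivity) (pow_nonneg (jetD_nonneg _ _) _)
  have hKτ : 0 ≤ K * τ ^ 2 := by positivity
  have hAle : A ≤ (1 + K * τ ^ 2) * jetD n γ ^ n := by
    refine le_of_pow_le_pow_left₀ hq0 (mul_nonneg (by positivity) (pow_nonneg (jetD_nonneg _ _) _)) ?_
    rw [mul_pow, ← pow_mul (jetD n γ), hnq, jetD_pow]
    refine hAq.trans (mul_le_mul_of_nonneg_right ?_ (jetW_nonneg _ _))
    exact le_self_pow₀ (by linarith) hq0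
  calc _ ≤ M * A := h3
    _ ≤ M * ((1 + K * τ ^ 2) * jetD n γ ^ n) := by gcongr
    _ = _ := by ring

theorem jetD_le (n : ℕ) (hn : 1 ≤ n) (γ : ℝ → E) (R : ℝ) (hR : 0 ≤ R)
    (h : ∀ i, 1 ≤ i → i ≤ n → ‖iteratedDeriv i γ 0‖ ≤ R ^ i) : jetD n γ ≤ n * R := by
  have hf := n.factorial_ne_zero
  refine le_of_pow_le_pow_left₀ (n := 2 * n.factorial) (by omega) (by positivity) ?_
  rw [jetD_pow]
  calc jetW n γ ≤ ∑ i ∈ Finset.Icc 1 n, R ^ (2 * n.factorial) := by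
        refine Finset.sum_le_sum fun i hi => ?_
        obtain ⟨h1, hin⟩ := Finset.mem_Icc.1 hi
        have he : i * (n.factorial / i) = n.factorial := Nat.mul_div_cancel' (Nat.dvd_factorial h1 hin)
        calc (‖iteratedDeriv i γ 0‖ ^ 2) ^ (n.factorial / i)
            ≤ ((R ^ i) ^ 2) ^ (n.factorial / i) := by gcongr; exact h i h1 hin
          _ = R ^ (2 * n.factorial) := by
              rw [← pow_mul, ← pow_mul]; congr 1; rw [Nat.mul_left_comm, he]
    _ = n * R ^ (2 * n.factorial) := by simp
    _ ≤ (n * R) ^ (2 * n.factorial) := by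
        rw [mul_pow]
        gcongr
        exact le_self_pow₀ (by exact_mod_cast hn) (by omega)

theorem taylor_side (g : ℝ → ℝ) (hg : ContDiff ℝ 3 g) (R τ : ℝ) (hτ0 : 0 < τ)
    (hR : ∀ s, 0 ≤ s → s ≤ τ → |iteratedDeriv 3 g s| ≤ R) :
    |g τ - g 0 - τ * deriv g 0 - τ ^ 2 / 2 * iteratedDeriv 2 g 0| ≤ R * τ ^ 3 / 2 := by
  have hud := uniqueDiffOn_Icc hτ0
  have h0 : (0:ℝ) ∈ Set.Icc 0 τ := ⟨le_rfl, hτ0.le⟩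
  have hW : ∀ m : ℕ, m ≤ 3 → ∀ s ∈ Set.Icc (0:ℝ) τ,
      iteratedDerivWithin m g (Set.Icc 0 τ) s = iteratedDeriv m g s := fun m hm s hs =>
    iteratedDerivWithin_eq_iteratedDeriv hud (hg.of_le (by exact_mod_cast hm)).contDiffAt hs
  have := taylor_mean_remainder_bound (f := g) (a := 0) (b := τ) (C := R) (x := τ) (n := 2) hτ0.le
    (hg.contDiffOn.of_le (by norm_num)) ⟨hτ0.le, le_rfl⟩ (by
      intro y hy
      rw [hW 3 le_rfl y hy]
      exact hR y hy.1 hy.2)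
  rw [taylorWithinEval_succ, taylorWithinEval_succ, taylor_within_zero_eval, hW 2 (by norm_num) 0 h0,
    hW 1 (by norm_num) 0 h0] at this
  simp only [iteratedDeriv_one, Real.norm_eq_abs, smul_eq_mul] at this
  norm_num at this
  convert this using 2
  ring

theorem taylor_even (g : ℝ → ℝ) (hg : ContDiff ℝ 3 g) (R τ : ℝ) (hτ0 : 0 < τ)
    (hR : ∀ s, |s| ≤ τ → |iteratedDeriv 3 g s| ≤ R) :
    |g τ + g (-τ) - 2 * g 0 - τ ^ 2 * iteratedDeriv 2 g 0| ≤ R * τ ^ 3 := by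
  have h1 := taylor_side g hg R τ hτ0 (fun s h0 h1 => hR s (by rwa [abs_of_nonneg h0]))
  have h2 := taylor_side (fun x => g (-x)) (hg.comp contDiff_neg) R τ hτ0 (fun s h0 h1 => by
    rw [iteratedDeriv_comp_neg]
    simpa using hR (-s) (by rwa [abs_neg, abs_of_nonneg h0]))
  rw [iteratedDeriv_comp_neg, deriv_comp_neg] at h2
  simp only [neg_zero] at h2
  norm_num at h2
  rw [abs_le] at *
  constructor <;> linarith [h1.1, h1.2, h2.1, h2.2]

theorem euler_curve_third (v w x : E) (s : ℝ) (hs : |s| ≤ 1) :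
    jetD 3 (fun t : ℝ => x + (t + s) • v + (t + s) ^ 2 • w) ≤ 3 * (1 + ‖v‖ + 2 * ‖w‖) := by
  have hd : ∀ t : ℝ, HasDerivAt (fun t : ℝ => x + (t + s) • v + (t + s) ^ 2 • w)
      (v + (2 * (t + s)) • w) t := by
    intro t
    have e1 : HasDerivAt (fun t : ℝ => t + s) 1 t := (hasDerivAt_id t).add_const s
    have e2 : HasDerivAt (fun t : ℝ => (t + s) ^ 2) (2 * (t + s)) t := by
      have := e1.fun_pow 2; simpa using this
    have := ((e1.smul_const v).const_add x).fun_add (e2.smul_const w)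
    simpa using this
  have hd2 : ∀ t : ℝ, HasDerivAt (fun t : ℝ => v + (2 * (t + s)) • w) ((2:ℝ) • w) t := by
    intro t
    have e1 : HasDerivAt (fun t : ℝ => 2 * (t + s)) 2 t := by
      simpa using ((hasDerivAt_id t).add_const s).const_mul 2
    simpa using (e1.smul_const w).const_add v
  have D1 : deriv (fun t : ℝ => x + (t + s) • v + (t + s) ^ 2 • w) = fun t => v + (2 * (t + s)) • w :=
    funext fun t => (hd t).deriv
  have D2 : deriv (fun t : ℝ => v + (2 * (t + s)) • w) = fun t => (2:ℝ) • w :=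
    funext fun t => (hd2 t).deriv
  have := jetD_le 3 (by norm_num) (fun t : ℝ => x + (t + s) • v + (t + s) ^ 2 • w)
    (1 + ‖v‖ + 2 * ‖w‖) (by positivity) (by
      intro i h1 h3
      have hR1 : 1 ≤ 1 + ‖v‖ + 2 * ‖w‖ := by linarith [norm_nonneg v, norm_nonneg w]
      interval_cases i
      · rw [iteratedDeriv_one, D1]
        simp only [zero_add, pow_one]
        calc ‖v + (2 * s) • w‖ ≤ ‖v‖ + ‖(2 * s) • w‖ := norm_add_le _ _
          _ ≤ ‖v‖ + 2 * 1 * ‖w‖ := by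
              rw [norm_smul, Real.norm_eq_abs, abs_mul, abs_two]; gcongr
          _ ≤ _ := by linarith
      · rw [iteratedDeriv_succ, iteratedDeriv_one, D1, D2]
        refine le_trans ?_ (le_self_pow₀ hR1 (by norm_num))
        rw [norm_smul]; simp; linarith [norm_nonneg v]
      · rw [iteratedDeriv_succ, iteratedDeriv_succ, iteratedDeriv_one, D1, D2]
        simp; positivity)
  exact_mod_cast this

theorem euler_consistency [Nonempty ι] {p : ι → E → E} {b : E → E} {u : E → ℝ} (hu : ContDiff ℝ 3 u) {M : ℝ}
    (hM : 0 ≤ M) (hJ : JB 3 M u) (x : E) (R : ℝ) (hR : ∀ k, 1 + ‖p k x‖ + 2 * ‖b x‖ ≤ R)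
    (τ : ℝ) (hτ0 : 0 < τ) (hτ : τ ≤ 1) :
    |eulerQ p b τ u x - u x - τ ^ 2 / Fintype.card ι * genC p b u x| ≤ 27 * M * R ^ 3 * τ ^ 3 := by
  have hc : (0:ℝ) < Fintype.card ι := by exact_mod_cast Fintype.card_pos
  set g : ι → ℝ → ℝ := fun k t => u (x + t • p k x + t ^ 2 • b x) with hg
  have hcurve : ∀ k, ContDiff ℝ 3 (fun t : ℝ => x + t • p k x + t ^ 2 • b x) := fun k => by fun_prop
  have hgc : ∀ k, ContDiff ℝ 3 (g k) := fun k => hu.comp (hcurve k)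
  have hk : ∀ k, |g k τ + g k (-τ) - 2 * u x - τ ^ 2 * iteratedDeriv 2 (g k) 0| ≤ 27 * M * R ^ 3 * τ ^ 3 := by
    intro k
    have h0 : g k 0 = u x := by simp [hg]
    rw [← h0]
    refine taylor_even (g k) (hgc k) _ τ hτ0 ?_
    intro s hs
    have h1 : iteratedDeriv 3 (g k) s = iteratedDeriv 3 (fun t => g k (t + s)) 0 := by
      rw [iteratedDeriv_comp_add_const]; simp
    rw [h1]
    have h2 := hJ (fun t => x + (t + s) • p k x + (t + s) ^ 2 • b x)
      (by exact_mod_cast (hcurve k).comp (contDiff_id.add contDiff_const))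
    refine h2.trans ?_
    have h3 := euler_curve_third (p k x) (b x) x s (hs.trans hτ)
    calc M * jetD 3 (fun t => x + (t + s) • p k x + (t + s) ^ 2 • b x) ^ 3
        ≤ M * (3 * R) ^ 3 := by
          gcongr
          · exact jetD_nonneg _ _
          · exact h3.trans (by linarith [hR k])
      _ = _ := by ring
  have hsum : eulerQ p b τ u x - u x - τ ^ 2 / Fintype.card ι * genC p b u x =
      (2 * Fintype.card ι : ℝ)⁻¹ * ∑ k, (g k τ + g k (-τ) - 2 * u x - τ ^ 2 * iteratedDeriv 2 (g k) 0) := by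
    simp only [Finset.sum_sub_distrib, Finset.sum_add_distrib, ← Finset.mul_sum, eulerQ, genC,
      Fintype.sum_prod_type, Fintype.sum_bool, sg, Fintype.card_prod, Fintype.card_bool, hg]
    simp
    field_simp
  rw [hsum, abs_mul, abs_of_nonneg (by positivity), inv_mul_le_iff₀ (by positivity)]
  refine (Finset.abs_sum_le_sum_abs _ _).trans ((Finset.sum_le_sum fun k _ => hk k).trans ?_)
  have : 0 ≤ 27 * M * R ^ 3 * τ ^ 3 := by
    obtain ⟨k⟩ := (inferInstance : Nonempty ι)
    exact (abs_nonneg _).trans (hk k)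
  simp
  nlinarith

end PB

section PB2

variable {E : Type*} [NormedAddCommGroup E] [InnerProductSpace ℝ E] {ι : Type*} [Fintype ι]

theorem JB_mono {n : ℕ} {M M' : ℝ} {u : E → ℝ} (h : JB n M u) (hM : M ≤ M') : JB n M' u :=
  fun γ hγ => (h γ hγ).trans (mul_le_mul_of_nonneg_right hM (pow_nonneg (jetD_nonneg _ _) _))

theorem JB_sum {n : ℕ} (s : Finset ℕ) (c M : ℕ → ℝ) (u : ℕ → E → ℝ) (hu : ∀ m, ContDiff ℝ n (u m))
    (h : ∀ m, JB n (M m) (u m)) : JB n (∑ m ∈ s, |c m| * M m) (fun x => ∑ m ∈ s, c m * u m x) := by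
  intro γ hγ
  have h1 : iteratedDeriv n (fun t => ∑ m ∈ s, c m * u m (γ t)) 0 =
      ∑ m ∈ s, c m * iteratedDeriv n (fun t => u m (γ t)) 0 := by
    rw [iteratedDeriv_fun_sum]
    · refine Finset.sum_congr rfl fun m _ => ?_
      rw [iteratedDeriv_const_mul_field]
    · intro m _; exact (contDiff_const.mul ((hu m).comp hγ)).contDiffAt
  rw [h1, Finset.sum_mul]
  refine (Finset.abs_sum_le_sum_abs _ _).trans (Finset.sum_le_sum fun m _ => ?_)
  rw [abs_mul, mul_assoc]
  exact mul_le_mul_of_nonneg_left (h m γ hγ) (abs_nonneg _)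

theorem eulerQ_sum (p : ι → E → E) (b : E → E) (τ : ℝ) (s : Finset ℕ) (c : ℕ → ℝ) (u : ℕ → E → ℝ)
    (x : E) : eulerQ p b τ (fun x => ∑ m ∈ s, c m * u m x) x = ∑ m ∈ s, c m * eulerQ p b τ (u m) x := by
  unfold eulerQ
  rw [Finset.sum_comm, Finset.mul_sum]
  refine Finset.sum_congr rfl fun m _ => ?_
  rw [← Finset.mul_sum]; ring

theorem euler_iter [Nonempty ι] {n : ℕ} {p : ι → E → E} {b : E → E} (hp : ∀ k, ContDiff ℝ n (p k))
    (hb : ContDiff ℝ n b) (τ K : ℝ) (hK : 0 ≤ K)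
    (hs : ∀ u : E → ℝ, ContDiff ℝ n u → ∀ M, 0 ≤ M → JB n M u →
      JB n ((1 + K * τ ^ 2) * M) (eulerQ p b τ u)) (φ : E → ℝ) (hφ : ContDiff ℝ n φ) (M : ℝ) (hM : 0 ≤ M)
    (hJ : JB n M φ) (m : ℕ) : ContDiff ℝ n ((eulerQ p b τ)^[m] φ) ∧
      JB n ((1 + K * τ ^ 2) ^ m * M) ((eulerQ p b τ)^[m] φ) := by
  induction m with
  | zero => simpa using ⟨hφ, hJ⟩
  | succ m ih =>
    rw [Function.iterate_succ_apply']
    refine ⟨eulerQ_contDiff hp hb τ ih.1, ?_⟩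
    have := hs _ ih.1 _ (by positivity) ih.2
    rwa [← mul_assoc, ← pow_succ'] at this

theorem resolvent_JB (n : ℕ) (Q : ℕ → E → ℝ) (K M h θ T N : ℝ) (hK : 0 ≤ K) (hM : 0 ≤ M) (hh : 0 < h) (hN : 0 ≤ N)
    (hθ : 0 ≤ θ) (hθ1 : θ ≤ 1) (hQ : ∀ m, ContDiff ℝ n (Q m)) (hJ : ∀ m, JB n ((1 + K * (N * h)) ^ m * M) (Q m))
    (k : ℕ) (hk : k * h ≤ T) :
    JB n (T * Real.exp (K * N * T) * M) (fun x => ∑ m ∈ Finset.range k, (h * θ ^ (m + 1)) * Q m x) := by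
  refine JB_mono (JB_sum _ _ _ Q hQ hJ) ?_
  have hT : 0 ≤ T := le_trans (by positivity) hk
  calc ∑ m ∈ Finset.range k, |h * θ ^ (m + 1)| * ((1 + K * (N * h)) ^ m * M)
      ≤ ∑ m ∈ Finset.range k, h * (Real.exp (K * N * T) * M) := by
        refine Finset.sum_le_sum fun m hm => ?_
        have hm' : (m:ℝ) ≤ k := by exact_mod_cast (Finset.mem_range.1 hm).le
        rw [abs_of_nonneg (by positivity)]
        have e1 : h * θ ^ (m + 1) ≤ h * 1 := by gcongr; exact pow_le_one₀ hθ hθ1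
        have e2 : (1 + K * (N * h)) ^ m ≤ Real.exp (K * N * T) := by
          calc (1 + K * (N * h)) ^ m ≤ (Real.exp (K * (N * h))) ^ m := by
                gcongr; linarith [Real.add_one_le_exp (K * (N * h))]
            _ = Real.exp (K * N * (m * h)) := by rw [← Real.exp_nat_mul]; ring_nf
            _ ≤ _ := by
                gcongr
                exact le_trans (by gcongr) hk
        rw [mul_one] at e1
        gcongr
    _ = (k * h) * (Real.exp (K * N * T) * M) := by simp; ring
    _ ≤ T * (Real.exp (K * N * T) * M) := by gcongr
    _ = _ := by ring

set_option maxHeartbeats 1000000 in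
theorem resolvent_exists [Nonempty ι] (C lam η B M2 M3 : ℝ) (hC : 0 ≤ C) (hlam : 0 < lam) (hη : 0 < η)
    (hB : 0 ≤ B) (hM2 : 0 ≤ M2) (hM3 : 0 ≤ M3) (φ : E → ℝ) (hφ : ContDiff ℝ 3 φ) (hφB : ∀ x, |φ x| ≤ B)
    (hJ2 : JB 2 M2 φ) (hJ3 : JB 3 M3 φ) : ∃ M : ℝ, 0 ≤ M ∧ ∀ (p : ι → E → E) (b : E → E),
    (∀ k, ContDiff ℝ 3 (p k)) → ContDiff ℝ 3 b →
    (∀ k, ∀ i, 1 ≤ i → i ≤ 2 → ∀ z, ‖iteratedFDeriv ℝ i (p k) z‖ ≤ C) →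
    (∀ i, 1 ≤ i → i ≤ 2 → ∀ z, ‖iteratedFDeriv ℝ i b z‖ ≤ C) →
    (∃ C3, (∀ k, ∀ z, ‖iteratedFDeriv ℝ 3 (p k) z‖ ≤ C3) ∧ ∀ z, ‖iteratedFDeriv ℝ 3 b z‖ ≤ C3) →
    (∀ k x, 1 + ‖p k x‖ + 2 * ‖b x‖ ≤ C * (1 + ‖x‖)) →
    ∃ u : E → ℝ, ContDiff ℝ 3 u ∧ (∀ x, |u x| ≤ B / lam) ∧ JB 2 M u ∧
      ∀ x, |genC p b u x - lam * u x + φ x| ≤ η * (1 + ‖x‖ ^ 2) ^ 2 := by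
  set N : ℝ := (Fintype.card ι : ℝ) with hNdef
  have hN : (1:ℝ) ≤ N := by rw [hNdef]; exact_mod_cast Fintype.card_pos
  set T := 2 * B / (lam * η) with hT
  have hT0 : 0 ≤ T := by positivity
  obtain ⟨K2, hK2, hs2⟩ := euler_J_step (E := E) (ι := ι) 2 (by norm_num) C hC
  refine ⟨(T + 1) * Real.exp (K2 * N * (T + 1)) * M2, by positivity, ?_⟩
  rintro p b hp hb hpC hbC ⟨C3, hpC3, hbC3⟩ hgr
  obtain ⟨K3, hK3, hs3⟩ := euler_J_step (E := E) (ι := ι) 3 (by norm_num) (max C C3) (hC.trans (le_max_left _ _))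
  have hp2 : ∀ k, ContDiff ℝ (2:ℕ) (p k) := fun k => (hp k).of_le (by norm_num)
  have hb2 : ContDiff ℝ (2:ℕ) b := hb.of_le (by norm_num)
  set M3' := (T + 1) * Real.exp (K3 * N * (T + 1)) * M3 with hM3'
  have hM3'0 : 0 ≤ M3' := by positivity
  obtain ⟨τ, hτ0, hτ1, hτη⟩ : ∃ τ : ℝ, 0 < τ ∧ τ ≤ 1 ∧ N * (27 * M3' * (4 * C ^ 3)) * τ ≤ η / 2 := by
    set A := N * (27 * M3' * (4 * C ^ 3))
    have hA : 0 ≤ A := by positivity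
    refine ⟨min 1 (η / 2 / (A + 1)), by positivity, min_le_left _ _, ?_⟩
    calc A * min 1 (η / 2 / (A + 1)) ≤ A * (η / 2 / (A + 1)) := by gcongr; exact min_le_right _ _
      _ ≤ (A + 1) * (η / 2 / (A + 1)) := by gcongr; linarith
      _ = _ := by field_simp
  set h : ℝ := τ ^ 2 / N with hh
  have hh0 : 0 < h := by positivity
  have hh1 : h ≤ 1 := by
    rw [hh, div_le_one (by linarith)]
    exact (pow_le_one₀ hτ0.le hτ1).trans hN
  have hNh : N * h = τ ^ 2 := by rw [hh]; field_simp
  set θ : ℝ := (1 + lam * h)⁻¹ with hθ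
  have hpos : 0 < 1 + lam * h := by positivity
  have hθ0 : 0 < θ := by positivity
  have hθ1 : θ ≤ 1 := inv_le_one_of_one_le₀ (by linarith [mul_pos hlam hh0])
  set k : ℕ := ⌈T / h⌉₊ with hk
  have hk1 : T ≤ k * h := by
    have := Nat.le_ceil (T / h)
    rwa [div_le_iff₀ hh0] at this
  have hk2 : k * h ≤ T + 1 := by
    have := (Nat.ceil_lt_add_one (div_nonneg hT0 hh0.le)).le
    calc (k:ℝ) * h ≤ (T / h + 1) * h := by gcongr
      _ = T + h := by field_simp
      _ ≤ _ := by linarith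
  set Q : ℕ → E → ℝ := fun m => (eulerQ p b τ)^[m] φ with hQ
  have hτabs : |τ| ≤ 1 := by rwa [abs_of_pos hτ0]
  have hI2 := euler_iter (n := 2) hp2 hb2 τ K2 hK2 (hs2 p b hp2 hb2 hpC hbC τ hτabs) φ
    (hφ.of_le (by norm_num)) M2 hM2 hJ2
  have hI3 := euler_iter (n := 3) hp hb τ K3 hK3 (hs3 p b hp hb (by
      intro j i h1 h3 z
      rcases Nat.lt_or_ge i 3 with h | h
      · exact (hpC j i h1 (by omega) z).trans (le_max_left _ _)
      · obtain rfl : i = 3 := by omega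
        exact (hpC3 j z).trans (le_max_right _ _)) (by
      intro i h1 h3 z
      rcases Nat.lt_or_ge i 3 with h | h
      · exact (hbC i h1 (by omega) z).trans (le_max_left _ _)
      · obtain rfl : i = 3 := by omega
        exact (hbC3 z).trans (le_max_right _ _)) τ hτabs) φ hφ M3 hM3 hJ3
  have hQB : ∀ m x, |Q m x| ≤ B := by
    intro m
    induction m with
    | zero => exact hφB
    | succ m ih =>
      intro x
      simp only [hQ, Function.iterate_succ_apply']
      exact eulerQ_bound ih x
  set u : E → ℝ := fun x => ∑ m ∈ Finset.range k, (h * θ ^ (m + 1)) * Q m x with hu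
  have huc : ContDiff ℝ 3 u := ContDiff.sum fun m _ => contDiff_const.mul (hI3 m).1
  have hJu2 : JB 2 ((T + 1) * Real.exp (K2 * N * (T + 1)) * M2) u :=
    resolvent_JB 2 Q K2 M2 h θ (T + 1) N hK2 hM2 hh0 (by linarith) hθ0.le hθ1 (fun m => (hI2 m).1)
      (fun m => by rw [hNh]; exact (hI2 m).2) k hk2
  have hJu3 : JB 3 M3' u :=
    resolvent_JB 3 Q K3 M3 h θ (T + 1) N hK3 hM3 hh0 (by linarith) hθ0.le hθ1 (fun m => (hI3 m).1)
      (fun m => by rw [hNh]; exact (hI3 m).2) k hk2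
  have hθeq : θ * (1 + lam * h) = 1 := inv_mul_cancel₀ hpos.ne'
  refine ⟨u, huc, ?_, hJu2, ?_⟩
  · intro x
    calc |u x| ≤ ∑ m ∈ Finset.range k, |(h * θ ^ (m + 1)) * Q m x| := Finset.abs_sum_le_sum_abs _ _
      _ ≤ ∑ m ∈ Finset.range k, (h * θ * B) * θ ^ m := by
          refine Finset.sum_le_sum fun m _ => ?_
          rw [abs_mul, abs_of_nonneg (by positivity)]
          calc h * θ ^ (m + 1) * |Q m x| ≤ h * θ ^ (m + 1) * B := by gcongr; exact hQB m x
            _ = _ := by ring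
      _ = (h * θ * B) * ∑ m ∈ Finset.range k, θ ^ m := by rw [Finset.mul_sum]
      _ ≤ B / lam := by
          have hg : (∑ m ∈ Finset.range k, θ ^ m) * (1 - θ) = 1 - θ ^ k := by
            rw [← geom_sum_mul_neg]
          have e1 : 1 - θ = θ * (lam * h) := by linarith
          rw [le_div_iff₀ hlam]
          calc h * θ * B * (∑ m ∈ Finset.range k, θ ^ m) * lam
              = B * ((∑ m ∈ Finset.range k, θ ^ m) * (1 - θ)) := by rw [e1]; ring
            _ = B * (1 - θ ^ k) := by rw [hg]
            _ ≤ B * 1 := by gcongr; linarith [pow_pos hθ0 k]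
            _ = B := mul_one _
  · intro x
    have hcons := euler_consistency (p := p) (b := b) huc hM3'0 hJu3 x (C * (1 + ‖x‖)) (fun k => hgr k x) τ hτ0 hτ1
    have hQu : eulerQ p b τ u x = (1 + lam * h) * u x - h * φ x + h * (θ ^ k * Q k x) := by
      rw [hu, eulerQ_sum]
      have e1 : ∀ m, eulerQ p b τ (Q m) x = Q (m + 1) x := by
        intro m; simp only [hQ, Function.iterate_succ_apply']
      simp only [e1]
      have e2 : (∑ m ∈ Finset.range k, θ ^ (m + 1) * Q (m + 1) x) + θ ^ 0 * Q 0 x =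
          (∑ m ∈ Finset.range k, θ ^ m * Q m x) + θ ^ k * Q k x := by
        rw [← Finset.sum_range_succ (fun m => θ ^ m * Q m x),
          Finset.sum_range_succ' (fun m => θ ^ m * Q m x)]
      have e3 : (1 + lam * h) * (∑ m ∈ Finset.range k, (h * θ ^ (m + 1)) * Q m x) =
          h * ∑ m ∈ Finset.range k, θ ^ m * Q m x := by
        rw [Finset.mul_sum, Finset.mul_sum]
        refine Finset.sum_congr rfl fun m _ => ?_
        rw [pow_succ]
        linear_combination (h * θ ^ m * Q m x) * hθeq
      have e4 : ∑ m ∈ Finset.range k, (h * θ ^ (m + 1)) * Q (m + 1) x =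
          h * ∑ m ∈ Finset.range k, θ ^ (m + 1) * Q (m + 1) x := by
        rw [Finset.mul_sum]; exact Finset.sum_congr rfl fun m _ => by ring
      rw [e3, e4]
      have e5 : Q 0 x = φ x := rfl
      rw [pow_zero, one_mul, e5] at e2
      linear_combination h * e2
    have hrem : |θ ^ k * Q k x| ≤ η / 2 := by
      rw [abs_mul, abs_of_nonneg (by positivity)]
      have e1 : θ ^ k ≤ (1 + lam * T)⁻¹ := by
        rw [hθ, inv_pow]
        gcongr
        calc 1 + lam * T ≤ 1 + k * (lam * h) := by nlinarith
          _ ≤ (1 + lam * h) ^ k := one_add_mul_le_pow (by linarith [mul_pos hlam hh0]) k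
      calc θ ^ k * |Q k x| ≤ (1 + lam * T)⁻¹ * B := by gcongr; exact hQB k x
        _ ≤ η / 2 := by
          rw [inv_mul_le_iff₀ (by positivity)]
          have : lam * T * η = 2 * B := by rw [hT]; field_simp
          nlinarith
    have hR : (C * (1 + ‖x‖)) ^ 3 ≤ 4 * C ^ 3 * (1 + ‖x‖ ^ 2) ^ 2 := by
      set r := ‖x‖
      have hr : 0 ≤ r := norm_nonneg x
      have e1 : (1 + r) ^ 3 ≤ 4 * (1 + r ^ 2) ^ 2 := by
        have a1 : (1 + r) ^ 2 ≤ 2 * (1 + r ^ 2) := by nlinarith [sq_nonneg (1 - r)]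
        calc (1 + r) ^ 3 ≤ (1 + r) ^ 4 := pow_le_pow_right₀ (by linarith) (by norm_num)
          _ = ((1 + r) ^ 2) ^ 2 := by ring
          _ ≤ (2 * (1 + r ^ 2)) ^ 2 := by gcongr
          _ = _ := by ring
      rw [mul_pow]
      nlinarith [pow_nonneg hC 3]
    set V := (1 + ‖x‖ ^ 2) ^ 2 with hV
    have hV1 : 1 ≤ V := one_le_pow₀ (by nlinarith [sq_nonneg ‖x‖])
    have hid : genC p b u x - lam * u x + φ x = θ ^ k * Q k x -
        h⁻¹ * (eulerQ p b τ u x - u x - h * genC p b u x) := by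
      rw [hQu]; field_simp; ring
    rw [hid]
    have h2 : |h⁻¹ * (eulerQ p b τ u x - u x - h * genC p b u x)| ≤ η / 2 * V := by
      rw [abs_mul, abs_of_nonneg (by positivity), inv_mul_le_iff₀ hh0]
      refine hcons.trans ?_
      calc 27 * M3' * (C * (1 + ‖x‖)) ^ 3 * τ ^ 3 ≤ 27 * M3' * (4 * C ^ 3 * V) * τ ^ 3 := by gcongr
        _ = h * ((N * (27 * M3' * (4 * C ^ 3)) * τ) * V) := by
          have : τ ^ 3 = N * h * τ := by rw [hNh]; ring
          rw [this]; ring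
        _ ≤ _ := by gcongr
    have := abs_sub (θ ^ k * Q k x) (h⁻¹ * (eulerQ p b τ u x - u x - h * genC p b u x))
    nlinarith

end PB2

section PC1

variable {E : Type*} [NormedAddCommGroup E] [InnerProductSpace ℝ E] {ι : Type*} [Fintype ι]

theorem quad_hasDerivAt (x v w : E) (t : ℝ) :
    HasDerivAt (fun t : ℝ => x + t • v + t ^ 2 • w) (v + (2 * t) • w) t := by
  have e2 : HasDerivAt (fun t : ℝ => t ^ 2) (2 * t) t := by
    have := (hasDerivAt_id t).fun_pow 2; simpa using this
  have := (((hasDerivAt_id t).smul_const v).const_add x).fun_add (e2.smul_const w)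
  simpa using this

theorem quad_hasDerivAt' (v w : E) (t : ℝ) :
    HasDerivAt (fun t : ℝ => v + (2 * t) • w) ((2:ℝ) • w) t := by
  have e1 : HasDerivAt (fun t : ℝ => 2 * t) 2 t := by
    simpa using (hasDerivAt_id t).const_mul 2
  simpa using (e1.smul_const w).const_add v

theorem second_deriv_curve {u : E → ℝ} (hu : ContDiff ℝ 2 u) (x v w : E) :
    iteratedDeriv 2 (fun t : ℝ => u (x + t • v + t ^ 2 • w)) 0 =
      fderiv ℝ (fderiv ℝ u) x v v + 2 * fderiv ℝ u x w := by
  have hdu : Differentiable ℝ u := hu.differentiable (by norm_num)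
  have hddu : Differentiable ℝ (fderiv ℝ u) :=
    (hu.fderiv_right (m := 1) (by norm_num)).differentiable (by norm_num)
  have h1 : deriv (fun t : ℝ => u (x + t • v + t ^ 2 • w)) =
      fun t => fderiv ℝ u (x + t • v + t ^ 2 • w) (v + (2 * t) • w) := by
    ext t
    exact ((hdu _).hasFDerivAt.comp_hasDerivAt t (quad_hasDerivAt x v w t)).deriv
  rw [iteratedDeriv_succ, iteratedDeriv_one, h1]
  have h2 := ((hddu _).hasFDerivAt.comp_hasDerivAt (0:ℝ) (quad_hasDerivAt x v w 0)).clm_apply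
    (quad_hasDerivAt' v w 0)
  have h3 := h2.deriv
  simp only [Function.comp_def] at h3
  rw [h3]
  simp

theorem second_deriv_test {g : ℝ → ℝ} (hg : ContDiffAt ℝ 2 g 0) (hmax : IsLocalMax g 0) :
    iteratedDeriv 2 g 0 ≤ 0 := by
  by_contra! hpos
  rw [iteratedDeriv_succ, iteratedDeriv_one] at hpos
  have hmin := isLocalMin_of_deriv_deriv_pos hpos hmax.deriv_eq_zero hg.continuousAt
  have hconst : g =ᶠ[nhds 0] fun _ => g 0 := by
    filter_upwards [hmin, hmax] with t h1 h2 using le_antisymm h2 h1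
  have h1 := hconst.deriv.deriv.eq_of_nhds
  simp at h1
  linarith

theorem radial_second (K : ℝ) (z ζ β : E) (hz : z ≠ 0) :
    ContDiffAt ℝ 2 (fun t : ℝ => 1 - Real.exp (-K * (‖z + t • ζ + t ^ 2 • β‖ ^ 2
      + 2 * ‖z + t • ζ + t ^ 2 • β‖))) 0 ∧
    iteratedDeriv 2 (fun t : ℝ => 1 - Real.exp (-K * (‖z + t • ζ + t ^ 2 • β‖ ^ 2
      + 2 * ‖z + t • ζ + t ^ 2 • β‖))) 0 =
      K * Real.exp (-K * (‖z‖ ^ 2 + 2 * ‖z‖)) *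
        ((2 * ‖ζ‖ ^ 2 + 4 * inner ℝ z β) * (1 + 1 / ‖z‖) - 2 * (inner ℝ z ζ) ^ 2 / ‖z‖ ^ 3
          - K * (2 * inner ℝ z ζ * (1 + 1 / ‖z‖)) ^ 2) := by
  set Z : ℝ → E := fun t => z + t • ζ + t ^ 2 • β with hZ
  have hZc : ContDiff ℝ 2 Z := by fun_prop
  have hZ0 : Z 0 = z := by simp [hZ]
  have hne : ∀ᶠ t in nhds (0:ℝ), Z t ≠ 0 :=
    hZc.continuous.continuousAt.eventually_ne (by rwa [hZ0])
  have hn : ContDiffAt ℝ 2 (fun t => ‖Z t‖) 0 := hZc.contDiffAt.norm ℝ (by rwa [hZ0])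
  constructor
  · exact contDiffAt_const.sub (Real.contDiff_exp.contDiffAt.comp 0
      (contDiffAt_const.mul ((hn.pow 2).add (contDiffAt_const.mul hn))))
  have hd1 : ∀ t, HasDerivAt (fun t => ‖Z t‖ ^ 2) (2 * inner ℝ (Z t) (ζ + (2 * t) • β)) t :=
    fun t => (quad_hasDerivAt z ζ β t).norm_sq
  have hdn : ∀ t, Z t ≠ 0 → HasDerivAt (fun t => ‖Z t‖) (inner ℝ (Z t) (ζ + (2 * t) • β) / ‖Z t‖) t := by
    intro t ht
    have h0 : ‖Z t‖ ≠ 0 := norm_ne_zero_iff.2 ht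
    have := (hd1 t).sqrt (pow_ne_zero 2 h0)
    simp only [Real.sqrt_sq (norm_nonneg _)] at this
    convert this using 1
    field_simp
  set I : ℝ → ℝ := fun t => inner ℝ (Z t) (ζ + (2 * t) • β) with hI
  have hdexp : ∀ t, Z t ≠ 0 → HasDerivAt (fun t => Real.exp (-K * (‖Z t‖ ^ 2 + 2 * ‖Z t‖)))
      (Real.exp (-K * (‖Z t‖ ^ 2 + 2 * ‖Z t‖)) * (-K * (2 * I t + 2 * (I t / ‖Z t‖)))) t := fun t ht =>
    (((hd1 t).fun_add ((hdn t ht).const_mul 2)).const_mul (-K)).exp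
  have hD1 : deriv (fun t => 1 - Real.exp (-K * (‖Z t‖ ^ 2 + 2 * ‖Z t‖))) =ᶠ[nhds 0]
      fun t => Real.exp (-K * (‖Z t‖ ^ 2 + 2 * ‖Z t‖)) * (K * (2 * I t + 2 * (I t / ‖Z t‖))) := by
    filter_upwards [hne] with t ht
    rw [((hdexp t ht).const_sub 1).deriv]; ring
  rw [iteratedDeriv_succ, iteratedDeriv_one, hD1.deriv_eq]
  have hdI : HasDerivAt I (2 * inner ℝ z β + ‖ζ‖ ^ 2) 0 := by
    have := (quad_hasDerivAt z ζ β 0).inner ℝ (quad_hasDerivAt' ζ β 0)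
    simp [inner_smul_right] at this
    simpa [hI] using this
  have hz0 : Z 0 ≠ 0 := by rwa [hZ0]
  have hI0 : I 0 = inner ℝ z ζ := by simp [hI, hZ0]
  have hnz : ‖Z 0‖ ≠ 0 := norm_ne_zero_iff.2 hz0
  have hfin := (hdexp 0 hz0).fun_mul (((hdI.const_mul 2).fun_add ((hdI.fun_div (hdn 0 hz0) hnz).const_mul 2)).const_mul K)
  rw [hfin.deriv]
  have : inner ℝ (Z 0) (ζ + (2 * 0 : ℝ) • β) = inner ℝ z ζ := by simp [hZ0]
  rw [this, hI0, hZ0]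
  have hnz' : ‖z‖ ≠ 0 := norm_ne_zero_iff.2 hz
  field_simp
  ring

theorem sum_bilin_isometry {κ : Type*} [Fintype κ] [FiniteDimensional ℝ E]
    (e e' : OrthonormalBasis κ ℝ E) (B : E →L[ℝ] E →L[ℝ] ℝ) : ∑ k, B (e k) (e k) = ∑ k, B (e' k) (e' k) := by
  have h := fun b : OrthonormalBasis κ ℝ E => LinearMap.trace_eq_sum_inner
    (InnerProductSpace.continuousLinearMapOfBilin (𝕜 := ℝ) B).toLinearMap b
  have h1 := (h e).symm.trans (h e')
  have h2 : ∀ v, inner ℝ v ((InnerProductSpace.continuousLinearMapOfBilin (𝕜 := ℝ) B) v) = B v v := by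
    intro v
    rw [real_inner_comm, InnerProductSpace.continuousLinearMapOfBilin_apply]
  simpa [h2] using h1

/-- Lyapunov function -/
def lyapV (x : E) : ℝ := (1 + ‖x‖ ^ 2) ^ 2

theorem lyapV_contDiff : ContDiff ℝ 2 (lyapV : E → ℝ) := by
  unfold lyapV
  exact (contDiff_const.add (contDiff_norm_sq ℝ)).pow 2

theorem one_le_lyapV (x : E) : 1 ≤ lyapV x := one_le_pow₀ (by nlinarith [sq_nonneg ‖x‖])

theorem norm_le_lyapV (x : E) : ‖x‖ ≤ lyapV x := by
  unfold lyapV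
  nlinarith [sq_nonneg ‖x‖, sq_nonneg (‖x‖ - 1), norm_nonneg x]

theorem lyapV_second (x v w : E) : iteratedDeriv 2 (fun t : ℝ => lyapV (x + t • v + t ^ 2 • w)) 0 =
    8 * (inner ℝ x v) ^ 2 + (1 + ‖x‖ ^ 2) * (4 * ‖v‖ ^ 2 + 8 * inner ℝ x w) := by
  unfold lyapV
  set Z : ℝ → E := fun t => x + t • v + t ^ 2 • w with hZ
  have hd1 : ∀ t, HasDerivAt (fun t => ‖Z t‖ ^ 2) (2 * inner ℝ (Z t) (v + (2 * t) • w)) t :=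
    fun t => (quad_hasDerivAt x v w t).norm_sq
  have hd2 : ∀ t, HasDerivAt (fun t => (1 + ‖Z t‖ ^ 2) ^ 2)
      (2 * (1 + ‖Z t‖ ^ 2) * (2 * inner ℝ (Z t) (v + (2 * t) • w))) t := by
    intro t
    have := ((hd1 t).const_add 1).fun_pow 2
    simpa using this
  have hdI : HasDerivAt (fun t => inner ℝ (Z t) (v + (2 * t) • w)) (2 * inner ℝ x w + ‖v‖ ^ 2) 0 := by
    have := (quad_hasDerivAt x v w 0).inner ℝ (quad_hasDerivAt' v w 0)
    simp [inner_smul_right] at this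
    simpa using this
  rw [iteratedDeriv_succ, iteratedDeriv_one, funext fun t => (hd2 t).deriv]
  have hfin := (((hd1 0).const_add 1).const_mul 2).fun_mul (hdI.const_mul 2)
  rw [hfin.deriv]
  simp [hZ]
  ring

theorem lyapV_genC (p : ι → E → E) (b : E → E) (P β C : ℝ) (hβ : 0 < β) (hP0 : 0 ≤ P) (hC0 : 0 ≤ C)
    (hP : ∀ x, ∑ k, ‖p k x‖ ^ 2 ≤ P) (hb : ∀ x, Fintype.card ι * inner ℝ x (b x) ≤ -β * ‖x‖ ^ 2 + C) (x : E) :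
    genC p b lyapV x ≤ (6 * P + 4 * (β + C)) ^ 2 / (8 * β) - 2 * β * lyapV x := by
  unfold genC
  simp only [lyapV_second]
  set q := 1 + ‖x‖ ^ 2 with hq
  have hq1 : 1 ≤ q := by nlinarith [sq_nonneg ‖x‖]
  have h1 : ∀ k, 8 * (inner ℝ x (p k x)) ^ 2 + q * (4 * ‖p k x‖ ^ 2 + 8 * inner ℝ x (b x)) ≤
      12 * q * ‖p k x‖ ^ 2 + 8 * q * inner ℝ x (b x) := by
    intro k
    have := abs_real_inner_le_norm x (p k x)
    have h2 : (inner ℝ x (p k x)) ^ 2 ≤ (‖x‖ * ‖p k x‖) ^ 2 := by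
      rw [← sq_abs]; gcongr
    have h3 : (‖x‖ * ‖p k x‖) ^ 2 ≤ q * ‖p k x‖ ^ 2 := by
      rw [mul_pow]; gcongr; linarith
    nlinarith
  have h2 := Finset.sum_le_sum (s := Finset.univ) fun k _ => h1 k
  have h2' : ∑ k, (12 * q * ‖p k x‖ ^ 2 + 8 * q * inner ℝ x (b x)) =
      12 * q * ∑ k, ‖p k x‖ ^ 2 + Fintype.card ι * (8 * q * inner ℝ x (b x)) := by
    rw [Finset.sum_add_distrib, ← Finset.mul_sum, Finset.sum_const, Finset.card_univ, nsmul_eq_mul]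
  rw [h2'] at h2
  have h3 : (1/2 : ℝ) * ∑ k, (8 * (inner ℝ x (p k x)) ^ 2 + q * (4 * ‖p k x‖ ^ 2 + 8 * inner ℝ x (b x)))
      ≤ 6 * q * P + 4 * q * (-β * ‖x‖ ^ 2 + C) := by
    have h4 := hP x
    have h5 := hb x
    have h6 : q * ∑ k, ‖p k x‖ ^ 2 ≤ q * P := by gcongr
    have h7 : q * (Fintype.card ι * inner ℝ x (b x)) ≤ q * (-β * ‖x‖ ^ 2 + C) := by gcongr
    linarith
  refine h3.trans ?_
  have h8 : lyapV x = q ^ 2 := rfl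
  rw [h8]
  have h9 : ‖x‖ ^ 2 = q - 1 := by rw [hq]; ring
  rw [h9]
  set A := 6 * P + 4 * (β + C) with hA
  have h10 : 6 * q * P + 4 * q * (-β * (q - 1) + C) = A * q - 4 * β * q ^ 2 := by rw [hA]; ring
  rw [h10]
  have h11 : A * q ≤ A ^ 2 / (8 * β) + 2 * β * q ^ 2 := by
    rw [← sub_nonneg]
    have : A ^ 2 / (8 * β) + 2 * β * q ^ 2 - A * q = (A - 4 * β * q) ^ 2 / (8 * β) := by field_simp; ring
    rw [this]; positivity
  linarith

end PC1

section PC2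

variable {E : Type*} [NormedAddCommGroup E] [InnerProductSpace ℝ E] {κ : Type*} [Fintype κ]

/-- noise fields: a constant isotropic part and a variable part -/
def coupP (e : OrthonormalBasis κ ℝ E) (s : ℝ) (X : E → E →L[ℝ] E) : κ ⊕ κ → E → E
  | Sum.inl k => fun _ => s • e k
  | Sum.inr k => fun x => X x (e k)

theorem coupling_radial (e : OrthonormalBasis κ ℝ E) (s L Lb K : ℝ) (hs : 0 < s) (hL : 0 ≤ L) (hLb : 0 ≤ Lb)
    (hK1 : 1 ≤ K) (hK2 : 2 * Fintype.card κ * L ^ 2 + 4 * Lb ≤ 4 * s ^ 2 * K)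
    (z β : E) (hz : z ≠ 0) (ζ : κ ⊕ κ → E) (hl : ∀ k, ζ (Sum.inl k) = (2 * s * inner ℝ z (e k) / ‖z‖ ^ 2) • z)
    (hr : ∀ k, ‖ζ (Sum.inr k)‖ ≤ L * ‖z‖) (hβ : Fintype.card (κ ⊕ κ) * inner ℝ z β ≤ Lb * ‖z‖ ^ 2) :
    ∑ k, K * Real.exp (-K * (‖z‖ ^ 2 + 2 * ‖z‖)) *
        ((2 * ‖ζ k‖ ^ 2 + 4 * inner ℝ z β) * (1 + 1 / ‖z‖) - 2 * (inner ℝ z (ζ k)) ^ 2 / ‖z‖ ^ 3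
          - K * (2 * inner ℝ z (ζ k) * (1 + 1 / ‖z‖)) ^ 2) ≤
    - (4 * K ^ 2 * s ^ 2 * Real.exp (-K * (‖z‖ ^ 2 + 2 * ‖z‖))) := by
  set r := ‖z‖ with hrdef
  have hr0 : 0 < r := norm_pos_iff.2 hz
  set g := inner ℝ z β with hg
  set Ee := Real.exp (-K * (r ^ 2 + 2 * r))
  have hEe : 0 < Ee := Real.exp_pos _
  rw [← Finset.mul_sum, Fintype.sum_sum_type]
  have hL1 : ∀ k, (2 * ‖ζ (Sum.inl k)‖ ^ 2 + 4 * g) * (1 + 1 / r) - 2 * (inner ℝ z (ζ (Sum.inl k))) ^ 2 / r ^ 3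
          - K * (2 * inner ℝ z (ζ (Sum.inl k)) * (1 + 1 / r)) ^ 2 =
          (8 * s ^ 2 - 16 * K * s ^ 2 * (r + 1) ^ 2) / r ^ 2 * ‖inner ℝ z (e k)‖ ^ 2 + 4 * g * (1 + 1 / r) := by
    intro k
    rw [hl k, norm_smul, inner_smul_right, real_inner_self_eq_norm_sq, mul_pow, ← hrdef, Real.norm_eq_abs, Real.norm_eq_abs,
      sq_abs, sq_abs]
    field_simp
    ring
  have hpars : ∑ k, ‖inner ℝ z (e k)‖ ^ 2 = r ^ 2 := e.sum_sq_norm_inner_left z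
  have hR1 : ∀ k, (2 * ‖ζ (Sum.inr k)‖ ^ 2 + 4 * g) * (1 + 1 / r) - 2 * (inner ℝ z (ζ (Sum.inr k))) ^ 2 / r ^ 3
          - K * (2 * inner ℝ z (ζ (Sum.inr k)) * (1 + 1 / r)) ^ 2 ≤
          2 * L ^ 2 * (r * (r + 1)) + 4 * g * (1 + 1 / r) := by
    intro k
    have h1 : ‖ζ (Sum.inr k)‖ ^ 2 ≤ (L * r) ^ 2 := by gcongr; exact hr k
    have h2 : ‖ζ (Sum.inr k)‖ ^ 2 * (1 + 1 / r) ≤ (L * r) ^ 2 * (1 + 1 / r) := by gcongr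
    have h3 : (L * r) ^ 2 * (1 + 1 / r) = L ^ 2 * (r * (r + 1)) := by field_simp
    have h4 : 0 ≤ 2 * (inner ℝ z (ζ (Sum.inr k))) ^ 2 / r ^ 3 := by positivity
    have h5 : 0 ≤ K * (2 * inner ℝ z (ζ (Sum.inr k)) * (1 + 1 / r)) ^ 2 := by positivity
    nlinarith
  simp only [hL1]
  have hsum := Finset.sum_le_sum (s := Finset.univ) fun k _ => hR1 k
  have hsumL : ∑ k, ((8 * s ^ 2 - 16 * K * s ^ 2 * (r + 1) ^ 2) / r ^ 2 * ‖inner ℝ z (e k)‖ ^ 2 + 4 * g * (1 + 1 / r))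
      = (8 * s ^ 2 - 16 * K * s ^ 2 * (r + 1) ^ 2) + Fintype.card κ * (4 * g * (1 + 1 / r)) := by
    rw [Finset.sum_add_distrib, ← Finset.mul_sum, hpars, Finset.sum_const, Finset.card_univ, nsmul_eq_mul]
    field_simp
  rw [hsumL]
  rw [Finset.sum_const, Finset.card_univ, nsmul_eq_mul] at hsum
  have hb2 : Fintype.card (κ ⊕ κ) * (4 * g * (1 + 1 / r)) ≤ 4 * Lb * (r * (r + 1)) := by
    have h1 : (Fintype.card (κ ⊕ κ) * g) * (4 * (1 + 1 / r)) ≤ (Lb * r ^ 2) * (4 * (1 + 1 / r)) := by gcongr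
    have h2 : (Lb * r ^ 2) * (4 * (1 + 1 / r)) = 4 * Lb * (r * (r + 1)) := by field_simp
    linarith
  rw [Fintype.card_sum] at hb2
  push_cast at hb2
  have hd0 : (0:ℝ) ≤ Fintype.card κ := by positivity
  have key : (8 * s ^ 2 - 16 * K * s ^ 2 * (r + 1) ^ 2) + (2 * Fintype.card κ * L ^ 2 + 4 * Lb) * (r * (r + 1)) ≤
      - (4 * K * s ^ 2) := by
    have h1 : (2 * Fintype.card κ * L ^ 2 + 4 * Lb) * (r * (r + 1)) ≤ (4 * s ^ 2 * K) * (r + 1) ^ 2 := by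
      gcongr; nlinarith
    have h2 : s ^ 2 * 1 ≤ s ^ 2 * K := by gcongr
    have h3 : s ^ 2 * K * 1 ≤ s ^ 2 * K * (r + 1) ^ 2 := by gcongr; nlinarith
    nlinarith
  calc _ ≤ K * Ee * (-(4 * K * s ^ 2)) := by
        gcongr
        refine le_trans ?_ key
        nlinarith
    _ = _ := by ring

set_option maxHeartbeats 1000000 in
theorem coupling_osc [FiniteDimensional ℝ E] (e : OrthonormalBasis κ ℝ E) (s L Lb B P β C : ℝ) (hs : 0 < s)
    (hL : 0 ≤ L) (hLb : 0 ≤ Lb) (hB : 0 ≤ B) (hP0 : 0 ≤ P) (hβ : 0 < β) (hC : 0 ≤ C) :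
    ∃ M : ℝ, 0 ≤ M ∧ ∀ (X : E → E →L[ℝ] E) (b : E → E),
    (∀ x y, ‖X x - X y‖ ≤ L * ‖x - y‖) →
    (∀ x y, Fintype.card (κ ⊕ κ) * inner ℝ (x - y) (b x - b y) ≤ Lb * ‖x - y‖ ^ 2) →
    (∀ x, ∑ k, ‖coupP e s X k x‖ ^ 2 ≤ P) →
    (∀ x, Fintype.card (κ ⊕ κ) * inner ℝ x (b x) ≤ -β * ‖x‖ ^ 2 + C) →
    ∀ φ : E → ℝ, (∀ x, |φ x| ≤ B) → ∀ lam : ℝ, 0 < lam → ∀ u : E → ℝ, ContDiff ℝ 2 u →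
    (∃ U, ∀ x, |u x| ≤ U) → (∀ x, |genC (coupP e s X) b u x - lam * u x + φ x| ≤ β * lyapV x) →
    ∀ x y, u x - u y ≤ M + (lyapV x + lyapV y) := by
  set K : ℝ := max 1 ((2 * Fintype.card κ * L ^ 2 + 4 * Lb) / (4 * s ^ 2)) with hK
  have hK1 : 1 ≤ K := le_max_left _ _
  have hK2 : 2 * Fintype.card κ * L ^ 2 + 4 * Lb ≤ 4 * s ^ 2 * K := by
    have : (2 * Fintype.card κ * L ^ 2 + 4 * Lb) / (4 * s ^ 2) ≤ K := le_max_right _ _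
    rwa [div_le_iff₀' (by positivity)] at this
  set CV := (6 * P + 4 * (β + C)) ^ 2 / (8 * β) with hCV
  have hCV0 : 0 ≤ CV := by positivity
  set R' := (2 * B + 2 * CV) / β with hR'
  have hR'0 : 0 ≤ R' := by positivity
  set c0 := Real.exp (-K * (R' ^ 2 + 2 * R')) with hc0
  have hc0p : 0 < c0 := Real.exp_pos _
  set M := (B + CV) / (K ^ 2 * s ^ 2 * c0) with hM
  have hM0 : 0 ≤ M := by positivity
  refine ⟨M, hM0, ?_⟩
  intro X b hX hb hP hdis φ hφ lam hlam u hu hU hgu x0 y0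
  obtain ⟨U, hU⟩ := hU
  set p := coupP e s X with hp
  set ψ : E → ℝ := fun z => 1 - Real.exp (-K * (‖z‖ ^ 2 + 2 * ‖z‖)) with hψ
  have hψ0 : ∀ z, 0 ≤ ψ z := by
    intro z
    have : Real.exp (-K * (‖z‖ ^ 2 + 2 * ‖z‖)) ≤ 1 := by
      rw [Real.exp_le_one_iff]
      have : 0 ≤ K * (‖z‖ ^ 2 + 2 * ‖z‖) := by positivity
      linarith
    simp only [hψ]; linarith
  have hψ1 : ∀ z, ψ z ≤ 1 := by
    intro z
    simp only [hψ]; linarith [Real.exp_pos (-K * (‖z‖ ^ 2 + 2 * ‖z‖))]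
  set Φ : E × E → ℝ := fun q => (u q.1 - lyapV q.1) - (u q.2 + lyapV q.2) - M * ψ (q.1 - q.2) with hΦ
  suffices hall : ∀ q, Φ q ≤ 0 by
    have h1 := hall (x0, y0)
    have h2 := hψ1 (x0 - y0)
    simp only [hΦ] at h1
    nlinarith
  by_contra! hcon
  obtain ⟨q0, hq0⟩ := hcon
  have hout : ∀ q, 0 < Φ q → lyapV q.1 + lyapV q.2 ≤ 2 * U := by
    intro q hq
    simp only [hΦ] at hq
    have h1 := abs_le.1 (hU q.1)
    have h2 := abs_le.1 (hU q.2)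
    have h3 := mul_nonneg hM0 (hψ0 (q.1 - q.2))
    linarith [h1.1, h1.2, h2.1, h2.2]
  have hball : ∀ q, 0 < Φ q → q ∈ Metric.closedBall (0 : E × E) (2 * U) := by
    intro q hq
    have h1 := hout q hq
    rw [mem_closedBall_zero_iff, Prod.norm_def]
    have h2 := norm_le_lyapV q.1
    have h3 := norm_le_lyapV q.2
    have h4 := one_le_lyapV q.1
    have h5 := one_le_lyapV q.2
    exact max_le (by linarith) (by linarith)
  have hVc : Continuous (lyapV : E → ℝ) := lyapV_contDiff.continuous
  have huc : Continuous u := hu.continuous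
  have hΦc : Continuous Φ := by
    simp only [hΦ, hψ]
    fun_prop
  have : ProperSpace E := FiniteDimensional.proper ℝ E
  obtain ⟨q, hqK, hqmax⟩ := (isCompact_closedBall (0 : E × E) (2 * U)).exists_isMaxOn ⟨q0, hball q0 hq0⟩ hΦc.continuousOn
  have hqpos : 0 < Φ q := hq0.trans_le (hqmax (hball q0 hq0))
  have hglob : ∀ q', Φ q' ≤ Φ q := by
    intro q'
    by_cases h : 0 < Φ q'
    · exact hqmax (hball q' h)
    · linarith
  obtain ⟨x, y⟩ := q
  have hVx := one_le_lyapV x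
  have hVy := one_le_lyapV y
  have hupos : 0 < u x - u y := by
    have h1 := mul_nonneg hM0 (hψ0 (x - y))
    simp only [hΦ] at hqpos
    linarith
  have hxy : x - y ≠ 0 := by
    intro h0
    rw [sub_eq_zero] at h0
    rw [h0] at hupos; linarith
  set z := x - y with hz
  have hz0 : 0 < ‖z‖ := norm_pos_iff.2 hxy
  set Rf := (Submodule.reflection (Submodule.span ℝ {z})ᗮ) with hRf
  have hRfe : ∀ v, Rf v = v - (2 * inner ℝ z v / ‖z‖ ^ 2) • z := by
    intro v
    rw [hRf, Submodule.reflection_orthogonal_apply, Submodule.reflection_singleton_apply]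
    simp only [RCLike.ofReal_real_eq_id, id]
    module
  set qf : κ ⊕ κ → E := Sum.elim (fun k => s • Rf (e k)) (fun k => X y (e k)) with hqf
  set ζ : κ ⊕ κ → E := fun k => p k x - qf k with hζ
  have hF : ContDiff ℝ 2 (fun w => u w - lyapV w) := hu.sub lyapV_contDiff
  have hG : ContDiff ℝ 2 (fun w => u w + lyapV w) := hu.add lyapV_contDiff
  have hk : ∀ k, iteratedDeriv 2 (fun t : ℝ => (fun w => u w - lyapV w) (x + t • p k x + t ^ 2 • b x)) 0
      - iteratedDeriv 2 (fun t : ℝ => (fun w => u w + lyapV w) (y + t • qf k + t ^ 2 • b y)) 0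
      - M * (K * Real.exp (-K * (‖z‖ ^ 2 + 2 * ‖z‖)) *
        ((2 * ‖ζ k‖ ^ 2 + 4 * inner ℝ z (b x - b y)) * (1 + 1 / ‖z‖) - 2 * (inner ℝ z (ζ k)) ^ 2 / ‖z‖ ^ 3
          - K * (2 * inner ℝ z (ζ k) * (1 + 1 / ‖z‖)) ^ 2)) ≤ 0 := by
    intro k
    obtain ⟨hr1, hr2⟩ := radial_second K z (ζ k) (b x - b y) hxy
    rw [← hr2]
    have hc1 : ContDiffAt ℝ 2 (fun t : ℝ => (fun w => u w - lyapV w) (x + t • p k x + t ^ 2 • b x)) 0 :=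
      (hF.comp (by fun_prop)).contDiffAt
    have hc2 : ContDiffAt ℝ 2 (fun t : ℝ => (fun w => u w + lyapV w) (y + t • qf k + t ^ 2 • b y)) 0 :=
      (hG.comp (by fun_prop)).contDiffAt
    have hmax : IsLocalMax (fun t : ℝ => (fun w => u w - lyapV w) (x + t • p k x + t ^ 2 • b x)
      - (fun w => u w + lyapV w) (y + t • qf k + t ^ 2 • b y) -
      M * (1 - Real.exp (-K * (‖z + t • ζ k + t ^ 2 • (b x - b y)‖ ^ 2
      + 2 * ‖z + t • ζ k + t ^ 2 • (b x - b y)‖)))) 0 := by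
      refine Filter.Eventually.of_forall fun t => ?_
      have h1 := hglob (x + t • p k x + t ^ 2 • b x, y + t • qf k + t ^ 2 • b y)
      have h2 : x + t • p k x + t ^ 2 • b x - (y + t • qf k + t ^ 2 • b y) =
          z + t • ζ k + t ^ 2 • (b x - b y) := by
        rw [hz, hζ]; module
      simp only [hΦ, hψ, h2] at h1
      simpa [hz] using h1
    have htest := second_deriv_test ((hc1.sub hc2).sub (contDiffAt_const.mul hr1)) hmax
    rw [iteratedDeriv_fun_sub (hc1.sub hc2) (contDiffAt_const.mul hr1), iteratedDeriv_fun_sub hc1 hc2,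
      iteratedDeriv_const_mul_field] at htest
    exact htest
  have hsum := Finset.sum_le_sum (s := Finset.univ) fun k _ => hk k
  rw [Finset.sum_sub_distrib, Finset.sum_sub_distrib, ← Finset.mul_sum, Finset.sum_const_zero] at hsum
  have hrad := coupling_radial e s L Lb K hs hL hLb hK1 hK2 z (b x - b y) hxy ζ (by
      intro k
      simp only [hζ, hp, hqf, coupP, Sum.elim_inl, hRfe]
      rw [smul_sub, sub_sub_cancel, smul_smul]
      congr 1; ring) (by
      intro k
      simp only [hζ, hp, hqf, coupP, Sum.elim_inr]
      calc ‖X x (e k) - X y (e k)‖ = ‖(X x - X y) (e k)‖ := by simp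
        _ ≤ ‖X x - X y‖ * ‖e k‖ := ContinuousLinearMap.le_opNorm _ _
        _ ≤ L * ‖z‖ * 1 := by
          rw [e.norm_eq_one]; gcongr; exact hX x y
        _ = _ := mul_one _) (hb x y)
  have hgen1 : ∑ k, iteratedDeriv 2 (fun t : ℝ => (fun w => u w - lyapV w) (x + t • p k x + t ^ 2 • b x)) 0 =
      2 * (genC p b u x - genC p b lyapV x) := by
    have h1 : ∀ k, iteratedDeriv 2 (fun t : ℝ => (fun w => u w - lyapV w) (x + t • p k x + t ^ 2 • b x)) 0 =
      iteratedDeriv 2 (fun t : ℝ => u (x + t • p k x + t ^ 2 • b x)) 0 -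
      iteratedDeriv 2 (fun t : ℝ => lyapV (x + t • p k x + t ^ 2 • b x)) 0 := fun k =>
      iteratedDeriv_fun_sub (hu.comp (by fun_prop)).contDiffAt (lyapV_contDiff.comp (by fun_prop)).contDiffAt
    simp only [h1, genC, Finset.sum_sub_distrib]
    ring
  have hgen2 : ∑ k, iteratedDeriv 2 (fun t : ℝ => (fun w => u w + lyapV w) (y + t • qf k + t ^ 2 • b y)) 0 =
      2 * (genC p b u y + genC p b lyapV y) := by
    have hrot : ∀ w : E → ℝ, ContDiff ℝ 2 w →
        ∑ k, iteratedDeriv 2 (fun t : ℝ => w (y + t • qf k + t ^ 2 • b y)) 0 = 2 * genC p b w y := by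
      intro w hw
      have h0 : 2 * genC p b w y = ∑ k, iteratedDeriv 2 (fun t : ℝ => w (y + t • p k y + t ^ 2 • b y)) 0 := by
        unfold genC; ring
      rw [h0]
      simp only [second_deriv_curve hw, Fintype.sum_sum_type, hqf, hp, coupP, Sum.elim_inl, Sum.elim_inr]
      congr 1
      rw [Finset.sum_add_distrib, Finset.sum_add_distrib]
      congr 1
      simp only [map_smul, smul_apply, ← Finset.smul_sum]
      congr 2
      have := sum_bilin_isometry (e.map Rf) e (fderiv ℝ (fderiv ℝ w) y)
      simpa using this
    rw [hrot _ hG]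
    have h1 : ∀ k, iteratedDeriv 2 (fun t : ℝ => (fun w => u w + lyapV w) (y + t • p k y + t ^ 2 • b y)) 0 =
      iteratedDeriv 2 (fun t : ℝ => u (y + t • p k y + t ^ 2 • b y)) 0 +
      iteratedDeriv 2 (fun t : ℝ => lyapV (y + t • p k y + t ^ 2 • b y)) 0 := fun k =>
      iteratedDeriv_fun_add (hu.comp (by fun_prop)).contDiffAt (lyapV_contDiff.comp (by fun_prop)).contDiffAt
    unfold genC
    simp only [h1, Finset.sum_add_distrib]
    ring
  rw [hgen1, hgen2] at hsum
  have hLx := lyapV_genC p b P β C hβ hP0 hC hP hdis x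
  have hLy := lyapV_genC p b P β C hβ hP0 hC hP hdis y
  rw [← hCV] at hLx hLy
  set gux := genC p b u x
  set guy := genC p b u y
  set Ee := Real.exp (-K * (‖z‖ ^ 2 + 2 * ‖z‖)) with hEe
  have hEe0 : 0 < Ee := Real.exp_pos _
  have hMr := mul_le_mul_of_nonneg_left hrad hM0
  have h1 := abs_le.1 (hgu x)
  have h2 := abs_le.1 (hgu y)
  have h3 := abs_le.1 (hφ x)
  have h4 := abs_le.1 (hφ y)
  have hlu : 0 < lam * (u x - u y) := mul_pos hlam hupos
  have hmain : 0 < 2 * B + 2 * CV - β * (lyapV x + lyapV y) - 2 * M * K ^ 2 * s ^ 2 * Ee := by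
    have e1 : M * -(4 * K ^ 2 * s ^ 2 * Ee) = -(4 * M * K ^ 2 * s ^ 2 * Ee) := by ring
    rw [e1] at hMr
    linarith [h1.1, h1.2, h2.1, h2.2, h3.1, h3.2, h4.1, h4.2]
  rcases le_or_gt R' (lyapV x + lyapV y) with hcase | hcase
  · have e1 : 2 * B + 2 * CV = β * R' := by rw [hR']; field_simp
    have e2 : β * R' ≤ β * (lyapV x + lyapV y) := by gcongr
    have e3 : 0 ≤ 2 * M * K ^ 2 * s ^ 2 * Ee := by positivity
    linarith
  · have e0 : ‖z‖ ≤ R' := by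
      have := norm_sub_le x y
      linarith [norm_le_lyapV x, norm_le_lyapV y]
    have e1 : c0 ≤ Ee := by
      rw [hc0, hEe]
      apply Real.exp_le_exp.2
      have : K * (‖z‖ ^ 2 + 2 * ‖z‖) ≤ K * (R' ^ 2 + 2 * R') := by gcongr
      linarith
    have e2 : M * (K ^ 2 * s ^ 2 * c0) = B + CV := by rw [hM]; field_simp
    have e3 : M * (K ^ 2 * s ^ 2 * c0) ≤ M * (K ^ 2 * s ^ 2 * Ee) := by gcongr
    have e4 : 0 ≤ β * (lyapV x + lyapV y) := by positivity
    linarith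

end PC2

section PC3

variable {E : Type*} [NormedAddCommGroup E] [InnerProductSpace ℝ E] {κ : Type*} [Fintype κ]

theorem lip_of_iFD1 {G F : Type*} [NormedAddCommGroup G] [NormedSpace ℝ G] [NormedAddCommGroup F] [NormedSpace ℝ F]
    {g : G → F} (hg : ContDiff ℝ 1 g) {C : ℝ} (hC : ∀ z, ‖iteratedFDeriv ℝ 1 g z‖ ≤ C) (x y : G) :
    ‖g x - g y‖ ≤ C * ‖x - y‖ := by
  refine Convex.norm_image_sub_le_of_norm_fderiv_le (𝕜 := ℝ) (s := Set.univ)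
    (fun z _ => hg.differentiable (by norm_num) z) (fun z _ => ?_) convex_univ (Set.mem_univ _) (Set.mem_univ _)
  rw [← norm_iteratedFDeriv_one]; exact hC z

theorem iFD_eval_le {F : Type*} [NormedAddCommGroup F] [NormedSpace ℝ F]
    {X : E → F →L[ℝ] F} {i : ℕ} (hX : ContDiff ℝ i X) (v : F) (hv : ‖v‖ ≤ 1) {C : ℝ} {z : E}
    (h : ‖iteratedFDeriv ℝ i X z‖ ≤ C) :
    ‖iteratedFDeriv ℝ i (fun x => X x v) z‖ ≤ C := by
  have h1 := (ContinuousLinearMap.apply ℝ F v).norm_iteratedFDeriv_comp_left (f := X) (x := z)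
    hX.contDiffAt (n := i) le_rfl
  have h2 : ‖ContinuousLinearMap.apply ℝ F v‖ ≤ 1 := by
    refine ContinuousLinearMap.opNorm_le_bound _ zero_le_one fun T => ?_
    rw [one_mul, ContinuousLinearMap.apply_apply]
    exact (T.le_opNorm v).trans (mul_le_of_le_one_right (norm_nonneg _) hv)
  have h3 : (ContinuousLinearMap.apply ℝ F v) ∘ X = fun x => X x v := rfl
  rw [h3] at h1
  refine h1.trans ?_
  calc _ ≤ 1 * ‖iteratedFDeriv ℝ i X z‖ := by gcongr
    _ ≤ C := by rwa [one_mul]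

set_option maxHeartbeats 1000000 in
theorem poisson_approx_smooth [Nonempty κ] [FiniteDimensional ℝ E] (e : OrthonormalBasis κ ℝ E)
    (s C β C0 B M2 M3 ε : ℝ) (hs : 0 < s) (hC : 0 ≤ C) (hβ : 0 < β) (hC0 : 0 ≤ C0) (hε : 0 < ε)
    (hB : 0 ≤ B) (hM2 : 0 ≤ M2) (hM3 : 0 ≤ M3) (φ : E → ℝ) (hφ : ContDiff ℝ 3 φ) (hφB : ∀ x, |φ x| ≤ B)
    (hJ2 : JB 2 M2 φ) (hJ3 : JB 3 M3 φ) : ∃ M : ℝ, 0 ≤ M ∧ ∀ (X : E → E →L[ℝ] E) (b : E → E),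
    ContDiff ℝ 3 X → ContDiff ℝ 3 b → (∀ x, ‖X x‖ ≤ C) → (∀ x, ‖b x‖ ≤ C * (1 + ‖x‖)) →
    (∀ i, 1 ≤ i → i ≤ 2 → ∀ z, ‖iteratedFDeriv ℝ i X z‖ ≤ C) →
    (∀ i, 1 ≤ i → i ≤ 2 → ∀ z, ‖iteratedFDeriv ℝ i b z‖ ≤ C) →
    (∃ C3, (∀ z, ‖iteratedFDeriv ℝ 3 X z‖ ≤ C3) ∧ ∀ z, ‖iteratedFDeriv ℝ 3 b z‖ ≤ C3) →
    (∀ x, Fintype.card (κ ⊕ κ) * inner ℝ x (b x) ≤ -β * ‖x‖ ^ 2 + C0) →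
    ∃ (u : E → ℝ) (c : ℝ), ContDiff ℝ 3 u ∧ (∃ U, ∀ x, |u x| ≤ U) ∧ JB 2 M u ∧
      ∀ x, |genC (coupP e s X) b u x - c + φ x| ≤ ε * lyapV x := by
  set N : ℝ := (Fintype.card (κ ⊕ κ) : ℝ) with hN
  have hN0 : 0 ≤ N := by positivity
  set P : ℝ := Fintype.card κ * s ^ 2 + Fintype.card κ * C ^ 2 with hP
  obtain ⟨Mo, hMo, hosc⟩ := coupling_osc e s C (N * C) B P β C0 hs hC (by positivity) hB (by positivity) hβ hC0
  set lam : ℝ := ε / (2 * (Mo + 2)) with hlam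
  have hlam0 : 0 < lam := by positivity
  set η : ℝ := min β (ε / 2) with hη
  have hη0 : 0 < η := by positivity
  obtain ⟨M, hM, hres⟩ := resolvent_exists (E := E) (ι := κ ⊕ κ) (1 + s + 3 * C) lam η B M2 M3 (by positivity)
    hlam0 hη0 hB hM2 hM3 φ hφ hφB hJ2 hJ3
  refine ⟨M, hM, ?_⟩
  rintro X b hX hb hXC hbC hXd hbd ⟨C3, hX3, hb3⟩ hdis
  have hC3 : 0 ≤ C3 := (norm_nonneg _).trans (hX3 0)
  have hpn : ∀ k x, ‖coupP e s X k x‖ ≤ s + C := by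
    rintro (k | k) x
    · simp only [coupP]
      rw [norm_smul, e.norm_eq_one, mul_one, Real.norm_of_nonneg hs.le]; linarith
    · simp only [coupP]
      have := (X x).le_opNorm (e k)
      rw [e.norm_eq_one, mul_one] at this
      linarith [hXC x]
  have hpd : ∀ k, ∀ i, 1 ≤ i → i ≤ 3 → ∀ z, ∀ D, ‖iteratedFDeriv ℝ i X z‖ ≤ D → ‖iteratedFDeriv ℝ i (coupP e s X k) z‖ ≤ D := by
    rintro (k | k) i h1 h3 z D hD
    · simp only [coupP]
      rw [iteratedFDeriv_const_of_ne (by omega)]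
      simpa using (norm_nonneg _).trans hD
    · simp only [coupP]
      exact iFD_eval_le (hX.of_le (by exact_mod_cast h3)) (e k) (e.norm_eq_one k).le hD
  obtain ⟨u, hu, huB, huJ, hueq⟩ := hres (coupP e s X) b (by
      rintro (k | k)
      · exact contDiff_const
      · exact hX.clm_apply contDiff_const) hb
    (fun k i h1 h2 z => hpd k i h1 (by omega) z _ ((hXd i h1 h2 z).trans (by linarith)))
    (fun i h1 h2 z => (hbd i h1 h2 z).trans (by linarith))
    ⟨C3, fun k z => hpd k 3 (by norm_num) le_rfl z _ (hX3 z), hb3⟩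
    (by
      intro k x
      have h1 := hpn k x
      have h2 := hbC x
      nlinarith [norm_nonneg x])
  have hu2 : ContDiff ℝ 2 u := hu.of_le (by norm_num)
  have hO := hosc X b (lip_of_iFD1 (hX.of_le (by norm_num)) (hXd 1 le_rfl (by norm_num))) (by
      intro x y
      have h1 := lip_of_iFD1 (hb.of_le (by norm_num)) (hbd 1 le_rfl (by norm_num)) x y
      have h2 := real_inner_le_norm (x - y) (b x - b y)
      calc N * inner ℝ (x - y) (b x - b y) ≤ N * (‖x - y‖ * (C * ‖x - y‖)) := by
            gcongr; exact h2.trans (by gcongr)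
        _ = _ := by ring) (by
      intro x
      rw [Fintype.sum_sum_type]
      simp only [coupP]
      have h1 : ∑ k, ‖s • e k‖ ^ 2 = Fintype.card κ * s ^ 2 := by
        simp [norm_smul, e.norm_eq_one]
      have h2 : ∑ k, ‖X x (e k)‖ ^ 2 ≤ ∑ k : κ, C ^ 2 := by
        refine Finset.sum_le_sum fun k _ => ?_
        have := (X x).le_opNorm (e k)
        rw [e.norm_eq_one, mul_one] at this
        gcongr
        exact this.trans (hXC x)
      rw [Finset.sum_const, Finset.card_univ, nsmul_eq_mul] at h2
      rw [h1, hP]; linarith) hdis φ hφB lam hlam0 u hu2 ⟨_, huB⟩ (by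
      intro x
      refine (hueq x).trans ?_
      have := one_le_lyapV x
      exact mul_le_mul_of_nonneg_right (min_le_left _ _) (by positivity))
  refine ⟨u, lam * u 0, hu, ⟨_, huB⟩, huJ, ?_⟩
  intro x
  have hV1 := one_le_lyapV x
  have hV0 : lyapV (0:E) = 1 := by simp [lyapV]
  have h1 := hO x 0
  have h2 := hO 0 x
  have h3 : |u x - u 0| ≤ (Mo + 2) * lyapV x := by
    rw [abs_le]; rw [hV0] at h1 h2
    constructor <;> nlinarith
  have h4 : |lam * (u x - u 0)| ≤ ε / 2 * lyapV x := by
    rw [abs_mul, abs_of_pos hlam0]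
    calc lam * |u x - u 0| ≤ lam * ((Mo + 2) * lyapV x) := by gcongr
      _ = _ := by rw [hlam]; field_simp
  have h5 := hueq x
  have h6 : η * (1 + ‖x‖ ^ 2) ^ 2 ≤ ε / 2 * lyapV x :=
    mul_le_mul_of_nonneg_right (min_le_right _ _) (by positivity)
  have h7 : genC (coupP e s X) b u x - lam * u 0 + φ x =
    (genC (coupP e s X) b u x - lam * u x + φ x) + lam * (u x - u 0) := by ring
  rw [h7]
  refine (abs_add_le _ _).trans ?_
  linarith

end PC3

section PD1

variable {E : Type*} [NormedAddCommGroup E] [InnerProductSpace ℝ E] [FiniteDimensional ℝ E] [MeasurableSpace E] [BorelSpace E]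

/-- averaging against a bump -/
def molf {F : Type*} [NormedAddCommGroup F] [NormedSpace ℝ F] (η : ContDiffBump (0 : E)) (g : E → F) (x : E) : F :=
  ∫ t, η.normed volume t • g (x - t)

theorem molf_integrable {F : Type*} [NormedAddCommGroup F] [NormedSpace ℝ F] (η : ContDiffBump (0 : E)) {g : E → F}
    (hg : Continuous g) (x : E) : Integrable fun t => η.normed volume t • g (x - t) := by
  refine Continuous.integrable_of_hasCompactSupport ?_ ?_
  · have := η.contDiff_normed (n := 0) (μ := volume)
    exact this.continuous.smul (by fun_prop)
  · exact (η.hasCompactSupport_normed (μ := volume)).smul_right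

theorem molf_clm {F G : Type*} [NormedAddCommGroup F] [NormedSpace ℝ F] [CompleteSpace F] [NormedAddCommGroup G] [NormedSpace ℝ G] [CompleteSpace G]
    (η : ContDiffBump (0 : E)) {g : E → F}
    (hg : Continuous g) (L : F →L[ℝ] G) (x : E) : L (molf η g x) = molf η (fun z => L (g z)) x := by
  unfold molf
  rw [← L.integral_comp_comm (molf_integrable η hg x)]
  simp

theorem molf_norm_le {F : Type*} [NormedAddCommGroup F] [NormedSpace ℝ F] (η : ContDiffBump (0 : E)) {g : E → F}
    {c : ℝ} (hc : ∀ x, ‖g x‖ ≤ c) (x : E) : ‖molf η g x‖ ≤ c := by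
  unfold molf
  have h2 : Integrable fun t => η.normed volume t * c := (η.integrable_normed (μ := volume)).mul_const c
  refine (norm_integral_le_of_norm_le h2 ?_).trans ?_
  · refine Filter.Eventually.of_forall fun t => ?_
    rw [norm_smul, Real.norm_of_nonneg (η.nonneg_normed t)]
    exact mul_le_mul_of_nonneg_left (hc _) (η.nonneg_normed t)
  · rw [integral_mul_const, η.integral_normed, one_mul]

theorem molf_le (η : ContDiffBump (0 : E)) {g : E → ℝ} (hg : Continuous g)
    {c : ℝ} (hc : ∀ x, g x ≤ c) (x : E) : molf η g x ≤ c := by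
  have h2 : Integrable fun t => η.normed volume t * c := (η.integrable_normed (μ := volume)).mul_const c
  have : molf η g x ≤ ∫ t, η.normed volume t * c := by
    refine integral_mono (molf_integrable η hg x) h2 fun t => ?_
    exact mul_le_mul_of_nonneg_left (hc _) (η.nonneg_normed t)
  rwa [integral_mul_const, η.integral_normed, one_mul] at this

theorem molf_hasFDerivAt {F : Type*} [NormedAddCommGroup F] [NormedSpace ℝ F] (η : ContDiffBump (0 : E)) {g : E → F}
    (hg : ContDiff ℝ 1 g) {C : ℝ} (hC : ∀ z, ‖fderiv ℝ g z‖ ≤ C) (x : E) :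
    HasFDerivAt (molf η g) (molf η (fderiv ℝ g) x) x := by
  have hgc : Continuous (fderiv ℝ g) := hg.continuous_fderiv (by norm_num)
  refine hasFDerivAt_integral_of_dominated_of_fderiv_le (𝕜 := ℝ) (s := Set.univ) (bound := fun t => η.normed volume t * C)
    (F' := fun x t => η.normed volume t • fderiv ℝ g (x - t))
    Filter.univ_mem ?_ (molf_integrable η hg.continuous x) ((molf_integrable η hgc x).aestronglyMeasurable) ?_
    ((η.integrable_normed (μ := volume)).mul_const C) ?_
  · exact Filter.Eventually.of_forall fun z => (molf_integrable η hg.continuous z).aestronglyMeasurable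
  · refine Filter.Eventually.of_forall fun t z _ => ?_
    rw [norm_smul, Real.norm_of_nonneg (η.nonneg_normed t)]
    exact mul_le_mul_of_nonneg_left (hC _) (η.nonneg_normed t)
  · refine Filter.Eventually.of_forall fun t z _ => ?_
    have h1 : HasFDerivAt g (fderiv ℝ g (z - t)) (z - t) := (hg.differentiable (by norm_num) _).hasFDerivAt
    have h2 : HasFDerivAt (fun y => g (y - t)) (fderiv ℝ g (z - t)) z := by
      have h3 := h1.comp z ((hasFDerivAt_id z).sub_const t)
      rw [ContinuousLinearMap.comp_id] at h3
      exact h3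
    exact h2.const_smul _

theorem molf_contDiff {F : Type*} [NormedAddCommGroup F] [NormedSpace ℝ F] [CompleteSpace F] (η : ContDiffBump (0 : E)) {g : E → F}
    (hg : Continuous g) (n : ℕ) : ContDiff ℝ n (molf η g) := by
  have := (η.hasCompactSupport_normed (μ := volume)).contDiff_convolution_left (n := n) (μ := volume)
    (ContinuousLinearMap.lsmul ℝ ℝ : ℝ →L[ℝ] F →L[ℝ] F) (g := g) η.contDiff_normed hg.locallyIntegrable
  exact this

theorem molf_fderiv_bdd {F : Type*} [NormedAddCommGroup F] [NormedSpace ℝ F] [CompleteSpace F] (η : ContDiffBump (0 : E)) {g : E → F}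
    (hg : Continuous g) {c : ℝ} (hc : ∀ x, ‖g x‖ ≤ c) : ∃ C3, ∀ x, ‖fderiv ℝ (molf η g) x‖ ≤ C3 := by
  have hη1 : ContDiff ℝ 1 (η.normed (volume : Measure E)) := η.contDiff_normed
  have hηc := (η.hasCompactSupport_normed (μ := (volume : Measure E)))
  have hd := fun x => hηc.hasFDerivAt_convolution_left (μ := volume)
    (ContinuousLinearMap.lsmul ℝ ℝ : ℝ →L[ℝ] F →L[ℝ] F) (g := g) hη1 hg.locallyIntegrable x
  refine ⟨∫ t, ‖fderiv ℝ (η.normed (volume : Measure E)) t‖ * c, fun x => ?_⟩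
  have h0 : fderiv ℝ (molf η g) x = _ := (hd x).fderiv
  rw [h0, convolution_def]
  have hi : Integrable (fun t => ‖fderiv ℝ (η.normed (volume : Measure E)) t‖) :=
    (Continuous.integrable_of_hasCompactSupport (hη1.continuous_fderiv (by norm_num)) (hηc.fderiv ℝ)).norm
  refine norm_integral_le_of_norm_le (hi.mul_const _) (Filter.Eventually.of_forall fun t => ?_)
  refine ContinuousLinearMap.opNorm_le_bound _ (mul_nonneg (norm_nonneg _) ((norm_nonneg _).trans (hc 0))) fun w => ?_
  rw [ContinuousLinearMap.precompL_apply, ContinuousLinearMap.lsmul_apply, norm_smul, mul_right_comm]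
  gcongr
  · exact ContinuousLinearMap.le_opNorm _ _
  · exact hc _

theorem mollify {F : Type*} [NormedAddCommGroup F] [NormedSpace ℝ F] [CompleteSpace F] (g : E → F)
    (hg : ContDiff ℝ 2 g) (C : ℝ) (h1 : ∀ z, ‖iteratedFDeriv ℝ 1 g z‖ ≤ C) (h2 : ∀ z, ‖iteratedFDeriv ℝ 2 g z‖ ≤ C)
    (δ : ℝ) (hδ : 0 < δ) : ∃ G : E → F, ContDiff ℝ 3 G ∧ (∀ x, ‖G x - g x‖ ≤ C * δ) ∧
    (∀ i, 1 ≤ i → i ≤ 2 → ∀ z, ‖iteratedFDeriv ℝ i G z‖ ≤ C) ∧ (∃ C3, ∀ z, ‖iteratedFDeriv ℝ 3 G z‖ ≤ C3) ∧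
    (∀ c, (∀ x, ‖g x‖ ≤ c) → ∀ x, ‖G x‖ ≤ c) ∧
    (∀ (L : F →L[ℝ] ℝ) (c : ℝ), (∀ x, L (g x) ≤ c) → ∀ x, L (G x) ≤ c) := by
  let η : ContDiffBump (0 : E) := ⟨δ / 2, δ, by positivity, by linarith⟩
  have hgc := hg.continuous
  have hg1 : ContDiff ℝ 1 g := hg.of_le (by norm_num)
  have hD1 : ∀ z, ‖fderiv ℝ g z‖ ≤ C := fun z => by rw [← norm_iteratedFDeriv_one]; exact h1 z
  have hdg : ContDiff ℝ 1 (fderiv ℝ g) := hg.fderiv_right (by norm_num)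
  have hD2 : ∀ z, ‖fderiv ℝ (fderiv ℝ g) z‖ ≤ C := fun z => by
    rw [← norm_iteratedFDeriv_one, norm_iteratedFDeriv_fderiv]; exact h2 z
  have hC0 : 0 ≤ C := (norm_nonneg _).trans (h1 0)
  have e1 : fderiv ℝ (molf η g) = molf η (fderiv ℝ g) := funext fun x => (molf_hasFDerivAt η hg1 hD1 x).fderiv
  have e2 : fderiv ℝ (molf η (fderiv ℝ g)) = molf η (fderiv ℝ (fderiv ℝ g)) :=
    funext fun x => (molf_hasFDerivAt η hdg hD2 x).fderiv
  refine ⟨molf η g, molf_contDiff η hgc 3, ?_, ?_, ?_, fun c hc x => molf_norm_le η hc x, ?_⟩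
  · intro x
    have hlip := lip_of_iFD1 hg1 h1
    have := η.dist_normed_convolution_le (μ := (volume : Measure E)) (g := g) (x₀ := x) (ε := C * δ) hgc.aestronglyMeasurable
      (fun z hz => by
        rw [dist_eq_norm]
        refine (hlip z x).trans ?_
        gcongr
        rw [← dist_eq_norm]; exact (Metric.mem_ball.1 hz).le)
    rw [dist_eq_norm] at this
    exact this
  · intro i hi1 hi2 z
    interval_cases i
    · rw [norm_iteratedFDeriv_one, e1]; exact molf_norm_le η hD1 z
    · rw [← norm_iteratedFDeriv_fderiv, norm_iteratedFDeriv_one, e1, e2]; exact molf_norm_le η hD2 z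
  · obtain ⟨C3, h3⟩ := molf_fderiv_bdd η (hdg.continuous_fderiv (by norm_num)) hD2
    refine ⟨C3, fun z => ?_⟩
    rw [← norm_iteratedFDeriv_fderiv, ← norm_iteratedFDeriv_fderiv, norm_iteratedFDeriv_one, e1, e2]
    exact h3 z
  · intro L c hc x
    rw [molf_clm η hgc L]
    exact molf_le η (L.continuous.comp hgc) hc x

end PD1

section PD2

variable {E : Type*} [NormedAddCommGroup E] [NormedSpace ℝ E]
variable {A : Type*} [NormedRing A] [NormedAlgebra ℝ A]

/-- square root iteration -/
def sqY (B : E → A) : ℕ → E → A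
  | 0 => fun _ => 0
  | k + 1 => fun x => (1 / 2 : ℝ) • (B x + sqY B k x * sqY B k x)

theorem sqY_contDiff {B : E → A} (hB : ContDiff ℝ 3 B) (k : ℕ) : ContDiff ℝ 3 (sqY B k) := by
  induction k with
  | zero => exact contDiff_const
  | succ k ih => exact (hB.add (ih.mul ih)).const_smul (1 / 2 : ℝ)

theorem sqY_star [StarRing A] [StarModule ℝ A] {B : E → A} (hB : ∀ x, IsSelfAdjoint (B x)) (k : ℕ) (x : E) :
    IsSelfAdjoint (sqY B k x) := by
  induction k with
  | zero => exact IsSelfAdjoint.zero _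
  | succ k ih =>
    have h2 : IsSelfAdjoint (sqY B k x * sqY B k x) := by
      rw [IsSelfAdjoint, star_mul, ih.star_eq]
    exact IsSelfAdjoint.smul (IsSelfAdjoint.all _) ((hB x).add h2)

theorem sqY_norm {B : E → A} {r ρ : ℝ} (hρ : 0 ≤ ρ) (hr : r + ρ ^ 2 ≤ 2 * ρ) (hB : ∀ x, ‖B x‖ ≤ r) (k : ℕ) (x : E) :
    ‖sqY B k x‖ ≤ ρ := by
  induction k with
  | zero => simpa [sqY] using hρ
  | succ k ih =>
    simp only [sqY, norm_smul]
    have h1 := norm_mul_le (sqY B k x) (sqY B k x)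
    have h2 := norm_add_le (B x) (sqY B k x * sqY B k x)
    have h3 := hB x
    norm_num
    nlinarith [norm_nonneg (sqY B k x)]

theorem sqY_diff {B : E → A} {r ρ : ℝ} (hρ : 0 ≤ ρ) (hρ1 : ρ < 1) (hr : r + ρ ^ 2 ≤ 2 * ρ) (hB : ∀ x, ‖B x‖ ≤ r) (k : ℕ) (x : E) :
    ‖sqY B (k + 1) x - sqY B k x‖ ≤ ρ ^ k := by
  induction k with
  | zero =>
    have := sqY_norm hρ hr hB 1 x
    simp only [zero_add, pow_zero]
    simp only [sqY, sub_zero] at this ⊢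
    linarith
  | succ k ih =>
    have e : sqY B (k + 1 + 1) x - sqY B (k + 1) x = (1 / 2 : ℝ) • (sqY B (k + 1) x * (sqY B (k + 1) x - sqY B k x)
        + (sqY B (k + 1) x - sqY B k x) * sqY B k x) := by
      have e1 : sqY B (k + 1 + 1) x = (1 / 2 : ℝ) • (B x + sqY B (k + 1) x * sqY B (k + 1) x) := rfl
      have e2 : sqY B (k + 1) x = (1 / 2 : ℝ) • (B x + sqY B k x * sqY B k x) := rfl
      rw [e1]
      conv_lhs => rw [sub_eq_add_neg, e2]
      rw [← e2, ← sub_eq_add_neg]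
      nth_rewrite 3 [e2]
      rw [← smul_sub]
      congr 1
      noncomm_ring
    rw [e, norm_smul]
    have h1 := norm_mul_le (sqY B (k + 1) x) (sqY B (k + 1) x - sqY B k x)
    have h2 := norm_mul_le (sqY B (k + 1) x - sqY B k x) (sqY B k x)
    have h3 := norm_add_le (sqY B (k + 1) x * (sqY B (k + 1) x - sqY B k x)) ((sqY B (k + 1) x - sqY B k x) * sqY B k x)
    have h4 := sqY_norm hρ hr hB k x
    have h5 := sqY_norm hρ hr hB (k + 1) x
    have h6 : ‖sqY B (k + 1) x‖ * ‖sqY B (k + 1) x - sqY B k x‖ ≤ ρ * ρ ^ k := by gcongr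
    have h7 : ‖sqY B (k + 1) x - sqY B k x‖ * ‖sqY B k x‖ ≤ ρ ^ k * ρ := by gcongr
    rw [pow_succ]
    norm_num
    linarith

theorem sqY_sq {B : E → A} (k : ℕ) (x : E) :
    (1 - sqY B k x) * (1 - sqY B k x) - (1 - B x) = (2 : ℝ) • (sqY B (k + 1) x - sqY B k x) := by
  simp only [sqY]
  rw [smul_sub, smul_smul]
  norm_num
  rw [two_smul]
  noncomm_ring

theorem sqY_iFD_succ {B : E → A} (hB : ContDiff ℝ 3 B) (k n : ℕ) (hn : n ≤ 3) (z : E) :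
    ‖iteratedFDeriv ℝ n (sqY B (k + 1)) z‖ ≤ 1 / 2 * (‖iteratedFDeriv ℝ n B z‖ +
      ∑ i ∈ Finset.range (n + 1), (n.choose i : ℝ) * ‖iteratedFDeriv ℝ i (sqY B k) z‖ * ‖iteratedFDeriv ℝ (n - i) (sqY B k) z‖) := by
  have hY := sqY_contDiff hB k
  have hB' : ContDiff ℝ n B := hB.of_le (by exact_mod_cast hn)
  have hY' : ContDiff ℝ n (sqY B k) := hY.of_le (by exact_mod_cast hn)
  have e : sqY B (k + 1) = fun x => (1 / 2 : ℝ) • (B x + sqY B k x * sqY B k x) := rfl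
  rw [e, iteratedFDeriv_const_smul_apply' (hB'.add (hY'.mul hY')).contDiffAt, norm_smul]
  norm_num
  have h := norm_iteratedFDeriv_mul_le hY hY z (n := n) (by exact_mod_cast hn)
  have e2 : iteratedFDeriv ℝ n (fun x => B x + sqY B k x * sqY B k x) z =
     iteratedFDeriv ℝ n B z + iteratedFDeriv ℝ n (fun x => sqY B k x * sqY B k x) z :=
    iteratedFDeriv_add_apply (f := B) (g := fun x => sqY B k x * sqY B k x) hB'.contDiffAt (hY'.mul hY').contDiffAt
  rw [e2]
  exact (norm_add_le _ _).trans (add_le_add_right h _)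

theorem sqY_D1 {B : E → A} (hB : ContDiff ℝ 3 B) {r ρ : ℝ} (hρ : 0 ≤ ρ) (hr : r + ρ ^ 2 ≤ 2 * ρ) (hBr : ∀ x, ‖B x‖ ≤ r)
    {C : ℝ} (hC : ∀ z, ‖iteratedFDeriv ℝ 1 B z‖ ≤ C) {C1 : ℝ} (hC10 : 0 ≤ C1) (hC1 : C / 2 + ρ * C1 ≤ C1) (k : ℕ) (z : E) :
    ‖iteratedFDeriv ℝ 1 (sqY B k) z‖ ≤ C1 := by
  induction k with
  | zero =>
    have : sqY B 0 = fun _ => (0:A) := rfl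
    rw [this, iteratedFDeriv_const_of_ne (by norm_num)]; simpa using hC10
  | succ k ih =>
    have h := sqY_iFD_succ hB k 1 (by norm_num) z
    simp only [Finset.sum_range_succ, Finset.sum_range_zero, norm_iteratedFDeriv_zero, Nat.sub_zero] at h
    norm_num at h
    have e11 : ‖iteratedFDeriv ℝ (1 - 1) (sqY B k) z‖ = ‖sqY B k z‖ := norm_iteratedFDeriv_zero
    rw [e11] at h
    rw [norm_iteratedFDeriv_one] at ih
    have h0 := sqY_norm hρ hr hBr k z
    have h1 := hC z
    rw [norm_iteratedFDeriv_one] at h1 ⊢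
    have h2 : ‖sqY B k z‖ * ‖fderiv ℝ (sqY B k) z‖ ≤ ρ * C1 := by gcongr
    nlinarith

theorem sqY_D2 {B : E → A} (hB : ContDiff ℝ 3 B) {r ρ : ℝ} (hρ : 0 ≤ ρ) (hr : r + ρ ^ 2 ≤ 2 * ρ) (hBr : ∀ x, ‖B x‖ ≤ r)
    {C : ℝ} (hC : ∀ z, ‖iteratedFDeriv ℝ 2 B z‖ ≤ C) {C1 C2 : ℝ}
    (h1 : ∀ k z, ‖iteratedFDeriv ℝ 1 (sqY B k) z‖ ≤ C1) (hC20 : 0 ≤ C2) (hC2 : C / 2 + C1 ^ 2 + ρ * C2 ≤ C2) (k : ℕ) (z : E) :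
    ‖iteratedFDeriv ℝ 2 (sqY B k) z‖ ≤ C2 := by
  induction k with
  | zero =>
    have : sqY B 0 = fun _ => (0:A) := rfl
    rw [this, iteratedFDeriv_const_of_ne (by norm_num)]; simpa using hC20
  | succ k ih =>
    have h := sqY_iFD_succ hB k 2 (by norm_num) z
    have h0 := sqY_norm hρ hr hBr k z
    have h3 := hC z
    have h4 := h1 k z
    have e1 : Nat.choose 2 1 = 2 := rfl
    simp only [Finset.sum_range_succ, Finset.sum_range_zero, norm_iteratedFDeriv_zero, Nat.choose_self, Nat.choose_zero_right, e1,
      Nat.sub_self, Nat.sub_zero, Nat.reduceSub] at h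
    push_cast at h
    have h2 : ‖sqY B k z‖ * ‖iteratedFDeriv ℝ 2 (sqY B k) z‖ ≤ ρ * C2 := by gcongr
    have h5 : ‖iteratedFDeriv ℝ 1 (sqY B k) z‖ * ‖iteratedFDeriv ℝ 1 (sqY B k) z‖ ≤ C1 * C1 := by gcongr; exact (norm_nonneg _).trans h4
    nlinarith

theorem sqY_D3 {B : E → A} (hB : ContDiff ℝ 3 B) {r ρ : ℝ} (hρ : 0 ≤ ρ) (hr : r + ρ ^ 2 ≤ 2 * ρ) (hBr : ∀ x, ‖B x‖ ≤ r)
    {C : ℝ} (hC : ∀ z, ‖iteratedFDeriv ℝ 3 B z‖ ≤ C) {C1 C2 C3 : ℝ}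
    (h1 : ∀ k z, ‖iteratedFDeriv ℝ 1 (sqY B k) z‖ ≤ C1) (hh2 : ∀ k z, ‖iteratedFDeriv ℝ 2 (sqY B k) z‖ ≤ C2)
    (hC20 : 0 ≤ C3) (hC2 : C / 2 + 3 * (C1 * C2) + ρ * C3 ≤ C3) (k : ℕ) (z : E) :
    ‖iteratedFDeriv ℝ 3 (sqY B k) z‖ ≤ C3 := by
  induction k with
  | zero =>
    have : sqY B 0 = fun _ => (0:A) := rfl
    rw [this, iteratedFDeriv_const_of_ne (by norm_num)]; simpa using hC20
  | succ k ih =>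
    have h := sqY_iFD_succ hB k 3 (by norm_num) z
    have h0 := sqY_norm hρ hr hBr k z
    have h3 := hC z
    have h4 := h1 k z
    have h6 := hh2 k z
    have e1 : Nat.choose 3 1 = 3 := rfl
    have e2 : Nat.choose 3 2 = 3 := rfl
    simp only [Finset.sum_range_succ, Finset.sum_range_zero, norm_iteratedFDeriv_zero, Nat.choose_self, Nat.choose_zero_right, e1, e2,
      Nat.sub_self, Nat.sub_zero, Nat.reduceSub] at h
    push_cast at h
    have h2 : ‖sqY B k z‖ * ‖iteratedFDeriv ℝ 3 (sqY B k) z‖ ≤ ρ * C3 := by gcongr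
    have h5 : ‖iteratedFDeriv ℝ 1 (sqY B k) z‖ * ‖iteratedFDeriv ℝ 2 (sqY B k) z‖ ≤ C1 * C2 := by
      gcongr; exact (norm_nonneg _).trans h4
    nlinarith

theorem sqrt_approx (r C : ℝ) (hr0 : 0 ≤ r) (hr1 : r < 1) (hC : 0 ≤ C) : ∃ C' : ℝ, 0 ≤ C' ∧ ∀ (B : E → A), ContDiff ℝ 3 B →
    (∀ x, ‖B x‖ ≤ r) → (∀ i, 1 ≤ i → i ≤ 2 → ∀ z, ‖iteratedFDeriv ℝ i B z‖ ≤ C) → (∃ C3, ∀ z, ‖iteratedFDeriv ℝ 3 B z‖ ≤ C3) →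
    ∀ δ > 0, ∃ k, (∀ x, ‖sqY B k x‖ ≤ 1) ∧ (∀ i, 1 ≤ i → i ≤ 2 → ∀ z, ‖iteratedFDeriv ℝ i (sqY B k) z‖ ≤ C') ∧
      (∃ C3, ∀ z, ‖iteratedFDeriv ℝ 3 (sqY B k) z‖ ≤ C3) ∧
      ∀ x, ‖(1 - sqY B k x) * (1 - sqY B k x) - (1 - B x)‖ ≤ δ := by
  set ρ := 1 - √(1 - r) with hρd
  have hs : √(1 - r) ^ 2 = 1 - r := Real.sq_sqrt (by linarith)
  have hs0 : 0 < √(1 - r) := Real.sqrt_pos.2 (by linarith)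
  have hs1 : √(1 - r) ≤ 1 := by nlinarith
  have hρ : 0 ≤ ρ := by linarith
  have hρ1 : ρ < 1 := by linarith
  have hr : r + ρ ^ 2 ≤ 2 * ρ := by rw [hρd]; nlinarith
  have hq : 0 < 1 - ρ := by linarith
  set C1 := C / 2 / (1 - ρ) with hC1
  set C2 := (C / 2 + C1 ^ 2) / (1 - ρ) with hC2
  have hC10 : 0 ≤ C1 := by positivity
  have hC20 : 0 ≤ C2 := by positivity
  have e1 : C / 2 + ρ * C1 ≤ C1 := by
    have : C1 * (1 - ρ) = C / 2 := by rw [hC1]; field_simp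
    linarith
  have e2 : C / 2 + C1 ^ 2 + ρ * C2 ≤ C2 := by
    have : C2 * (1 - ρ) = C / 2 + C1 ^ 2 := by rw [hC2]; field_simp
    linarith
  refine ⟨C1 + C2, by positivity, ?_⟩
  rintro B hB hBr hBd ⟨C3, h3⟩ δ hδ
  obtain ⟨k, hk⟩ := exists_pow_lt_of_lt_one (show 0 < δ / 2 by positivity) hρ1
  have hd1 := sqY_D1 hB hρ hr hBr (hBd 1 le_rfl (by norm_num)) hC10 e1
  have hd2 := sqY_D2 hB hρ hr hBr (hBd 2 (by norm_num) le_rfl) hd1 hC20 e2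
  have hC30 : 0 ≤ C3 := (norm_nonneg _).trans (h3 0)
  refine ⟨k, fun x => (sqY_norm hρ hr hBr k x).trans hρ1.le, ?_, ⟨(C3 / 2 + 3 * (C1 * C2)) / (1 - ρ), ?_⟩, ?_⟩
  · intro i h1 h2 z
    interval_cases i
    · exact (hd1 k z).trans (by linarith)
    · exact (hd2 k z).trans (by linarith)
  · refine sqY_D3 hB hρ hr hBr h3 hd1 hd2 (by positivity) ?_ k
    have : (C3 / 2 + 3 * (C1 * C2)) / (1 - ρ) * (1 - ρ) = (C3 / 2 + 3 * (C1 * C2)) := by field_simp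
    linarith
  · intro x
    rw [sqY_sq, norm_smul]
    have := sqY_diff hρ hρ1 hr hBr k x
    norm_num
    linarith

end PD2

section PD3

variable {E : Type*} [NormedAddCommGroup E] [InnerProductSpace ℝ E]

theorem bilin_le_of_diag (S : E →L[ℝ] E →L[ℝ] ℝ) (hS : ∀ x y, S x y = S y x) {K : ℝ}
    (h : ∀ x, |S x x| ≤ K * ‖x‖ ^ 2) (x y : E) : |S x y| ≤ K * ‖x‖ * ‖y‖ := by
  have h4 : ∀ x y, |4 * S x y| ≤ 2 * K * (‖x‖ ^ 2 + ‖y‖ ^ 2) := by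
    intro x y
    have e : 4 * S x y = S (x + y) (x + y) - S (x - y) (x - y) := by
      simp only [map_add, map_sub, add_apply, sub_apply, hS y x]; ring
    rw [e]
    have h1 := h (x + y)
    have h2 := h (x - y)
    have h3 := parallelogram_law_with_norm ℝ x y
    have := abs_sub (S (x + y) (x + y)) (S (x - y) (x - y))
    have h6 : K * (‖x + y‖ ^ 2 + ‖x - y‖ ^ 2) = 2 * K * (‖x‖ ^ 2 + ‖y‖ ^ 2) := by rw [h3]; ring
    linarith
  rcases eq_or_ne x 0 with rfl | hx
  · simp
  rcases eq_or_ne y 0 with rfl | hy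
  · simp
  have hx' : 0 < ‖x‖ := norm_pos_iff.2 hx
  have hy' : 0 < ‖y‖ := norm_pos_iff.2 hy
  have h5 := h4 (‖y‖ • x) (‖x‖ • y)
  simp only [map_smul, smul_apply, smul_eq_mul, norm_smul, norm_norm] at h5
  rw [abs_mul, abs_mul, abs_mul, abs_of_pos hx', abs_of_pos hy'] at h5
  norm_num at h5
  have : (‖x‖ * ‖y‖) * |S x y| ≤ (‖x‖ * ‖y‖) * (K * ‖x‖ * ‖y‖) := by nlinarith
  exact le_of_mul_le_mul_left this (by positivity)

theorem quad_jets (x v w : E) : iteratedDeriv 1 (fun t : ℝ => x + t • v + t ^ 2 • w) 0 = v ∧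
    iteratedDeriv 2 (fun t : ℝ => x + t • v + t ^ 2 • w) 0 = (2 : ℝ) • w := by
  have h1 : deriv (fun t : ℝ => x + t • v + t ^ 2 • w) = fun t => v + (2 * t) • w := funext fun t => (quad_hasDerivAt x v w t).deriv
  have h2 : deriv (fun t : ℝ => v + (2 * t) • w) = fun t => (2 : ℝ) • w := funext fun t => (quad_hasDerivAt' v w t).deriv
  rw [iteratedDeriv_one, iteratedDeriv_succ, iteratedDeriv_one, h1, h2]
  simp

theorem JB_derivs {M : ℝ} {u : E → ℝ} (hM : 0 ≤ M) (hu : ContDiff ℝ 2 u) (h : JB 2 M u) (x : E) :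
    (∀ v, |fderiv ℝ u x v| ≤ 4 * M * ‖v‖) ∧ (∀ v w, |fderiv ℝ (fderiv ℝ u) x v w| ≤ 4 * M * ‖v‖ * ‖w‖) := by
  have key : ∀ v w : E, ∀ R, 0 ≤ R → ‖v‖ ≤ R → ‖(2 : ℝ) • w‖ ≤ R ^ 2 → |fderiv ℝ (fderiv ℝ u) x v v + 2 * fderiv ℝ u x w| ≤ 4 * M * R ^ 2 := by
    intro v w R hR hv hw
    have h1 := h (fun t : ℝ => x + t • v + t ^ 2 • w) (by fun_prop)
    rw [second_deriv_curve hu] at h1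
    have h2 := jetD_le 2 (by norm_num) (fun t : ℝ => x + t • v + t ^ 2 • w) R hR (by
      intro i h1 h2
      interval_cases i
      · rw [(quad_jets x v w).1]; simpa using hv
      · rw [(quad_jets x v w).2]; exact hw)
    refine h1.trans ?_
    have h3 := pow_le_pow_left₀ (jetD_nonneg _ _) h2 2
    calc _ ≤ M * ((2 : ℕ) * R) ^ 2 := by gcongr
      _ = _ := by push_cast; ring
  constructor
  · intro v
    have h1 := key 0 v (√(2 * ‖v‖)) (Real.sqrt_nonneg _) (by simp) (by
      rw [Real.sq_sqrt (by positivity), norm_smul]; norm_num)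
    rw [Real.sq_sqrt (by positivity)] at h1
    simp only [map_zero, zero_add, abs_mul] at h1
    norm_num at h1
    linarith
  · refine bilin_le_of_diag _ (fun v w => ?_) fun v => ?_
    · have hs := (hu.contDiffAt (x := x)).isSymmSndFDerivAt (by simp)
      exact hs v w
    · have h1 := key v 0 ‖v‖ (norm_nonneg _) le_rfl (by simp)
      simpa using h1

theorem iFD_affine {F G : Type*} [NormedAddCommGroup F] [NormedSpace ℝ F] [NormedAddCommGroup G] [NormedSpace ℝ G]
    {Y : G → F} {i : ℕ} (hi : 1 ≤ i) (hY : ContDiff ℝ i Y) (c0 : F) (c : ℝ) (z : G) :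
    ‖iteratedFDeriv ℝ i (fun x => c0 + c • Y x) z‖ = |c| * ‖iteratedFDeriv ℝ i Y z‖ := by
  have h1 : ContDiff ℝ i fun x => c • Y x := contDiff_const.smul hY
  have e : iteratedFDeriv ℝ i (fun x => c0 + c • Y x) z = iteratedFDeriv ℝ i (fun _ => c0) z + iteratedFDeriv ℝ i (fun x => c • Y x) z :=
    iteratedFDeriv_add_apply (f := fun _ => c0) contDiff_const.contDiffAt h1.contDiffAt
  rw [e, iteratedFDeriv_const_of_ne (by omega), iteratedFDeriv_const_smul_apply' hY.contDiffAt]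
  simp [norm_smul]

theorem sum_sq_symm {κ : Type*} [Fintype κ] (e : OrthonormalBasis κ ℝ E) (S : E →L[ℝ] E →L[ℝ] ℝ) (T : E →L[ℝ] E)
    (hT : ∀ x y, inner ℝ (T x) y = inner ℝ x (T y)) : ∑ k, S (T (e k)) (T (e k)) = ∑ k, S (T (T (e k))) (e k) := by
  have h1 : ∀ k, S (T (e k)) (T (e k)) = ∑ l, inner ℝ (e l) (T (e k)) * S (T (e k)) (e l) := by
    intro k
    conv_lhs => rw [← e.sum_repr' (T (e k))]
    rw [e.sum_repr']
    nth_rewrite 2 [← e.sum_repr' (T (e k))]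
    rw [map_sum]
    simp
  have h2 : ∀ l, S (T (T (e l))) (e l) = ∑ k, inner ℝ (e k) (T (e l)) * S (T (e k)) (e l) := by
    intro l
    conv_lhs => rw [← e.sum_repr' (T (e l))]
    simp [map_sum]
  simp_rw [h1, h2]
  rw [Finset.sum_comm]
  refine Finset.sum_congr rfl fun l _ => Finset.sum_congr rfl fun k _ => ?_
  rw [← hT, real_inner_comm]

theorem opNorm_of_quad (B : E →L[ℝ] E) (hB : ∀ x y, inner ℝ (B x) y = inner ℝ x (B y)) {r : ℝ} (hr : 0 ≤ r)
    (h : ∀ x, |inner ℝ (B x) x| ≤ r * ‖x‖ ^ 2) : ‖B‖ ≤ r := by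
  refine B.opNorm_le_bound hr fun x => ?_
  have h1 := bilin_le_of_diag ((innerSL ℝ).comp B) (fun x y => by
    simp only [ContinuousLinearMap.comp_apply, innerSL_apply_apply]; rw [hB, real_inner_comm]) (K := r) (by simpa using h) x (B x)
  simp only [ContinuousLinearMap.comp_apply, innerSL_apply_apply, real_inner_self_eq_norm_sq] at h1
  rw [abs_of_nonneg (by positivity)] at h1
  rcases (norm_nonneg (B x)).eq_or_lt with h2 | h2
  · rw [← h2]; positivity
  · nlinarith

end PD3

section PD4

variable {E : Type*} [NormedAddCommGroup E] [InnerProductSpace ℝ E] {κ : Type*} [Fintype κ]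

theorem genC_coupP [Nonempty κ] (e : OrthonormalBasis κ ℝ E) (s c : ℝ) (T : E → E →L[ℝ] E) (F : E → E) (u : E → ℝ) (hu : ContDiff ℝ 2 u) (x : E)
    (hT : ∀ v w, inner ℝ (T x v) w = inner ℝ v (T x w)) :
    genC (coupP e s (fun z => c • T z)) (fun z => (Fintype.card (κ ⊕ κ) : ℝ)⁻¹ • F z) u x =
      fderiv ℝ u x (F x) + ∑ k, fderiv ℝ (fderiv ℝ u) x (((s ^ 2 / 2) • (1 : E →L[ℝ] E) + (c ^ 2 / 2) • (T x * T x)) (e k)) (e k) := by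
  have hN : (Fintype.card (κ ⊕ κ) : ℝ) ≠ 0 := by exact_mod_cast Fintype.card_ne_zero
  unfold genC
  simp_rw [second_deriv_curve hu]
  rw [Finset.sum_add_distrib, Finset.sum_const, Finset.card_univ, Fintype.sum_sum_type, nsmul_eq_mul]
  simp only [coupP, map_smul, smul_apply, smul_eq_mul, map_add, add_apply, mul_apply_eq_comp, one_apply_eq_self]
  have h1 := sum_sq_symm e (fderiv ℝ (fderiv ℝ u) x) (T x) hT
  rw [Finset.sum_add_distrib, ← Finset.mul_sum, ← Finset.mul_sum, ← Finset.mul_sum, ← Finset.mul_sum, ← Finset.mul_sum, ← Finset.mul_sum, ← h1]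
  field_simp
  ring

set_option maxHeartbeats 1000000 in
theorem key_E [Nonempty κ] [FiniteDimensional ℝ E] [MeasurableSpace E] [BorelSpace E] (e : OrthonormalBasis κ ℝ E)
    (f : E → E) (A : E → E →L[ℝ] E) (C β C0 lm lp : ℝ) (hC : 0 ≤ C) (hβ : 0 < β) (hC0 : 0 ≤ C0) (hlm : 0 < lm) (hlp : lm ≤ lp)
    (hf : ContDiff ℝ 2 f) (hA : ContDiff ℝ 2 A) (hfg : ∀ x, ‖f x‖ ≤ C * (1 + ‖x‖))
    (hfd : ∀ i, 1 ≤ i → i ≤ 2 → ∀ z, ‖iteratedFDeriv ℝ i f z‖ ≤ C)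
    (hAd : ∀ i, 1 ≤ i → i ≤ 2 → ∀ z, ‖iteratedFDeriv ℝ i A z‖ ≤ C)
    (hAs : ∀ x v w, inner ℝ (A x v) w = inner ℝ v (A x w))
    (hAl : ∀ x v, lm * ‖v‖ ^ 2 ≤ inner ℝ (A x v) v) (hAu : ∀ x v, inner ℝ (A x v) v ≤ lp * ‖v‖ ^ 2)
    (hdis : ∀ x, inner ℝ x (f x) ≤ -β * ‖x‖ ^ 2 + C0)
    (B M2 M3 ε : ℝ) (hε : 0 < ε)
    (hB : 0 ≤ B) (hM2 : 0 ≤ M2) (hM3 : 0 ≤ M3) (φ : E → ℝ) (hφ : ContDiff ℝ 3 φ) (hφB : ∀ x, |φ x| ≤ B)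
    (hJ2 : JB 2 M2 φ) (hJ3 : JB 3 M3 φ) :
    ∃ (u : E → ℝ) (c U : ℝ), ContDiff ℝ 2 u ∧ (∀ x, |u x| ≤ U) ∧ (∀ x v, |fderiv ℝ u x v| ≤ U * ‖v‖) ∧
      (∀ x v w, |fderiv ℝ (fderiv ℝ u) x v w| ≤ U * ‖v‖ * ‖w‖) ∧
      ∀ x, |fderiv ℝ u x (f x) + ∑ k, fderiv ℝ (fderiv ℝ u) x (A x (e k)) (e k) - c + φ x| ≤ ε * lyapV x := by
  have hlp0 : 0 < lp := hlm.trans_le hlp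
  set l0 := lm / 2 with hl0
  have hl0p : 0 < l0 := by positivity
  set r := 1 - l0 / lp with hr
  have hq : l0 / lp * lp = l0 := by field_simp
  have hq1 : l0 / lp ≤ 1 := by rw [div_le_one hlp0]; linarith
  have hr1 : r < 1 := by have : 0 < l0 / lp := by positivity
                         linarith
  have hr0 : 0 ≤ r := by linarith
  set N : ℝ := (Fintype.card (κ ⊕ κ) : ℝ) with hN
  have hN1 : 1 ≤ N := by rw [hN]; exact_mod_cast Fintype.card_pos
  set B0 : E → E →L[ℝ] E := fun x => ((1 + l0 / lp) • (1 : E →L[ℝ] E)) + (-(1 / lp)) • A x with hB0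
  have hB0c : ContDiff ℝ 2 B0 := contDiff_const.add (hA.const_smul _)
  set CB := C / lp with hCB
  have hCB0 : 0 ≤ CB := by positivity
  have hB0d : ∀ i, 1 ≤ i → i ≤ 2 → ∀ z, ‖iteratedFDeriv ℝ i B0 z‖ ≤ CB := by
    intro i h1 h2 z
    rw [hB0, iFD_affine h1 (hA.of_le (by exact_mod_cast h2)), abs_neg, abs_of_pos (by positivity)]
    calc _ ≤ 1 / lp * C := by gcongr; exact hAd i h1 h2 z
      _ = _ := by rw [hCB]; ring
  have hB0in : ∀ x v w, inner ℝ (B0 x v) w = (1 + l0 / lp) * inner ℝ v w - 1 / lp * inner ℝ (A x v) w := by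
    intro x v w
    simp only [hB0, add_apply, smul_apply, one_apply_eq_self, inner_add_left, real_inner_smul_left]
    ring
  have hB0s : ∀ x v w, inner ℝ (B0 x v) w = inner ℝ v (B0 x w) := by
    intro x v w
    rw [hB0in, real_inner_comm (B0 x w) v, hB0in, real_inner_comm v w, hAs x v w, real_inner_comm (A x w) v]
  have hB0n : ∀ x, ‖B0 x‖ ≤ r := by
    intro x
    refine opNorm_of_quad _ (hB0s x) hr0 fun v => ?_
    rw [hB0in, real_inner_self_eq_norm_sq]
    have h1 := hAl x v
    have h2 := hAu x v
    have e1 : 1 / lp * (lm * ‖v‖ ^ 2) = 2 * (l0 / lp) * ‖v‖ ^ 2 := by rw [hl0]; field_simp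
    have e2 : 1 / lp * (lp * ‖v‖ ^ 2) = ‖v‖ ^ 2 := by field_simp
    have h3 := mul_le_mul_of_nonneg_left h1 (show 0 ≤ 1 / lp by positivity)
    have h4 := mul_le_mul_of_nonneg_left h2 (show 0 ≤ 1 / lp by positivity)
    rw [e1] at h3; rw [e2] at h4
    have h5 : 0 ≤ l0 / lp * ‖v‖ ^ 2 := by positivity
    have h6 : 0 ≤ r * ‖v‖ ^ 2 := by positivity
    rw [abs_le]
    constructor <;> rw [hr] <;> rw [hr] at h6 <;> nlinarith
  obtain ⟨C', hC', hsq⟩ := sqrt_approx (E := E) (A := E →L[ℝ] E) r CB hr0 hr1 hCB0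
  set s := √(2 * l0) with hs
  set cc := √(2 * lp) with hcc
  have hs2 : s ^ 2 / 2 = l0 := by rw [hs, Real.sq_sqrt (by positivity)]; ring
  have hcc2 : cc ^ 2 / 2 = lp := by rw [hcc, Real.sq_sqrt (by positivity)]; ring
  have hcc0 : 0 ≤ cc := Real.sqrt_nonneg _
  have hs0 : 0 < s := Real.sqrt_pos.2 (by positivity)
  set Cp := 2 * C + 2 * cc + cc * C' with hCp
  obtain ⟨M, hM, hpo⟩ := poisson_approx_smooth e s Cp (β / 2) (C0 + C ^ 2 / (2 * β)) B M2 M3 (ε / 2) hs0 (by positivity)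
    (by positivity) (by positivity) (by positivity) hB hM2 hM3 φ hφ hφB hJ2 hJ3
  set Q := 4 * M * C + Fintype.card κ * (4 * M * (lp * (1 + CB))) with hQ
  have hQ0 : 0 ≤ Q := by positivity
  set δ := min 1 (ε / (2 * (Q + 1))) with hδd
  have hδ : 0 < δ := by positivity
  have hδ1 : δ ≤ 1 := min_le_left _ _
  have hδQ : Q * δ ≤ ε / 2 := by
    have h1 : δ ≤ ε / (2 * (Q + 1)) := min_le_right _ _
    calc Q * δ ≤ (Q + 1) * (ε / (2 * (Q + 1))) := by gcongr; linarith
      _ = ε / 2 := by field_simp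
  obtain ⟨ft, hft, hftc, hftd, ⟨f3, hft3⟩, -, -⟩ := mollify f hf C (hfd 1 le_rfl (by norm_num)) (hfd 2 (by norm_num) le_rfl) δ hδ
  obtain ⟨Bt, hBt, hBtc, hBtd, hBt3, hBtn, hBtL⟩ := mollify B0 hB0c CB (hB0d 1 le_rfl (by norm_num)) (hB0d 2 (by norm_num) le_rfl) δ hδ
  have hBts : ∀ x, IsSelfAdjoint (Bt x) := by
    intro x
    have key : ∀ v w, inner ℝ (Bt x v) w - inner ℝ (Bt x w) v ≤ 0 := by
      intro v w
      let L : (E →L[ℝ] E) →L[ℝ] ℝ := (innerSL ℝ w).comp (ContinuousLinearMap.apply ℝ E v) - (innerSL ℝ v).comp (ContinuousLinearMap.apply ℝ E w)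
      have hL : ∀ T, L T = inner ℝ (T v) w - inner ℝ (T w) v := by
        intro T
        simp [L, real_inner_comm]
      have := hBtL L 0 (fun z => by
        rw [hL, hB0s z v w, real_inner_comm v]; simp) x
      rwa [hL] at this
    rw [ContinuousLinearMap.isSelfAdjoint_iff_isSymmetric]
    intro v w
    have h1 := key v w
    have h2 := key w v
    have h3 := real_inner_comm v (Bt x w)
    show inner ℝ (Bt x v) w = inner ℝ v (Bt x w)
    linarith
  obtain ⟨k, hY1, hYd, ⟨y3, hY3⟩, hYe⟩ := hsq Bt hBt (hBtn r hB0n) hBtd hBt3 δ hδ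
  have hYc := sqY_contDiff hBt k
  have hYs := fun x => sqY_star (A := E →L[ℝ] E) (B := Bt) hBts k x
  set Y := sqY Bt k with hY
  set T : E → E →L[ℝ] E := fun x => 1 - Y x with hT
  have hTs : ∀ x v w, inner ℝ (T x v) w = inner ℝ v (T x w) := by
    intro x v w
    have := (ContinuousLinearMap.isSelfAdjoint_iff_isSymmetric.1 ((IsSelfAdjoint.one (E →L[ℝ] E)).sub (hYs x))) v w
    exact this
  have hTn : ∀ x, ‖T x‖ ≤ 2 := by
    intro x
    have h1 := norm_sub_le (1 : E →L[ℝ] E) (Y x)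
    have h2 : ‖(1 : E →L[ℝ] E)‖ ≤ 1 := ContinuousLinearMap.norm_id_le
    have h3 := hY1 x
    exact h1.trans (by linarith)
  have hXe : (fun x => cc • T x) = fun x => cc • (1 : E →L[ℝ] E) + (-cc) • Y x := by
    ext1 x; rw [hT, neg_smul, ← sub_eq_add_neg, ← smul_sub]
  have hXd : ∀ i, 1 ≤ i → i ≤ 3 → ∀ z, ‖iteratedFDeriv ℝ i (fun x => cc • T x) z‖ = cc * ‖iteratedFDeriv ℝ i Y z‖ := by
    intro i h1 h3 z
    rw [hXe, iFD_affine h1 (hYc.of_le (by exact_mod_cast h3)), abs_neg, abs_of_nonneg hcc0]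
  have hbd : ∀ i, 1 ≤ i → i ≤ 3 → ∀ z, ‖iteratedFDeriv ℝ i (fun z => N⁻¹ • ft z) z‖ ≤ ‖iteratedFDeriv ℝ i ft z‖ := by
    intro i h1 h3 z
    rw [iteratedFDeriv_const_smul_apply' (hft.of_le (by exact_mod_cast h3)).contDiffAt, norm_smul, Real.norm_of_nonneg (by positivity)]
    exact mul_le_of_le_one_left (norm_nonneg _) (inv_le_one_of_one_le₀ hN1)
  have hftg : ∀ x, ‖ft x‖ ≤ 2 * C * (1 + ‖x‖) := by
    intro x
    have h1 := norm_le_norm_add_norm_sub' (ft x) (f x)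
    have h2 := hftc x
    have h3 := hfg x
    have h4 : C * δ ≤ C * 1 := by gcongr
    nlinarith [norm_nonneg x]
  obtain ⟨u, c, hu3, ⟨U, hU⟩, huJ, hueq⟩ := hpo (fun x => cc • T x) (fun z => N⁻¹ • ft z)
    ((contDiff_const.sub hYc).const_smul cc) (hft.const_smul _) (by
      intro x
      rw [norm_smul, Real.norm_of_nonneg hcc0]
      have := hTn x
      have h2 : 0 ≤ cc * C' := by positivity
      nlinarith) (by
      intro x
      rw [norm_smul, Real.norm_of_nonneg (by positivity)]
      calc _ ≤ ‖ft x‖ := mul_le_of_le_one_left (norm_nonneg _) (inv_le_one_of_one_le₀ hN1)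
        _ ≤ 2 * C * (1 + ‖x‖) := hftg x
        _ ≤ _ := by
          have : 2 * C ≤ Cp := by rw [hCp]; have : 0 ≤ cc * C' := by positivity
                                  linarith
          gcongr) (by
      intro i h1 h2 z
      rw [hXd i h1 (by omega)]
      have := mul_le_mul_of_nonneg_left (hYd i h1 h2 z) hcc0
      linarith) (by
      intro i h1 h2 z
      refine (hbd i h1 (by omega) z).trans ((hftd i h1 h2 z).trans ?_)
      have : 0 ≤ cc * C' := by positivity
      linarith)
    ⟨max (cc * y3) f3, fun z => by
        rw [hXd 3 (by norm_num) le_rfl]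
        exact (mul_le_mul_of_nonneg_left (hY3 z) hcc0).trans (le_max_left _ _),
      fun z => (hbd 3 (by norm_num) le_rfl z).trans ((hft3 z).trans (le_max_right _ _))⟩ (by
      intro x
      rw [real_inner_smul_right]
      have e1 : N * (N⁻¹ * inner ℝ x (ft x)) = inner ℝ x (f x) + inner ℝ x (ft x - f x) := by
        rw [inner_sub_right]; field_simp; ring
      rw [e1]
      have h1 := real_inner_le_norm x (ft x - f x)
      have h2 := hftc x
      have h3 := hdis x
      have h4 : ‖x‖ * ‖ft x - f x‖ ≤ ‖x‖ * C := by gcongr; exact h2.trans (mul_le_of_le_one_right hC hδ1)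
      have h5 : ‖x‖ * C ≤ β / 2 * ‖x‖ ^ 2 + C ^ 2 / (2 * β) := by
        have : β / 2 * ‖x‖ ^ 2 + C ^ 2 / (2 * β) - ‖x‖ * C = (β * ‖x‖ - C) ^ 2 / (2 * β) := by field_simp; ring
        have h6 : 0 ≤ (β * ‖x‖ - C) ^ 2 / (2 * β) := by positivity
        linarith
      linarith)
  have hu2 : ContDiff ℝ 2 u := hu3.of_le (by norm_num)
  have hder := JB_derivs hM hu2 huJ
  have hUm : ∀ x, |u x| ≤ max U (4 * M) := fun x => (hU x).trans (le_max_left _ _)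
  refine ⟨u, c, max U (4 * M), hu2, hUm, fun x v => ((hder x).1 v).trans ?_, fun x v w => ((hder x).2 v w).trans ?_, ?_⟩
  · gcongr; exact le_max_right _ _
  · gcongr; exact le_max_right _ _
  intro x
  have h1 := hueq x
  rw [genC_coupP e s cc T ft u hu2 x (hTs x), hs2, hcc2] at h1
  have hV := one_le_lyapV x
  have hR : ‖l0 • (1 : E →L[ℝ] E) + lp • (T x * T x) - A x‖ ≤ lp * (1 + CB) * δ := by
    have e1 : l0 • (1 : E →L[ℝ] E) + lp • (T x * T x) - A x = lp • ((T x * T x - (1 - Bt x)) - (Bt x - B0 x)) := by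
      have : A x = (lp + l0) • (1 : E →L[ℝ] E) - lp • B0 x := by
        simp only [hB0, smul_add, smul_smul]
        have e3 : lp * (1 + l0 / lp) = lp + l0 := by field_simp
        have e4 : lp * -(1 / lp) = -1 := by field_simp
        rw [e3, e4, neg_one_smul]; abel
      rw [this, add_smul, smul_sub, smul_sub, smul_sub, smul_sub]
      abel
    rw [e1, norm_smul, Real.norm_of_nonneg hlp0.le]
    have h2 := norm_sub_le (T x * T x - (1 - Bt x)) (Bt x - B0 x)
    have h3 := hYe x
    have h4 := hBtc x
    have h5 : ‖T x * T x - (1 - Bt x)‖ ≤ δ := h3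
    rw [mul_assoc]
    refine mul_le_mul_of_nonneg_left ?_ hlp0.le
    linarith
  set S := fderiv ℝ (fderiv ℝ u) x with hS
  have e3 : fderiv ℝ u x (f x) + ∑ k, S (A x (e k)) (e k) - c + φ x =
     (fderiv ℝ u x (ft x) + ∑ k, S ((l0 • (1 : E →L[ℝ] E) + lp • (T x * T x)) (e k)) (e k) - c + φ x)
       - fderiv ℝ u x (ft x - f x) - ∑ k, S ((l0 • (1 : E →L[ℝ] E) + lp • (T x * T x) - A x) (e k)) (e k) := by
    have : ∑ k, S ((l0 • (1 : E →L[ℝ] E) + lp • (T x * T x) - A x) (e k)) (e k) =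
       ∑ k, S ((l0 • (1 : E →L[ℝ] E) + lp • (T x * T x)) (e k)) (e k) - ∑ k, S (A x (e k)) (e k) := by
      rw [← Finset.sum_sub_distrib]
      refine Finset.sum_congr rfl fun k _ => ?_
      rw [sub_apply (l0 • (1 : E →L[ℝ] E) + lp • (T x * T x)), map_sub, sub_apply]
    rw [this, map_sub]; ring
  have h6 : |fderiv ℝ u x (ft x - f x)| ≤ 4 * M * (C * δ) := ((hder x).1 _).trans (by gcongr; exact hftc x)
  have h7 : |∑ k, S ((l0 • (1 : E →L[ℝ] E) + lp • (T x * T x) - A x) (e k)) (e k)| ≤ Fintype.card κ * (4 * M * (lp * (1 + CB) * δ)) := by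
    refine (Finset.abs_sum_le_sum_abs _ _).trans ?_
    calc _ ≤ ∑ k : κ, 4 * M * (lp * (1 + CB) * δ) := by
          refine Finset.sum_le_sum fun k _ => ((hder x).2 _ _).trans ?_
          rw [e.norm_eq_one, mul_one]
          have := (l0 • (1 : E →L[ℝ] E) + lp • (T x * T x) - A x).le_opNorm (e k)
          rw [e.norm_eq_one, mul_one] at this
          exact mul_le_mul_of_nonneg_left (this.trans hR) (by positivity)
      _ = _ := by simp
  rw [e3]
  have h8 := abs_sub (fderiv ℝ u x (ft x) + ∑ k, S ((l0 • (1 : E →L[ℝ] E) + lp • (T x * T x)) (e k)) (e k) - c + φ x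
       - fderiv ℝ u x (ft x - f x)) (∑ k, S ((l0 • (1 : E →L[ℝ] E) + lp • (T x * T x) - A x) (e k)) (e k))
  have h9 := abs_sub (fderiv ℝ u x (ft x) + ∑ k, S ((l0 • (1 : E →L[ℝ] E) + lp • (T x * T x)) (e k)) (e k) - c + φ x)
       (fderiv ℝ u x (ft x - f x))
  have h10 : Q * δ = 4 * M * (C * δ) + Fintype.card κ * (4 * M * (lp * (1 + CB) * δ)) := by rw [hQ]; ring
  have h11 : ε / 2 ≤ ε / 2 * lyapV x := le_mul_of_one_le_right (by positivity) hV
  linarith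

end PD4

section PE1

theorem iFD_comp_right_le {G E F : Type*} [NormedAddCommGroup G] [NormedSpace ℝ G] [NormedAddCommGroup E] [NormedSpace ℝ E]
    [NormedAddCommGroup F] [NormedSpace ℝ F] (Φ : G →L[ℝ] E) {g : E → F} {n : ℕ} (hg : ContDiff ℝ n g) {K : ℝ}
    (hK : ∀ z, ‖iteratedFDeriv ℝ n g z‖ ≤ K) (x : G) : ‖iteratedFDeriv ℝ n (fun z => g (Φ z)) x‖ ≤ K * ‖Φ‖ ^ n := by
  have h := Φ.iteratedFDeriv_comp_right hg x (i := n) le_rfl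
  have e : (fun z => g (Φ z)) = g ∘ Φ := rfl
  rw [e, h]
  refine (ContinuousMultilinearMap.norm_compContinuousLinearMap_le _ _).trans ?_
  rw [Finset.prod_const, Finset.card_univ, Fintype.card_fin]
  gcongr
  exact hK _

theorem iFD_sum_bound {G E F ι : Type*} [Fintype ι] [NormedAddCommGroup G] [NormedSpace ℝ G] [NormedAddCommGroup E] [NormedSpace ℝ E]
    [NormedAddCommGroup F] [NormedSpace ℝ F] (Φ : G →L[ℝ] E) (g : ι → E → ℝ) (w : ι → F) (hg : ∀ i, ContDiff ℝ 2 (g i)) (K : ℝ)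
    (hK : ∀ n, 1 ≤ n → n ≤ 2 → ∀ i z, ‖iteratedFDeriv ℝ n (g i) z‖ ≤ K) :
    ContDiff ℝ 2 (fun x => ∑ i, g i (Φ x) • w i) ∧ ∃ C, 0 ≤ C ∧ ∀ n, 1 ≤ n → n ≤ 2 → ∀ z,
      ‖iteratedFDeriv ℝ n (fun x => ∑ i, g i (Φ x) • w i) z‖ ≤ C := by
  have hgc : ∀ i, ContDiff ℝ 2 (fun x => g i (Φ x)) := fun i => (hg i).comp Φ.contDiff
  refine ⟨ContDiff.sum fun i _ => (hgc i).smul contDiff_const, ∑ i, |K| * (1 + ‖Φ‖) ^ 2 * ‖w i‖, by positivity, ?_⟩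
  intro n h1 h2 z
  have hgc' : ∀ i, ContDiff ℝ n (fun x => g i (Φ x)) := fun i => (hgc i).of_le (by exact_mod_cast h2)
  have e : iteratedFDeriv ℝ n (fun x => ∑ i, g i (Φ x) • w i) = ∑ i, iteratedFDeriv ℝ n (fun x => g i (Φ x) • w i) :=
    iteratedFDeriv_sum (f := fun i x => g i (Φ x) • w i) fun i _ => (hgc' i).smul contDiff_const
  rw [e, Finset.sum_apply]
  refine (norm_sum_le _ _).trans (Finset.sum_le_sum fun i _ => ?_)
  have h3 : ‖iteratedFDeriv ℝ n (fun x => g i (Φ x) • w i) z‖ ≤ ‖w i‖ * ‖iteratedFDeriv ℝ n (fun x => g i (Φ x)) z‖ := by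
    have h4 := (ContinuousLinearMap.toSpanSingleton ℝ (w i)).norm_iteratedFDeriv_comp_left (f := fun x => g i (Φ x)) (x := z)
      (hgc' i).contDiffAt (n := n) le_rfl
    rw [ContinuousLinearMap.norm_toSpanSingleton] at h4
    exact h4
  have h5 := iFD_comp_right_le Φ ((hg i).of_le (by exact_mod_cast h2)) (hK n h1 h2 i) z
  calc _ ≤ ‖w i‖ * (K * ‖Φ‖ ^ n) := h3.trans (by gcongr)
    _ ≤ ‖w i‖ * (|K| * (1 + ‖Φ‖) ^ 2) := by
      gcongr
      · exact le_abs_self K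
      · calc ‖Φ‖ ^ n ≤ (1 + ‖Φ‖) ^ n := by gcongr; linarith
          _ ≤ (1 + ‖Φ‖) ^ 2 := pow_le_pow_right₀ (by linarith [norm_nonneg Φ]) h2
    _ = _ := by ring

theorem JB_of_compact {E : Type*} [NormedAddCommGroup E] [InnerProductSpace ℝ E] (φ : E → ℝ) (hφ : ContDiff ℝ 3 φ)
    (hc : HasCompactSupport φ) : ∃ M, 0 ≤ M ∧ (∀ x, |φ x| ≤ M) ∧ JB 2 M φ ∧ JB 3 M φ := by
  obtain ⟨B, hB⟩ := hφ.continuous.bounded_above_of_compact_support hc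
  have h := fun n : ℕ => fun hn : n ≤ 3 => (hφ.continuous_iteratedFDeriv (m := n) (by exact_mod_cast hn)).bounded_above_of_compact_support (hc.iteratedFDeriv (𝕜 := ℝ) n)
  obtain ⟨K1, h1⟩ := h 1 (by norm_num)
  obtain ⟨K2, h2⟩ := h 2 (by norm_num)
  obtain ⟨K3, h3⟩ := h 3 (by norm_num)
  set K := |K1| + |K2| + |K3| with hK
  have hK0 : 0 ≤ K := by positivity
  have hd : ∀ i, 1 ≤ i → i ≤ 3 → ∀ z, ‖iteratedFDeriv ℝ i φ z‖ ≤ K := by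
    intro i h1' h2' z
    have a1 := abs_nonneg K1
    have a2 := abs_nonneg K2
    have a3 := abs_nonneg K3
    interval_cases i
    · exact (h1 z).trans (by linarith [le_abs_self K1])
    · exact (h2 z).trans (by linarith [le_abs_self K2])
    · exact (h3 z).trans (by linarith [le_abs_self K3])
  have hJ : ∀ n : ℕ, 1 ≤ n → n ≤ 3 → JB n (n.factorial * K) φ := by
    intro n hn1 hn γ hγ
    exact jet_comp_le n (hφ.of_le (by exact_mod_cast hn)) hγ hK0 (fun i a b z => hd i a (b.trans hn) z)
      (fun i a b => jet_le n γ i a b) n hn1 le_rfl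
  refine ⟨|B| + 6 * K, by positivity, fun x => (hB x).trans (by linarith [le_abs_self B]), ?_, ?_⟩
  · exact JB_mono (hJ 2 (by norm_num) (by norm_num)) (by norm_num [Nat.factorial]; linarith [abs_nonneg B])
  · exact JB_mono (hJ 3 (by norm_num) (by norm_num)) (by norm_num [Nat.factorial])

theorem key_pi {d : ℕ} (hd : 0 < d) (f : (Fin d → ℝ) → Fin d → ℝ) (a : (Fin d → ℝ) → Fin d → Fin d → ℝ)
    (has : ∀ y i j, a y i j = a y j i) (lm lp : ℝ) (hlm : 0 < lm) (hlp : lm ≤ lp)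
    (hell : ∀ y (ξ : Fin d → ℝ), lm * ∑ i, ξ i ^ 2 ≤ 2 * ∑ i, ∑ j, ξ i * a y i j * ξ j ∧
      2 * ∑ i, ∑ j, ξ i * a y i j * ξ j ≤ lp * ∑ i, ξ i ^ 2)
    (hac : ∀ i j, ContDiff ℝ 2 (fun y => a y i j)) (K : ℝ)
    (had : ∀ y i j, ‖iteratedFDeriv ℝ 1 (fun z => a z i j) y‖ ≤ K ∧ ‖iteratedFDeriv ℝ 2 (fun z => a z i j) y‖ ≤ K)
    (β C0 : ℝ) (hβ : 0 < β) (hC0 : 0 ≤ C0) (hdis : ∀ y, (∑ i, f y i * y i) ≤ -β * (∑ i, y i ^ 2) + C0)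
    (hfc : ∀ i, ContDiff ℝ 2 (fun y => f y i))
    (hfd : ∀ y i, ‖iteratedFDeriv ℝ 1 (fun z => f z i) y‖ ≤ K ∧ ‖iteratedFDeriv ℝ 2 (fun z => f z i) y‖ ≤ K)
    (φ : (Fin d → ℝ) → ℝ) (hφ : ContDiff ℝ 3 φ) (hφc : HasCompactSupport φ) (ε : ℝ) (hε : 0 < ε) :
    ∃ (u : (Fin d → ℝ) → ℝ) (c : ℝ), CbTwo u ∧ ∀ y, |genL f a u y - c + φ y| ≤ ε * (1 + ‖y‖ ^ 4) := by
  have : Nonempty (Fin d) := ⟨⟨0, hd⟩⟩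
  let Φ : EuclideanSpace ℝ (Fin d) ≃L[ℝ] (Fin d → ℝ) := PiLp.continuousLinearEquiv 2 ℝ (fun _ : Fin d => ℝ)
  let e : OrthonormalBasis (Fin d) ℝ (EuclideanSpace ℝ (Fin d)) := EuclideanSpace.basisFun (Fin d) ℝ
  have hΦ : ∀ (x : EuclideanSpace ℝ (Fin d)) i, Φ x i = x i := fun x i => rfl
  have hΦs : ∀ (x : Fin d → ℝ) i, Φ.symm x i = x i := fun x i => rfl
  have hei : ∀ i j, e i j = if j = i then 1 else 0 := by
    intro i j; rw [show e i = EuclideanSpace.single i 1 from EuclideanSpace.basisFun_apply (Fin d) ℝ i, PiLp.single_apply]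
  have hΦe : ∀ i, Φ.symm (Pi.single i 1) = e i := by
    intro i
    ext j
    rw [hΦs, hei, Pi.single_apply]
  have hin : ∀ x y : EuclideanSpace ℝ (Fin d), inner ℝ x y = ∑ i, x i * y i := by
    intro x y; rw [PiLp.inner_apply]; simp [mul_comm]
  have hno : ∀ x : EuclideanSpace ℝ (Fin d), ‖x‖ ^ 2 = ∑ i, x i ^ 2 := fun x => by
    rw [← real_inner_self_eq_norm_sq, hin]; simp [sq]
  let cm : Fin d × Fin d → EuclideanSpace ℝ (Fin d) →L[ℝ] EuclideanSpace ℝ (Fin d) := fun p => (ContinuousLinearMap.toSpanSingleton ℝ (e p.1)).comp (EuclideanSpace.proj p.2)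
  let fE : EuclideanSpace ℝ (Fin d) → EuclideanSpace ℝ (Fin d) := fun x => ∑ i, f (Φ x) i • e i
  let AE : EuclideanSpace ℝ (Fin d) → EuclideanSpace ℝ (Fin d) →L[ℝ] EuclideanSpace ℝ (Fin d) := fun x => ∑ p : Fin d × Fin d, a (Φ x) p.1 p.2 • cm p
  obtain ⟨hfE, Cf, hCf, hfEd⟩ := iFD_sum_bound (Φ : EuclideanSpace ℝ (Fin d) →L[ℝ] (Fin d → ℝ)) (fun i y => f y i) (fun i => e i) hfc K (by
    intro n h1 h2 i z
    interval_cases n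
    · exact (hfd z i).1
    · exact (hfd z i).2)
  obtain ⟨hAE, Ca, hCa, hAEd⟩ := iFD_sum_bound (Φ : EuclideanSpace ℝ (Fin d) →L[ℝ] (Fin d → ℝ)) (fun (p : Fin d × Fin d) y => a y p.1 p.2) cm (fun p => hac p.1 p.2) K (by
    intro n h1 h2 i z
    interval_cases n
    · exact (had z i.1 i.2).1
    · exact (had z i.1 i.2).2)
  have hfEi : ∀ x i, fE x i = f (Φ x) i := by
    intro x i
    simp [fE, hei]
  have hAEi : ∀ x v i, AE x v i = ∑ j, a (Φ x) i j * v j := by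
    intro x v i
    simp only [AE, cm, sum_apply, smul_apply, ContinuousLinearMap.comp_apply, ContinuousLinearMap.toSpanSingleton_apply,
      Fintype.sum_prod_type]
    simp [hei]
  have hAEin : ∀ x v w, inner ℝ (AE x v) w = ∑ i, ∑ j, w i * a (Φ x) i j * v j := by
    intro x v w
    rw [hin]
    refine Finset.sum_congr rfl fun i _ => ?_
    rw [hAEi, Finset.sum_mul]
    exact Finset.sum_congr rfl fun j _ => by ring
  let φE : EuclideanSpace ℝ (Fin d) → ℝ := fun x => φ (Φ x)
  have hφE : ContDiff ℝ 3 φE := hφ.comp Φ.contDiff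
  have hφEc : HasCompactSupport φE := hφc.comp_homeomorph Φ.toHomeomorph
  obtain ⟨M, hM, hφB, hJ2, hJ3⟩ := JB_of_compact φE hφE hφEc
  have hfEd1 := lip_of_iFD1 (hfE.of_le (by norm_num)) (hfEd 1 le_rfl (by norm_num))
  set C := Cf + Ca + ‖fE 0‖ with hC
  have hC' : 0 ≤ C := by positivity
  set D : ℝ := 2 * (1 + (d : ℝ) ^ 2) with hD
  have hD0 : 0 < D := by positivity
  obtain ⟨u, c, U, hu, hu0, hu1, hu2, hueq⟩ := key_E e fE AE C β C0 (lm / 2) (lp / 2) hC' hβ hC0 (by positivity) (by linarith)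
    hfE hAE (by
      intro x
      have h1 := hfEd1 x 0
      have h2 := norm_le_norm_add_norm_sub' (fE x) (fE 0)
      rw [sub_zero] at h1
      have h3 : ‖fE x - fE 0‖ ≤ Cf * ‖x‖ := h1
      have h4 := norm_nonneg (fE 0)
      nlinarith [norm_nonneg x])
    (fun n h1 h2 z => (hfEd n h1 h2 z).trans (by rw [hC]; linarith [norm_nonneg (fE 0)]))
    (fun n h1 h2 z => (hAEd n h1 h2 z).trans (by rw [hC]; linarith [norm_nonneg (fE 0)]))
    (by
      intro x v w
      rw [real_inner_comm (AE x w) v, hAEin, hAEin, Finset.sum_comm]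
      refine Finset.sum_congr rfl fun i _ => Finset.sum_congr rfl fun j _ => ?_
      rw [has]; ring)
    (by
      intro x v
      rw [hAEin, hno]
      have := (hell (Φ x) (Φ v)).1
      simp only [hΦ] at this
      linarith)
    (by
      intro x v
      rw [hAEin, hno]
      have := (hell (Φ x) (Φ v)).2
      simp only [hΦ] at this
      linarith)
    (by
      intro x
      rw [hin, hno]
      have := hdis (Φ x)
      simp only [hΦ] at this
      simp only [hfEi]
      refine le_trans (le_of_eq ?_) this
      exact Finset.sum_congr rfl fun i _ => mul_comm _ _)
    M M M (ε / D) (by positivity) hM hM hM φE hφE hφB hJ2 hJ3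
  have hU : 0 ≤ U := (abs_nonneg _).trans (hu0 0)
  have hup : ContDiff ℝ 2 (fun y => u (Φ.symm y)) := hu.comp Φ.symm.contDiff
  refine ⟨fun y => u (Φ.symm y), c, ⟨hup, ?_⟩, ?_⟩
  · have hd1 : ∀ z, ‖iteratedFDeriv ℝ 1 u z‖ ≤ U := by
      intro z
      rw [norm_iteratedFDeriv_one]
      exact ContinuousLinearMap.opNorm_le_bound _ hU (hu1 z)
    have hd2 : ∀ z, ‖iteratedFDeriv ℝ 2 u z‖ ≤ U := by
      intro z
      rw [← norm_iteratedFDeriv_fderiv, norm_iteratedFDeriv_one]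
      exact ContinuousLinearMap.opNorm_le_bound₂ _ hU (hu2 z)
    have b1 := iFD_comp_right_le (Φ.symm : (Fin d → ℝ) →L[ℝ] EuclideanSpace ℝ (Fin d)) (hu.of_le (by norm_num)) hd1
    have b2 := iFD_comp_right_le (Φ.symm : (Fin d → ℝ) →L[ℝ] EuclideanSpace ℝ (Fin d)) hu hd2
    set S := ‖(Φ.symm : (Fin d → ℝ) →L[ℝ] EuclideanSpace ℝ (Fin d))‖ with hS
    have hS0 : 0 ≤ S := norm_nonneg _
    have p1 : 0 ≤ U * S ^ 1 := by positivity
    have p2 : 0 ≤ U * S ^ 2 := by positivity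
    exact ⟨U + U * S ^ 1 + U * S ^ 2, fun y => ⟨(hu0 _).trans (by linarith), (b1 y).trans (by linarith), (b2 y).trans (by linarith)⟩⟩
  · intro y
    have hfd : ∀ z, fderiv ℝ (fun y => u (Φ.symm y)) z = (fderiv ℝ u (Φ.symm z)).comp (Φ.symm : (Fin d → ℝ) →L[ℝ] EuclideanSpace ℝ (Fin d)) := by
      intro z
      have h1 : HasFDerivAt u (fderiv ℝ u (Φ.symm z)) (Φ.symm z) := (hu.differentiable (by norm_num) _).hasFDerivAt
      exact (h1.comp z Φ.symm.hasFDerivAt).fderiv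
    have hp1 : ∀ i, pd1 (fun y => u (Φ.symm y)) y i = fderiv ℝ u (Φ.symm y) (e i) := by
      intro i
      rw [pd1, hfd, ContinuousLinearMap.comp_apply, ← hΦe]; rfl
    have hp2 : ∀ i j, pd2 (fun y => u (Φ.symm y)) y i j = fderiv ℝ (fderiv ℝ u) (Φ.symm y) (e i) (e j) := by
      intro i j
      rw [pd2]
      have e1 : (fun z => fderiv ℝ (fun y => u (Φ.symm y)) z (Pi.single j 1)) = fun z => fderiv ℝ u (Φ.symm z) (e j) := by
        ext z
        rw [hfd, ContinuousLinearMap.comp_apply, ← hΦe]; rfl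
      rw [e1]
      have hdu : ContDiff ℝ 1 (fderiv ℝ u) := hu.fderiv_right (by norm_num)
      have h1 : HasFDerivAt (fderiv ℝ u) (fderiv ℝ (fderiv ℝ u) (Φ.symm y)) (Φ.symm y) := (hdu.differentiable (by norm_num) _).hasFDerivAt
      have h2 := (h1.comp y Φ.symm.hasFDerivAt).clm_apply (hasFDerivAt_const (e j) y)
      have h3 := h2.fderiv
      have e2 : (fun z => fderiv ℝ u (Φ.symm z) (e j)) = fun z => (fderiv ℝ u ∘ Φ.symm) z (e j) := rfl
      rw [e2, h3, ← hΦe, ← hΦe]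
      simp
    have hx := hueq (Φ.symm y)
    have hfe : fE (Φ.symm y) = ∑ i, f y i • e i := by simp [fE]
    have hae : ∀ k, AE (Φ.symm y) (e k) = ∑ i, a y i k • e i := by
      intro k
      ext i
      rw [hAEi]
      simp [hei]
    have hg : genL f a (fun y => u (Φ.symm y)) y = fderiv ℝ u (Φ.symm y) (fE (Φ.symm y)) +
        ∑ k, fderiv ℝ (fderiv ℝ u) (Φ.symm y) (AE (Φ.symm y) (e k)) (e k) := by
      rw [genL, hfe]
      simp only [hae, hp1, hp2, map_sum, map_smul, sum_apply, smul_apply, smul_eq_mul]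
      congr 1
      exact Finset.sum_comm
    rw [hg]
    have e3 : φE (Φ.symm y) = φ y := by simp [φE]
    rw [e3] at hx
    refine hx.trans ?_
    have hV : lyapV (Φ.symm y) ≤ D * (1 + ‖y‖ ^ 4) := by
      rw [lyapV, hno]
      have h1 : ∑ i, (Φ.symm y) i ^ 2 ≤ d * ‖y‖ ^ 2 := by
        calc _ ≤ ∑ i : Fin d, ‖y‖ ^ 2 := by
              refine Finset.sum_le_sum fun i _ => ?_
              rw [hΦs, ← sq_abs]
              gcongr
              exact norm_le_pi_norm y i
          _ = _ := by simp
      have h0 : 0 ≤ ∑ i, (Φ.symm y) i ^ 2 := by positivity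
      calc _ ≤ (1 + d * ‖y‖ ^ 2) ^ 2 := by gcongr
        _ ≤ _ := by
          rw [hD]
          nlinarith [sq_nonneg ((d:ℝ) * ‖y‖ ^ 2 - 1), sq_nonneg (d:ℝ), sq_nonneg (‖y‖ ^ 2)]
    calc _ ≤ ε / D * (D * (1 + ‖y‖ ^ 4)) := by gcongr
      _ = _ := by field_simp

end PE1

section PF1

/-- Uniform polynomial growth of a family of functions. -/
def PGb {ι E : Type*} [NormedAddCommGroup E] (g : ι → E → ℝ) : Prop :=
  ∃ K : ℝ, 0 ≤ K ∧ ∃ q : ℕ, ∀ i y, |g i y| ≤ K * (1 + ‖y‖) ^ q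

theorem PGb.of_poly {ι E : Type*} [NormedAddCommGroup E] {g : ι → E → ℝ} {K : ℝ} {m : ℕ}
    (h : ∀ i y, |g i y| ≤ K * (1 + ‖y‖ ^ m)) : PGb g := by
  refine ⟨|K| * 2, by positivity, m, fun i y => (h i y).trans ?_⟩
  have h1 : 1 ≤ (1 + ‖y‖) ^ m := one_le_pow₀ (by linarith [norm_nonneg y])
  have h2 : ‖y‖ ^ m ≤ (1 + ‖y‖) ^ m := by gcongr; linarith
  calc K * (1 + ‖y‖ ^ m) ≤ |K| * (1 + ‖y‖ ^ m) := by gcongr; exact le_abs_self K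
    _ ≤ |K| * (2 * (1 + ‖y‖) ^ m) := by gcongr; linarith
    _ = _ := by ring

theorem PGb.add {ι E : Type*} [NormedAddCommGroup E] {g h : ι → E → ℝ} (hg : PGb g) (hh : PGb h) :
    PGb (fun i y => g i y + h i y) := by
  obtain ⟨K, hK, q, h1⟩ := hg
  obtain ⟨L, hL, r, h2⟩ := hh
  refine ⟨K + L, by positivity, q + r, fun i y => ?_⟩
  have hy : 1 ≤ 1 + ‖y‖ := by linarith [norm_nonneg y]
  calc |g i y + h i y| ≤ |g i y| + |h i y| := abs_add_le _ _
    _ ≤ K * (1 + ‖y‖) ^ q + L * (1 + ‖y‖) ^ r := add_le_add (h1 i y) (h2 i y)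
    _ ≤ K * (1 + ‖y‖) ^ (q + r) + L * (1 + ‖y‖) ^ (q + r) := by
      gcongr <;> first | exact hy | omega
    _ = _ := by ring

theorem PGb.mul {ι E : Type*} [NormedAddCommGroup E] {g h : ι → E → ℝ} (hg : PGb g) (hh : PGb h) :
    PGb (fun i y => g i y * h i y) := by
  obtain ⟨K, hK, q, h1⟩ := hg
  obtain ⟨L, hL, r, h2⟩ := hh
  refine ⟨K * L, by positivity, q + r, fun i y => ?_⟩
  calc |g i y * h i y| = |g i y| * |h i y| := abs_mul _ _
    _ ≤ (K * (1 + ‖y‖) ^ q) * (L * (1 + ‖y‖) ^ r) := by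
      gcongr
      · exact h1 i y
      · exact h2 i y
    _ = _ := by ring

theorem PGb.neg {ι E : Type*} [NormedAddCommGroup E] {g : ι → E → ℝ} (hg : PGb g) :
    PGb (fun i y => - g i y) := by
  obtain ⟨K, hK, q, h1⟩ := hg
  exact ⟨K, hK, q, fun i y => by rw [abs_neg]; exact h1 i y⟩

theorem PGb.sub {ι E : Type*} [NormedAddCommGroup E] {g h : ι → E → ℝ} (hg : PGb g) (hh : PGb h) :
    PGb (fun i y => g i y - h i y) := by
  simpa [sub_eq_add_neg] using hg.add hh.neg

theorem PGb.zero {ι E : Type*} [NormedAddCommGroup E] : PGb (fun (_ : ι) (_ : E) => (0 : ℝ)) :=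
  ⟨0, le_rfl, 0, fun _ _ => by simp⟩

theorem PGb.sum {ι κ E : Type*} [NormedAddCommGroup E] (s : Finset κ) {g : κ → ι → E → ℝ} (hg : ∀ k, PGb (g k)) :
    PGb (fun i y => ∑ k ∈ s, g k i y) := by
  classical
  induction s using Finset.induction_on with
  | empty => simpa using PGb.zero
  | insert k s hk ih =>
    simp only [Finset.sum_insert hk]
    exact (hg k).add ih

theorem PGb.mono {ι E : Type*} [NormedAddCommGroup E] {g h : ι → E → ℝ} (hg : PGb g) (hh : ∀ i y, |h i y| ≤ |g i y|) :
    PGb h := by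
  obtain ⟨K, hK, q, h1⟩ := hg
  exact ⟨K, hK, q, fun i y => (hh i y).trans (h1 i y)⟩

theorem PGb.comp {ι κ E : Type*} [NormedAddCommGroup E] {g : ι → E → ℝ} (hg : PGb g) (s : κ → ι) :
    PGb (fun k y => g (s k) y) := by
  obtain ⟨K, hK, q, h1⟩ := hg
  exact ⟨K, hK, q, fun i y => h1 _ y⟩

theorem mom_w {ι E : Type*} [NormedAddCommGroup E] [MeasurableSpace E] [BorelSpace E] (P : ι → Measure E)
    (hP : ∀ i, IsProbabilityMeasure (P i))
    (hmom : ∀ q : ℕ, ∃ K : ℝ, ∀ i, Integrable (fun y => ‖y‖ ^ q) (P i) ∧ (∫ y, ‖y‖ ^ q ∂(P i)) ≤ K) (q : ℕ) :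
    ∃ K : ℝ, 0 ≤ K ∧ ∀ i, Integrable (fun y => (1 + ‖y‖) ^ q) (P i) ∧ (∫ y, (1 + ‖y‖) ^ q ∂(P i)) ≤ K := by
  obtain ⟨K, hK⟩ := hmom q
  refine ⟨2 ^ q * (1 + |K|), by positivity, fun i => ?_⟩
  have := hP i
  have hb : ∀ y : E, (1 + ‖y‖) ^ q ≤ 2 ^ q * (1 + ‖y‖ ^ q) := by
    intro y
    have h := add_pow_le (zero_le_one (α := ℝ)) (norm_nonneg y) q
    rw [one_pow] at h
    refine h.trans ?_
    gcongr
    · norm_num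
    · omega
  have hI : Integrable (fun y : E => 2 ^ q * (1 + ‖y‖ ^ q)) (P i) :=
    ((integrable_const _).add (hK i).1).const_mul _
  have hI2 : Integrable (fun y : E => (1 + ‖y‖) ^ q) (P i) := by
    have hm : Continuous (fun y : E => (1 + ‖y‖) ^ q) := by fun_prop
    refine hI.mono' ?_ (Filter.Eventually.of_forall fun y => ?_)
    · have : StronglyMeasurable (fun y : E => (1 + ‖y‖) ^ q) :=
        ((measurable_const.add measurable_norm).pow_const q).stronglyMeasurable
      exact this.aestronglyMeasurable
    · rw [Real.norm_of_nonneg (by positivity)]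
      exact hb y
  refine ⟨hI2, (integral_mono hI2 hI hb).trans ?_⟩
  rw [integral_const_mul, integral_add (integrable_const _) (hK i).1]
  simp
  exact (hK i).2.trans (le_abs_self K)

theorem PGb.integral {ι E : Type*} [NormedAddCommGroup E] [MeasurableSpace E] [BorelSpace E] {P : ι → Measure E}
    (hmom : ∀ q : ℕ, ∃ K : ℝ, 0 ≤ K ∧ ∀ i, Integrable (fun y => (1 + ‖y‖) ^ q) (P i) ∧ (∫ y, (1 + ‖y‖) ^ q ∂(P i)) ≤ K)
    {g : ι → E → ℝ} (hg : PGb g) (hm : ∀ i, AEStronglyMeasurable (g i) (P i)) : ∀ i, Integrable (g i) (P i) := by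
  obtain ⟨K, hK, q, h1⟩ := hg
  obtain ⟨L, hL, h2⟩ := hmom q
  intro i
  exact ((h2 i).1.const_mul K).mono' (hm i) (Filter.Eventually.of_forall fun y => h1 i y)

theorem int_le_w {E : Type*} [NormedAddCommGroup E] [MeasurableSpace E] {P : Measure E} {q : ℕ} {L : ℝ}
    (h2 : Integrable (fun y => (1 + ‖y‖) ^ q) P ∧ (∫ y, (1 + ‖y‖) ^ q ∂P) ≤ L)
    {g : E → ℝ} {K : ℝ} (hK : 0 ≤ K) (hg : ∀ y, |g y| ≤ K * (1 + ‖y‖) ^ q) :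
    |∫ y, g y ∂P| ≤ K * L := by
  have := norm_integral_le_of_norm_le (f := g) (h2.1.const_mul K) (Filter.Eventually.of_forall fun y => hg y)
  rw [integral_const_mul] at this
  exact this.trans (by gcongr; exact h2.2)

theorem norm_pi_single_one {d : ℕ} (i : Fin d) : ‖(Pi.single i (1 : ℝ) : Fin d → ℝ)‖ = 1 := by
  refine le_antisymm ((pi_norm_le_iff_of_nonneg zero_le_one).2 fun j => ?_) ?_
  · rw [Pi.single_apply]; split_ifs <;> simp
  · have := norm_le_pi_norm (Pi.single i (1 : ℝ) : Fin d → ℝ) i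
    simpa using this

theorem abs_pd1_le {d : ℕ} (φ : (Fin d → ℝ) → ℝ) (y : Fin d → ℝ) (i : Fin d) :
    |pd1 φ y i| ≤ ‖iteratedFDeriv ℝ 1 φ y‖ := by
  rw [norm_iteratedFDeriv_one, pd1]
  refine ((fderiv ℝ φ y).le_opNorm _).trans ?_
  rw [norm_pi_single_one, mul_one]

theorem pd2_eq {d : ℕ} {φ : (Fin d → ℝ) → ℝ} (hφ : ContDiff ℝ 2 φ) (y : Fin d → ℝ) (i j : Fin d) :
    pd2 φ y i j = fderiv ℝ (fderiv ℝ φ) y (Pi.single i 1) (Pi.single j 1) := by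
  have hdu : ContDiff ℝ 1 (fderiv ℝ φ) := hφ.fderiv_right (by norm_num)
  have h1 : HasFDerivAt (fderiv ℝ φ) (fderiv ℝ (fderiv ℝ φ) y) y := (hdu.differentiable (by norm_num) _).hasFDerivAt
  have h2 := h1.clm_apply (hasFDerivAt_const (Pi.single j (1:ℝ) : Fin d → ℝ) y)
  rw [pd2, h2.fderiv]
  simp

theorem abs_pd2_le {d : ℕ} {φ : (Fin d → ℝ) → ℝ} (hφ : ContDiff ℝ 2 φ) (y : Fin d → ℝ) (i j : Fin d) :
    |pd2 φ y i j| ≤ ‖iteratedFDeriv ℝ 2 φ y‖ := by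
  rw [pd2_eq hφ, ← norm_iteratedFDeriv_fderiv, norm_iteratedFDeriv_one]
  refine ((fderiv ℝ (fderiv ℝ φ) y).le_opNorm₂ _ _).trans ?_
  rw [norm_pi_single_one, norm_pi_single_one, mul_one, mul_one]

theorem continuous_pd1 {d : ℕ} {φ : (Fin d → ℝ) → ℝ} (hφ : ContDiff ℝ 2 φ) (i : Fin d) :
    Continuous (fun y => pd1 φ y i) := by
  have hdu : ContDiff ℝ 1 (fderiv ℝ φ) := hφ.fderiv_right (by norm_num)
  exact hdu.continuous.clm_apply continuous_const

theorem continuous_pd2 {d : ℕ} {φ : (Fin d → ℝ) → ℝ} (hφ : ContDiff ℝ 2 φ) (i j : Fin d) :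
    Continuous (fun y => pd2 φ y i j) := by
  have hdu : ContDiff ℝ 1 (fderiv ℝ φ) := hφ.fderiv_right (by norm_num)
  simp only [pd2_eq hφ]
  exact ((hdu.continuous_fderiv (by norm_num)).clm_apply continuous_const).clm_apply continuous_const

theorem continuous_genL {d : ℕ} {f : (Fin d → ℝ) → Fin d → ℝ} {a : (Fin d → ℝ) → Fin d → Fin d → ℝ}
    (hf : ∀ i, Continuous (fun y => f y i)) (ha : ∀ i j, Continuous (fun y => a y i j))
    {φ : (Fin d → ℝ) → ℝ} (hφ : ContDiff ℝ 2 φ) : Continuous (genL f a φ) := by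
  have h1 := continuous_pd1 hφ
  have h2 := continuous_pd2 hφ
  unfold genL
  fun_prop

theorem genL_congr {d : ℕ} {f : (Fin d → ℝ) → Fin d → ℝ} {a : (Fin d → ℝ) → Fin d → Fin d → ℝ}
    {φ ψ : (Fin d → ℝ) → ℝ} {y : Fin d → ℝ} (h : φ =ᶠ[nhds y] ψ) : genL f a φ y = genL f a ψ y := by
  have h1 : ∀ i, pd1 φ y i = pd1 ψ y i := fun i => by rw [pd1, pd1, h.fderiv_eq]
  have h2 : ∀ i j, pd2 φ y i j = pd2 ψ y i j := fun i j => by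
    have : (fun z => fderiv ℝ φ z (Pi.single j 1)) =ᶠ[nhds y] (fun z => fderiv ℝ ψ z (Pi.single j 1)) := by
      filter_upwards [h.fderiv (𝕜 := ℝ)] with z hz
      rw [hz]
    rw [pd2, pd2, this.fderiv_eq]
  simp only [genL, h1, h2]

theorem abs_fderiv_le {d : ℕ} (T : (Fin d → ℝ) →L[ℝ] ℝ) {K : ℝ} (hK : ∀ j, |T (Pi.single j 1)| ≤ K) :
    ‖T‖ ≤ d * |K| := by
  refine ContinuousLinearMap.opNorm_le_bound _ (by positivity) fun w => ?_
  have e : w = ∑ j, w j • (Pi.single j (1:ℝ) : Fin d → ℝ) := by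
    ext i
    simp [Finset.sum_apply, Pi.single_apply]
  have : T w = ∑ j, w j * T (Pi.single j 1) := by
    conv_lhs => rw [e]
    simp
  rw [this]
  calc _ ≤ ∑ j, ‖w j * T (Pi.single j 1)‖ := norm_sum_le _ _
    _ ≤ ∑ j : Fin d, ‖w‖ * |K| := by
      refine Finset.sum_le_sum fun j _ => ?_
      rw [norm_mul]
      gcongr
      · exact norm_le_pi_norm w j
      · exact (hK j).trans (le_abs_self K)
    _ = _ := by simp; ring

theorem lip_of_poly {d : ℕ} (g : (Fin d → ℝ) → (Fin d → ℝ) → ℝ) (hg : ∀ y, ContDiff ℝ 1 fun x => g x y)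
    (hp : ∀ j : Fin d, PGb fun x y => fderiv ℝ (fun x' => g x' y) x (Pi.single j 1)) :
    PGb (fun (p : (Fin d → ℝ) × (Fin d → ℝ)) y => (g p.1 y - g p.2 y) / ‖p.1 - p.2‖) := by
  choose K hK q h1 using hp
  refine ⟨d * ∑ j, K j, mul_nonneg (Nat.cast_nonneg d) (Finset.sum_nonneg fun j _ => hK j), ∑ j, q j, fun p y => ?_⟩
  have hy : 1 ≤ 1 + ‖y‖ := by linarith [norm_nonneg y]
  set B := (∑ j, K j) * (1 + ‖y‖) ^ (∑ j, q j) with hB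
  have hB0 : 0 ≤ B := by have : 0 ≤ ∑ j, K j := Finset.sum_nonneg fun j _ => hK j
                         positivity
  have hb : ∀ x, ‖fderiv ℝ (fun x' => g x' y) x‖ ≤ d * B := by
    intro x
    rw [← abs_of_nonneg hB0]
    refine abs_fderiv_le _ fun j => (h1 j x y).trans ?_
    rw [hB]
    have a1 : K j ≤ ∑ j, K j := Finset.single_le_sum (fun j _ => hK j) (Finset.mem_univ j)
    have a2 : q j ≤ ∑ j, q j := Finset.single_le_sum (fun j _ => Nat.zero_le _) (Finset.mem_univ j)
    have a0 := (hK j).trans a1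
    gcongr
  have := convex_univ.norm_image_sub_le_of_norm_fderiv_le (𝕜 := ℝ) (f := fun x' => g x' y)
    (fun x _ => (hg y).differentiable (by norm_num) x) (fun x _ => hb x) (Set.mem_univ p.2) (Set.mem_univ p.1)
  rw [abs_div, abs_norm]
  refine div_le_of_le_mul₀ (norm_nonneg _) (by rw [mul_assoc]; positivity) ?_
  rw [mul_assoc (d : ℝ)]
  exact this

theorem taylor_of_mixed {d : ℕ} (g : (Fin d → ℝ) → (Fin d → ℝ) → ℝ) (hg : ∀ y, ContDiff ℝ 1 fun x => g x y)
    (hp : ∀ j : Fin d, ∃ K θ : ℝ, ∃ m : ℕ, 0 < θ ∧ θ ≤ 1 ∧ ∀ x x' y y',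
      |fderiv ℝ (fun x' => g x' y) x (Pi.single j 1) - fderiv ℝ (fun x' => g x' y') x' (Pi.single j 1)| ≤
      K * (min 1 (‖y - y'‖ ^ θ) + ‖x - x'‖) * (1 + ‖y‖ ^ m + ‖y'‖ ^ m)) :
    PGb (fun (p : (Fin d → ℝ) × (Fin d → ℝ)) y =>
      (g p.1 y - g p.2 y - ∑ j, (p.1 - p.2) j * fderiv ℝ (fun x' => g x' y) p.2 (Pi.single j 1)) / ‖p.1 - p.2‖ ^ 2) := by
  choose K θ m hθ hθ1 h1 using hp
  refine ⟨d * ∑ j, |K j| * 3, by positivity, ∑ j, m j, fun p y => ?_⟩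
  have hy : 1 ≤ 1 + ‖y‖ := by linarith [norm_nonneg y]
  set r := ‖p.1 - p.2‖ with hr
  have hr0 : 0 ≤ r := norm_nonneg _
  set B := (∑ j, |K j| * 3) * (1 + ‖y‖) ^ (∑ j, m j) with hB
  have hB0 : 0 ≤ B := by positivity
  have hb : ∀ x ∈ Metric.closedBall p.2 r, ‖fderiv ℝ (fun x' => g x' y) x - fderiv ℝ (fun x' => g x' y) p.2‖ ≤ d * (B * r) := by
    intro x hx
    rw [← abs_of_nonneg (mul_nonneg hB0 hr0)]
    refine abs_fderiv_le _ fun j => ?_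
    rw [sub_apply]
    refine (h1 j x p.2 y y).trans ?_
    rw [sub_self, norm_zero, Real.zero_rpow (hθ j).ne', min_eq_right zero_le_one, zero_add]
    rw [Metric.mem_closedBall, dist_eq_norm] at hx
    have a1 : |K j| * 3 ≤ ∑ j, |K j| * 3 := Finset.single_le_sum (f := fun j => |K j| * 3) (fun j _ => by positivity) (Finset.mem_univ j)
    have a2 : m j ≤ ∑ j, m j := Finset.single_le_sum (fun j _ => Nat.zero_le _) (Finset.mem_univ j)
    have h3 : 1 ≤ (1 + ‖y‖) ^ m j := one_le_pow₀ hy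
    have h2 : ‖y‖ ^ m j ≤ (1 + ‖y‖) ^ m j := by gcongr; linarith
    calc _ ≤ |K j| * r * (3 * (1 + ‖y‖) ^ m j) := by
          gcongr
          · exact le_abs_self _
          · linarith
      _ = |K j| * 3 * (1 + ‖y‖) ^ m j * r := by ring
      _ ≤ _ := by rw [hB]; gcongr
  have := (convex_closedBall p.2 r).norm_image_sub_le_of_norm_fderiv_le' (𝕜 := ℝ) (f := fun x' => g x' y)
    (fun x _ => (hg y).differentiable (by norm_num) x) hb (Metric.mem_closedBall_self hr0)
      (show p.1 ∈ _ by rw [Metric.mem_closedBall, dist_eq_norm])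
  have e : (p.1 - p.2) = ∑ j, (p.1 - p.2) j • (Pi.single j (1:ℝ) : Fin d → ℝ) := by
    ext i
    simp [Finset.sum_apply, Pi.single_apply]
  have e2 : ∀ T : (Fin d → ℝ) →L[ℝ] ℝ, T (p.1 - p.2) = ∑ j, (p.1 - p.2) j * T (Pi.single j 1) := by
    intro T
    conv_lhs => rw [e]
    simp
  rw [e2] at this
  rw [abs_div, abs_of_nonneg (sq_nonneg r)]
  refine div_le_of_le_mul₀ (sq_nonneg _) (by rw [mul_assoc]; positivity) ?_
  rw [mul_assoc]
  refine this.trans (le_of_eq ?_)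
  ring

end PF1

section PF2

theorem exists_cutoff (d : ℕ) : ∃ χ : (Fin d → ℝ) → ℝ, ContDiff ℝ 3 χ ∧ HasCompactSupport χ ∧ (∀ y, 0 ≤ χ y) ∧ (∀ y, χ y ≤ 1) ∧
    (∀ y, ‖y‖ ≤ 1 → χ y = 1) ∧ (∀ y, 2 ≤ ‖y‖ → χ y = 0) := by
  let b : ContDiffBump (0 : Fin d → ℝ) := ⟨1, 2, by norm_num, by norm_num⟩
  refine ⟨b, b.contDiff, b.hasCompactSupport, fun y => b.nonneg, fun y => b.le_one, fun y hy => ?_, fun y hy => ?_⟩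
  · exact b.one_of_mem_closedBall (by simpa [b] using hy)
  · exact b.zero_of_le_dist (by simpa [b] using hy)

theorem approx_Cc {d : ℕ} (ψ : (Fin d → ℝ) → ℝ) (hψ : Continuous ψ) {K : ℝ} (hK : 0 ≤ K) {q : ℕ}
    (hb : ∀ y, |ψ y| ≤ K * (1 + ‖y‖) ^ q) {ε : ℝ} (hε : 0 < ε) :
    ∃ φ : (Fin d → ℝ) → ℝ, ContDiff ℝ 3 φ ∧ HasCompactSupport φ ∧ ∀ y, |φ y - ψ y| ≤ ε * (1 + ‖y‖) ^ (q + 1) := by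
  obtain ⟨χ, h1, h2, h3, h4, h5, h6⟩ := exists_cutoff d
  set R := 1 + 2 * K / ε with hR
  have hR0 : 0 < R := by positivity
  have hKR : K ≤ ε / 2 * R := by
    rw [hR]; field_simp; linarith
  have hsup : ∀ r : ℝ, 0 < r → HasCompactSupport (fun y => χ (r⁻¹ • y)) := fun r hr =>
    h2.comp_homeomorph (Homeomorph.smulOfNeZero r⁻¹ (by positivity))
  have hcd : ∀ r : ℝ, ContDiff ℝ 3 (fun y => χ (r⁻¹ • y)) := fun r => h1.comp (contDiff_const_smul _)
  have hn : ∀ (r : ℝ) (y : Fin d → ℝ), 0 < r → ‖r⁻¹ • y‖ = ‖y‖ / r := fun r y hr => by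
    rw [norm_smul, norm_inv, Real.norm_of_nonneg hr.le]; field_simp
  have hψc : Continuous (fun y => χ (R⁻¹ • y) * ψ y) := (hcd R).continuous.mul hψ
  have huc : UniformContinuous (fun y => χ (R⁻¹ • y) * ψ y) :=
    ((hsup R hR0).mul_right (f' := ψ)).uniformContinuous_of_continuous hψc
  obtain ⟨φ0, hφ0, hφd⟩ := huc.exists_contDiff_dist_le (half_pos hε)
  refine ⟨fun y => χ ((2 * R)⁻¹ • y) * φ0 y, (hcd (2 * R)).mul (by exact_mod_cast contDiff_infty.1 hφ0 3), (hsup _ (by positivity)).mul_right, fun y => ?_⟩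
  have hy : 1 ≤ 1 + ‖y‖ := by linarith [norm_nonneg y]
  have hy1 : 1 ≤ (1 + ‖y‖) ^ (q + 1) := one_le_pow₀ hy
  have e1 : χ ((2 * R)⁻¹ • y) * (χ (R⁻¹ • y) * ψ y) = χ (R⁻¹ • y) * ψ y := by
    by_cases hc : ‖y‖ ≤ 2 * R
    · rw [h5 ((2 * R)⁻¹ • y), one_mul]
      rw [hn _ _ (by positivity), div_le_one (by positivity)]; exact hc
    · rw [h6 (R⁻¹ • y)]; · simp
      rw [hn _ _ hR0, le_div_iff₀ hR0]; linarith
  have e2 : |χ (R⁻¹ • y) * ψ y - ψ y| ≤ ε / 2 * (1 + ‖y‖) ^ (q + 1) := by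
    by_cases hc : ‖y‖ ≤ R
    · rw [h5 (R⁻¹ • y), one_mul, sub_self, abs_zero]; · positivity
      rw [hn _ _ hR0, div_le_one hR0]; exact hc
    · have : |χ (R⁻¹ • y) * ψ y - ψ y| = |1 - χ (R⁻¹ • y)| * |ψ y| := by
        rw [← abs_mul, ← abs_neg]; congr 1; ring
      rw [this, abs_of_nonneg (by linarith [h4 (R⁻¹ • y)])]
      calc _ ≤ 1 * (K * (1 + ‖y‖) ^ q) := by
            gcongr
            · linarith [h3 (R⁻¹ • y)]
            · exact hb y
        _ ≤ 1 * ((ε / 2 * (1 + ‖y‖)) * (1 + ‖y‖) ^ q) := by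
            gcongr
            refine hKR.trans ?_
            gcongr
            linarith
        _ = _ := by ring
  have e3 : |χ ((2 * R)⁻¹ • y) * (φ0 y - χ (R⁻¹ • y) * ψ y)| ≤ ε / 2 := by
    have := (hφd y).le
    rw [Real.dist_eq] at this
    rw [abs_mul, abs_of_nonneg (h3 _)]
    calc _ ≤ 1 * (ε / 2) := by gcongr; exact h4 _
      _ = _ := one_mul _
  have e4 : χ ((2 * R)⁻¹ • y) * φ0 y - ψ y = χ ((2 * R)⁻¹ • y) * (φ0 y - χ (R⁻¹ • y) * ψ y) + (χ (R⁻¹ • y) * ψ y - ψ y) := by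
    rw [mul_sub, e1]; ring
  show |χ ((2 * R)⁻¹ • y) * φ0 y - ψ y| ≤ _
  rw [e4]
  refine (abs_add_le _ _).trans ?_
  nlinarith

/-- Extension of invariance to `C²` functions of polynomial growth. -/
theorem inv_ext {d : ℕ} {f : (Fin d → ℝ) → Fin d → ℝ} {a : (Fin d → ℝ) → Fin d → Fin d → ℝ} {P : Measure (Fin d → ℝ)}
    (hP : IsInvariantMeasure f a P) (hmom : ∀ q : ℕ, Integrable (fun y => (1 + ‖y‖) ^ q) P)
    (hf : ∀ i, Continuous (fun y => f y i)) (ha : ∀ i j, Continuous (fun y => a y i j))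
    (hfb : ∀ i, PGb (fun (_ : Unit) y => f y i)) (hab : ∀ i j, PGb (fun (_ : Unit) y => a y i j))
    (v : (Fin d → ℝ) → ℝ) (hv : ContDiff ℝ 2 v) (K : ℝ) (q : ℕ) (hK : 0 ≤ K)
    (hvb : ∀ n ≤ 2, ∀ y, ‖iteratedFDeriv ℝ n v y‖ ≤ K * (1 + ‖y‖) ^ q) :
    ∫ y, genL f a v y ∂P = 0 := by
  have := hP.1
  obtain ⟨χ, h1, h2, h3, h4, h5, h6⟩ := exists_cutoff d
  have hsup : ∀ r : ℝ, 0 < r → HasCompactSupport (fun y => χ (r⁻¹ • y)) := fun r hr =>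
    h2.comp_homeomorph (Homeomorph.smulOfNeZero r⁻¹ (by positivity))
  have hcd : ∀ r : ℝ, ContDiff ℝ 2 (fun y => χ (r⁻¹ • y)) := fun r => (h1.of_le (by norm_num)).comp (contDiff_const_smul _)
  have h := fun n : ℕ => fun hn : n ≤ 2 => (h1.continuous_iteratedFDeriv (m := n) (by exact_mod_cast hn.trans (by norm_num))).bounded_above_of_compact_support (h2.iteratedFDeriv (𝕜 := ℝ) n)
  have hB : ∃ B : ℝ, 0 ≤ B ∧ ∀ n ≤ 2, ∀ z, ‖iteratedFDeriv ℝ n χ z‖ ≤ B := by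
    obtain ⟨K0, b0⟩ := h 0 (by norm_num)
    obtain ⟨K1, b1⟩ := h 1 (by norm_num)
    obtain ⟨K2, b2⟩ := h 2 (by norm_num)
    refine ⟨|K0| + |K1| + |K2|, by positivity, fun n hn z => ?_⟩
    have a1 := abs_nonneg K1
    have a2 := abs_nonneg K2
    have a0 := abs_nonneg K0
    interval_cases n
    · exact (b0 z).trans (by linarith [le_abs_self K0])
    · exact (b1 z).trans (by linarith [le_abs_self K1])
    · exact (b2 z).trans (by linarith [le_abs_self K2])
  obtain ⟨B, hB0, hB⟩ := hB
  let χR : ℕ → (Fin d → ℝ) → ℝ := fun N y => χ (((N : ℝ) + 1)⁻¹ • y)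
  let vR : ℕ → (Fin d → ℝ) → ℝ := fun N y => χR N y * v y
  have hχR : ∀ N n, n ≤ 2 → ∀ y, ‖iteratedFDeriv ℝ n (χR N) y‖ ≤ B := by
    intro N n hn y
    have := iFD_comp_right_le ((((N : ℝ) + 1)⁻¹) • ContinuousLinearMap.id ℝ (Fin d → ℝ)) (g := χ) (n := n)
      (h1.of_le (by exact_mod_cast hn.trans (by norm_num))) (hB n hn) y
    refine this.trans ?_
    have hle : ‖(((N : ℝ) + 1)⁻¹) • ContinuousLinearMap.id ℝ (Fin d → ℝ)‖ ≤ 1 := by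
      rw [norm_smul]
      have h1 : ‖((N : ℝ) + 1)⁻¹‖ ≤ 1 := by
        rw [norm_inv, Real.norm_of_nonneg (by positivity)]
        exact inv_le_one_of_one_le₀ (by linarith [Nat.cast_nonneg (α := ℝ) N])
      have h2 := ContinuousLinearMap.norm_id_le (𝕜 := ℝ) (E := Fin d → ℝ)
      exact mul_le_one₀ h1 (norm_nonneg _) h2
    calc _ ≤ B * 1 := by gcongr; exact pow_le_one₀ (norm_nonneg _) hle
      _ = B := mul_one B
  have hvRc : ∀ N, ContDiff ℝ 2 (vR N) := fun N => (hcd _).mul hv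
  have hvR : ∀ N n, n ≤ 2 → ∀ y, ‖iteratedFDeriv ℝ n (vR N) y‖ ≤ 4 * B * K * (1 + ‖y‖) ^ q := by
    intro N n hn y
    refine (norm_iteratedFDeriv_mul_le (hcd _) hv y (n := n) (by exact_mod_cast hn)).trans ?_
    calc _ ≤ ∑ i ∈ Finset.range (n + 1), (n.choose i : ℝ) * (B * (K * (1 + ‖y‖) ^ q)) := by
          refine Finset.sum_le_sum fun i hi => ?_
          rw [mul_assoc]
          have hi' : i ≤ n := by simpa [Nat.lt_succ_iff] using hi
          gcongr
          · exact hχR N i (hi'.trans hn) y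
          · exact hvb _ (by omega) y
      _ = 2 ^ n * (B * (K * (1 + ‖y‖) ^ q)) := by
          rw [← Finset.sum_mul]
          congr 1
          exact_mod_cast Nat.sum_range_choose n
      _ ≤ 2 ^ 2 * (B * (K * (1 + ‖y‖) ^ q)) := by gcongr; norm_num
      _ = _ := by ring
  have hCb : ∀ N, CbTwo (vR N) := by
    intro N
    refine ⟨hvRc N, ?_⟩
    have hcs : HasCompactSupport (vR N) := (hsup _ (by positivity)).mul_right
    have hh := fun n : ℕ => fun hn : n ≤ 2 => ((hvRc N).continuous_iteratedFDeriv (m := n) (by exact_mod_cast hn)).bounded_above_of_compact_support (hcs.iteratedFDeriv (𝕜 := ℝ) n)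
    obtain ⟨K0, b0⟩ := hh 0 (by norm_num)
    obtain ⟨K1, b1⟩ := hh 1 (by norm_num)
    obtain ⟨K2, b2⟩ := hh 2 (by norm_num)
    have a1 := abs_nonneg K1
    have a2 := abs_nonneg K2
    have a0 := abs_nonneg K0
    refine ⟨|K0| + |K1| + |K2|, fun y => ⟨?_, ?_, ?_⟩⟩
    · have := b0 y
      rw [norm_iteratedFDeriv_zero, Real.norm_eq_abs] at this
      linarith [le_abs_self K0]
    · exact (b1 y).trans (by linarith [le_abs_self K1])
    · exact (b2 y).trans (by linarith [le_abs_self K2])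
  have hpg : PGb (fun N y => genL f a (vR N) y) := by
    have p1 : ∀ i, PGb (fun N y => pd1 (vR N) y i) := fun i =>
      ⟨4 * B * K, by positivity, q, fun N y => (abs_pd1_le _ y i).trans (hvR N 1 (by norm_num) y)⟩
    have p2 : ∀ i j, PGb (fun N y => pd2 (vR N) y i j) := fun i j =>
      ⟨4 * B * K, by positivity, q, fun N y => (abs_pd2_le (hvRc N) y i j).trans (hvR N 2 (by norm_num) y)⟩
    unfold genL
    refine PGb.add (PGb.sum _ fun i => PGb.mul ((hfb i).comp fun _ => ()) (p1 i))
      (PGb.sum _ fun i => PGb.sum _ fun j => PGb.mul ((hab i j).comp fun _ => ()) (p2 i j))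
  obtain ⟨C, hC, r, hCr⟩ := hpg
  have hlim := tendsto_integral_of_dominated_convergence (μ := P) (F := fun N y => genL f a (vR N) y) (f := genL f a v)
    (fun y => C * (1 + ‖y‖) ^ r) (fun N => (continuous_genL hf ha (hvRc N)).aestronglyMeasurable) ((hmom r).const_mul C)
    (fun N => Filter.Eventually.of_forall fun y => hCr N y) (Filter.Eventually.of_forall fun y => by
      refine tendsto_const_nhds.congr' ?_
      obtain ⟨N0, hN0⟩ := exists_nat_gt ‖y‖
      filter_upwards [Filter.eventually_ge_atTop N0] with N hN
      refine genL_congr ?_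
      have : ∀ᶠ z in nhds y, ‖z‖ < N0 := continuous_norm.continuousAt.eventually_lt continuousAt_const hN0
      filter_upwards [this] with z hz
      have hN' : (N0 : ℝ) ≤ N := by exact_mod_cast hN
      show v z = χ (((N : ℝ) + 1)⁻¹ • z) * v z
      rw [h5, one_mul]
      rw [norm_smul, norm_inv, Real.norm_of_nonneg (by positivity), inv_mul_le_iff₀ (by positivity)]
      linarith)
  have hz : ∀ N, ∫ y, genL f a (vR N) y ∂P = 0 := fun N => hP.2 _ (hCb N)
  simp only [hz] at hlim
  exact tendsto_nhds_unique hlim tendsto_const_nhds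

end PF2

section PG1

theorem PGb.div_bound {ι E : Type*} [NormedAddCommGroup E] {n : ι → E → ℝ} {r : ι → ℝ} (hg : PGb fun i y => n i y / r i)
    (hr : ∀ i, 0 ≤ r i) (h0 : ∀ i y, r i = 0 → n i y = 0) :
    ∃ K : ℝ, 0 ≤ K ∧ ∃ q : ℕ, ∀ i y, |n i y| ≤ K * r i * (1 + ‖y‖) ^ q := by
  obtain ⟨K, hK, q, h1⟩ := hg
  refine ⟨K, hK, q, fun i y => ?_⟩
  rcases (hr i).eq_or_lt with h | h
  · rw [h0 i y h.symm, ← h]; simp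
  · have := h1 i y
    rw [abs_div, abs_of_pos h, div_le_iff₀ h] at this
    linarith

theorem avg_cc {d : ℕ} {f : (Fin d → ℝ) → (Fin d → ℝ) → Fin d → ℝ} {a : (Fin d → ℝ) → (Fin d → ℝ) → Fin d → Fin d → ℝ}
    {P : (Fin d → ℝ) → Measure (Fin d → ℝ)} (hinv : ∀ x, IsInvariantMeasure (f x) (a x) (P x))
    (hw : ∀ q : ℕ, ∃ K : ℝ, 0 ≤ K ∧ ∀ x, Integrable (fun y => (1 + ‖y‖) ^ q) (P x) ∧ (∫ y, (1 + ‖y‖) ^ q ∂(P x)) ≤ K)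
    (hf : ∀ x i, Continuous (fun y => f x y i)) (ha : ∀ x i j, Continuous (fun y => a x y i j))
    (hfb : ∀ i, PGb (fun x y => f x y i)) (hab : ∀ i j, PGb (fun x y => a x y i j))
    (hfl : ∀ i, PGb (fun (p : (Fin d → ℝ) × (Fin d → ℝ)) y => (f p.1 y i - f p.2 y i) / ‖p.1 - p.2‖))
    (hal : ∀ i j, PGb (fun (p : (Fin d → ℝ) × (Fin d → ℝ)) y => (a p.1 y i j - a p.2 y i j) / ‖p.1 - p.2‖))
    (φ : (Fin d → ℝ) → ℝ) (hφ : Continuous φ) (hφc : HasCompactSupport φ)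
    (hkey : ∀ x ε, 0 < ε → ∃ (u : (Fin d → ℝ) → ℝ) (c : ℝ), CbTwo u ∧ ∀ y, |genL (f x) (a x) u y - c + φ y| ≤ ε * (1 + ‖y‖ ^ 4))
    (x : Fin d → ℝ) (η : ℝ) (hη : 0 < η) :
    ∃ K : ℝ, 0 ≤ K ∧ ∀ x', |∫ y, φ y ∂(P x') - ∫ y, φ y ∂(P x)| ≤ η + K * ‖x' - x‖ := by
  have hprob : ∀ x, IsProbabilityMeasure (P x) := fun x => (hinv x).1
  obtain ⟨M, hM, hMw⟩ := hw 4
  set ε := η / (4 * (M + 1)) with hε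
  have hε0 : 0 < ε := by positivity
  obtain ⟨u, c, hu, hub⟩ := hkey x ε hε0
  obtain ⟨hu2, U, hU⟩ := hu
  have hU0 : 0 ≤ U := (abs_nonneg _).trans (hU 0).1
  have p1 : ∀ (κ : Type) i, PGb (fun (_ : κ) y => pd1 u y i) := fun κ i =>
    ⟨U, hU0, 0, fun _ y => by simpa using (abs_pd1_le u y i).trans (hU y).2.1⟩
  have p2 : ∀ (κ : Type) i j, PGb (fun (_ : κ) y => pd2 u y i j) := fun κ i j =>
    ⟨U, hU0, 0, fun _ y => by simpa using (abs_pd2_le hu2 y i j).trans (hU y).2.2⟩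
  have hφb : PGb (fun (_ : Fin d → ℝ) y => φ y) := by
    obtain ⟨B, hB⟩ := hφ.bounded_above_of_compact_support hφc
    exact ⟨B, (norm_nonneg _).trans (hB 0), 0, fun _ y => by simpa using hB y⟩
  have hφi := hφb.integral hw (fun x => hφ.aestronglyMeasurable)
  have hGb : PGb (fun (p : (Fin d → ℝ) × (Fin d → ℝ)) y => (genL (f p.1) (a p.1) u y - genL (f p.2) (a p.2) u y) / ‖p.1 - p.2‖) := by
    have := PGb.add (PGb.sum Finset.univ fun i => (hfl i).mul (p1 _ i)) (PGb.sum Finset.univ fun i => PGb.sum Finset.univ fun j => (hal i j).mul (p2 _ i j))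
    refine this.mono fun p y => le_of_eq ?_
    congr 1
    simp only [genL, div_mul_eq_mul_div, ← Finset.sum_div, sub_mul, Finset.sum_sub_distrib]
    ring
  obtain ⟨L, hL, q, hLq⟩ := hGb.div_bound (fun p => norm_nonneg _) (fun p y h => by
    rw [norm_eq_zero, sub_eq_zero] at h
    rw [h, sub_self])
  have hGi : ∀ x1 x2, Integrable (genL (f x1) (a x1) u) (P x2) := by
    intro x1
    have : PGb (fun (_ : Fin d → ℝ) y => genL (f x1) (a x1) u y) := by
      unfold genL
      exact PGb.add (PGb.sum Finset.univ fun i => ((hfb i).comp fun _ => x1).mul (p1 _ i))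
        (PGb.sum Finset.univ fun i => PGb.sum Finset.univ fun j => ((hab i j).comp fun _ => x1).mul (p2 _ i j))
    exact this.integral hw (fun _ => (continuous_genL (hf x1) (ha x1) hu2).aestronglyMeasurable)
  obtain ⟨Q, hQ, hQw⟩ := hw q
  have key : ∀ x', |∫ y, φ y ∂(P x') - c| ≤ 2 * ε * M + L * ‖x' - x‖ * Q := by
    intro x'
    have e1 : ∫ y, (genL (f x) (a x) u y - c + φ y) ∂(P x') =
        ∫ y, (genL (f x) (a x) u y - genL (f x') (a x') u y) ∂(P x') + (∫ y, φ y ∂(P x') - c) := by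
      have i1 : Integrable (fun y => genL (f x) (a x) u y - c) (P x') := (hGi x x').sub (integrable_const c)
      rw [integral_add i1 (hφi x'), integral_sub (hGi x x') (integrable_const c),
        integral_sub (hGi x x') (hGi x' x'), (hinv x').2 u ⟨hu2, U, hU⟩]
      simp
      ring
    have e2 : |∫ y, (genL (f x) (a x) u y - c + φ y) ∂(P x')| ≤ (2 * ε) * M := by
      refine int_le_w (hMw x') (by positivity) fun y => (hub y).trans ?_
      have h1 : 1 ≤ (1 + ‖y‖) ^ 4 := one_le_pow₀ (by linarith [norm_nonneg y])
      have h2 : ‖y‖ ^ 4 ≤ (1 + ‖y‖) ^ 4 := by gcongr; linarith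
      calc _ ≤ ε * (2 * (1 + ‖y‖) ^ 4) := by gcongr; linarith
        _ = _ := by ring
    have e3 : |∫ y, (genL (f x) (a x) u y - genL (f x') (a x') u y) ∂(P x')| ≤ L * ‖x' - x‖ * Q := by
      refine int_le_w (hQw x') (by positivity) fun y => ?_
      rw [norm_sub_rev]
      exact hLq (x, x') y
    rw [abs_le] at e2 e3 ⊢
    constructor <;> linarith [e2.1, e2.2, e3.1, e3.2]
  refine ⟨L * Q, by positivity, fun x' => ?_⟩
  have k1 := key x'
  have k2 := key x
  rw [sub_self, norm_zero, mul_zero, zero_mul, add_zero] at k2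
  have hεM : 4 * ε * M ≤ η := by
    have : 4 * ε * (M + 1) = η := by rw [hε]; field_simp
    nlinarith
  rw [abs_le] at k1 k2 ⊢
  constructor <;> linarith [k1.1, k1.2, k2.1, k2.2]

theorem avg_tendsto {d : ℕ} {P : (Fin d → ℝ) → Measure (Fin d → ℝ)} (hprob : ∀ x, IsProbabilityMeasure (P x))
    (hw : ∀ q : ℕ, ∃ K : ℝ, 0 ≤ K ∧ ∀ x, Integrable (fun y => (1 + ‖y‖) ^ q) (P x) ∧ (∫ y, (1 + ‖y‖) ^ q ∂(P x)) ≤ K)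
    (x : Fin d → ℝ)
    (hcc : ∀ φ : (Fin d → ℝ) → ℝ, ContDiff ℝ 3 φ → HasCompactSupport φ → ∀ η : ℝ, 0 < η →
      ∃ K : ℝ, 0 ≤ K ∧ ∀ x', |∫ y, φ y ∂(P x') - ∫ y, φ y ∂(P x)| ≤ η + K * ‖x' - x‖)
    (ψ : (Fin d → ℝ) → ℝ) (hψ : Continuous ψ) (hψb : PGb (fun (_ : Fin d → ℝ) y => ψ y)) :
    Filter.Tendsto (fun x' => ∫ y, ψ y ∂(P x')) (nhds x) (nhds (∫ y, ψ y ∂(P x))) := by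
  have hψi := hψb.integral hw (fun x => hψ.aestronglyMeasurable)
  obtain ⟨K, hK, q, hKq⟩ := hψb
  obtain ⟨M, hM, hMw⟩ := hw (q + 1)
  rw [Metric.tendsto_nhds]
  intro ε hε
  set δ := ε / (8 * (M + 1)) with hδ
  have hδ0 : 0 < δ := by positivity
  obtain ⟨φ, hφ, hφc, hφb⟩ := approx_Cc ψ hψ hK (fun y => hKq x y) hδ0
  obtain ⟨L, hL, hLb⟩ := hcc φ hφ hφc (ε / 4) (by positivity)
  have hφi : ∀ x, Integrable φ (P x) := fun x => hφ.continuous.integrable_of_hasCompactSupport hφc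
  have hdiff : ∀ x', |∫ y, φ y ∂(P x') - ∫ y, ψ y ∂(P x')| ≤ δ * M := by
    intro x'
    rw [← integral_sub (hφi x') (hψi x')]
    exact int_le_w (hMw x') hδ0.le hφb
  have hδM : δ * M ≤ ε / 8 := by
    have : 8 * δ * (M + 1) = ε := by rw [hδ]; field_simp
    nlinarith
  have hev : ∀ᶠ x' in nhds x, L * ‖x' - x‖ < ε / 4 := by
    have hc : ContinuousAt (fun x' : Fin d → ℝ => L * ‖x' - x‖) x := by fun_prop
    exact hc.eventually_lt continuousAt_const (by simpa using (by positivity : 0 < ε / 4))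
  filter_upwards [hev] with x' hx'
  rw [Real.dist_eq]
  have a1 := abs_le.1 (hdiff x')
  have a2 := abs_le.1 (hdiff x)
  have a3 := abs_le.1 (hLb x')
  rw [abs_lt]
  constructor <;> linarith [a1.1, a1.2, a2.1, a2.2, a3.1, a3.2]

theorem transfer_core {d : ℕ} {f : (Fin d → ℝ) → (Fin d → ℝ) → Fin d → ℝ} {a : (Fin d → ℝ) → (Fin d → ℝ) → Fin d → Fin d → ℝ}
    {P : (Fin d → ℝ) → Measure (Fin d → ℝ)} (hprob : ∀ x, IsProbabilityMeasure (P x))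
    (hw : ∀ q : ℕ, ∃ K : ℝ, 0 ≤ K ∧ ∀ x, Integrable (fun y => (1 + ‖y‖) ^ q) (P x) ∧ (∫ y, (1 + ‖y‖) ^ q ∂(P x)) ≤ K)
    (h : (Fin d → ℝ) → (Fin d → ℝ) → ℝ) (hhc : ∀ x, Continuous (h x)) (hhb : PGb h)
    (hf : ∀ x i, Continuous (fun y => f x y i)) (ha : ∀ x i j, Continuous (fun y => a x y i j))
    (hfb : ∀ i, PGb (fun x y => f x y i)) (hab : ∀ i j, PGb (fun x y => a x y i j))
    (dh : Fin d → (Fin d → ℝ) → (Fin d → ℝ) → ℝ) (df : Fin d → (Fin d → ℝ) → (Fin d → ℝ) → Fin d → ℝ)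
    (da : Fin d → (Fin d → ℝ) → (Fin d → ℝ) → Fin d → Fin d → ℝ)
    (hdh : ∀ j x, Continuous (dh j x)) (hdf : ∀ j x i, Continuous fun y => df j x y i) (hda : ∀ j x i i', Continuous fun y => da j x y i i')
    (hdhb : ∀ j, PGb (dh j)) (hdfb : ∀ j i, PGb (fun x y => df j x y i)) (hdab : ∀ j i i', PGb (fun x y => da j x y i i'))
    (hht : PGb (fun (p : (Fin d → ℝ) × (Fin d → ℝ)) y =>
      (h p.1 y - h p.2 y - ∑ j, (p.1 - p.2) j * dh j p.2 y) / ‖p.1 - p.2‖ ^ 2))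
    (hft : ∀ i, PGb (fun (p : (Fin d → ℝ) × (Fin d → ℝ)) y =>
      (f p.1 y i - f p.2 y i - ∑ j, (p.1 - p.2) j * df j p.2 y i) / ‖p.1 - p.2‖ ^ 2))
    (hat : ∀ i i', PGb (fun (p : (Fin d → ℝ) × (Fin d → ℝ)) y =>
      (a p.1 y i i' - a p.2 y i i' - ∑ j, (p.1 - p.2) j * da j p.2 y i i') / ‖p.1 - p.2‖ ^ 2))
    (x : Fin d → ℝ) (v : (Fin d → ℝ) → ℝ) (hv : ContDiff ℝ 2 v) (K : ℝ) (q : ℕ) (hK : 0 ≤ K)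
    (hvb : ∀ n ≤ 2, ∀ y, ‖iteratedFDeriv ℝ n v y‖ ≤ K * (1 + ‖y‖) ^ q)
    (hinv : ∀ x', ∫ y, genL (f x') (a x') v y ∂(P x') = 0)
    (hpde : ∀ y, genL (f x) (a x) v y = h x y - ∫ z, h x z ∂(P x))
    (hcont : ∀ ψ : (Fin d → ℝ) → ℝ, Continuous ψ → PGb (fun (_ : Fin d → ℝ) y => ψ y) →
      Filter.Tendsto (fun x' => ∫ y, ψ y ∂(P x')) (nhds x) (nhds (∫ y, ψ y ∂(P x)))) :
    HasFDerivAt (fun x' => ∫ y, h x' y ∂(P x'))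
      (∑ j, (∫ y, (dh j x y - (∑ i, df j x y i * pd1 v y i) - ∑ i, ∑ i', da j x y i i' * pd2 v y i i') ∂(P x)) •
        (ContinuousLinearMap.proj j : (Fin d → ℝ) →L[ℝ] ℝ)) x := by
  have p1 : ∀ (κ : Type) i, PGb (fun (_ : κ) y => pd1 v y i) := fun κ i =>
    ⟨K, hK, q, fun _ y => (abs_pd1_le v y i).trans (hvb 1 (by norm_num) y)⟩
  have p2 : ∀ (κ : Type) i j, PGb (fun (_ : κ) y => pd2 v y i j) := fun κ i j =>
    ⟨K, hK, q, fun _ y => (abs_pd2_le hv y i j).trans (hvb 2 (by norm_num) y)⟩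
  have c1 := continuous_pd1 hv
  have c2 := continuous_pd2 hv
  set g : Fin d → (Fin d → ℝ) → ℝ := fun j y =>
    dh j x y - (∑ i, df j x y i * pd1 v y i) - ∑ i, ∑ i', da j x y i i' * pd2 v y i i' with hg
  have hgb : ∀ j, PGb (fun (_ : Fin d → ℝ) y => g j y) := fun j =>
    (((hdhb j).comp fun _ => x).sub (PGb.sum Finset.univ fun i => ((hdfb j i).comp fun _ => x).mul (p1 _ i))).sub
      (PGb.sum Finset.univ fun i => PGb.sum Finset.univ fun i' => ((hdab j i i').comp fun _ => x).mul (p2 _ i i'))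
  have hgc : ∀ j, Continuous (g j) := by
    intro j
    have b1 := hdh j x
    have b2 := hdf j x
    have b3 := hda j x
    simp only [hg]
    fun_prop
  have hgi : ∀ j x', Integrable (g j) (P x') := fun j => (hgb j).integral hw (fun _ => (hgc j).aestronglyMeasurable)
  have hhi : ∀ x1 x2, Integrable (h x1) (P x2) := fun x1 => (hhb.comp fun _ => x1).integral hw (fun _ => (hhc x1).aestronglyMeasurable)
  have hGi : ∀ x1 x2, Integrable (genL (f x1) (a x1) v) (P x2) := by
    intro x1
    have : PGb (fun (_ : Fin d → ℝ) y => genL (f x1) (a x1) v y) := by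
      unfold genL
      exact PGb.add (PGb.sum Finset.univ fun i => ((hfb i).comp fun _ => x1).mul (p1 _ i))
        (PGb.sum Finset.univ fun i => PGb.sum Finset.univ fun j => ((hab i j).comp fun _ => x1).mul (p2 _ i j))
    exact this.integral hw (fun _ => (continuous_genL (hf x1) (ha x1) hv).aestronglyMeasurable)
  let R : (Fin d → ℝ) → (Fin d → ℝ) → ℝ := fun x' y =>
    h x' y - h x y - (genL (f x') (a x') v y - genL (f x) (a x) v y) - ∑ j, (x' - x) j * g j y
  have hR : PGb (fun x' y => R x' y / ‖x' - x‖ ^ 2) := by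
    have s : (Fin d → ℝ) → (Fin d → ℝ) × (Fin d → ℝ) := fun x' => (x', x)
    have := ((hht.comp fun x' => (x', x)).sub (PGb.sum Finset.univ fun i => ((hft i).comp fun x' => (x', x)).mul (p1 _ i))).sub
      (PGb.sum Finset.univ fun i => PGb.sum Finset.univ fun j => ((hat i j).comp fun x' => (x', x)).mul (p2 _ i j))
    refine this.mono fun x' y => le_of_eq ?_
    congr 1
    simp only [R, hg, genL, div_mul_eq_mul_div, ← Finset.sum_div, sub_mul, Finset.sum_sub_distrib, mul_sub, Finset.sum_mul, Finset.mul_sum]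
    have e1 : ∑ j, ∑ i, (x' - x) j * (df j x y i * pd1 v y i) = ∑ i, ∑ j, (x' - x) j * df j x y i * pd1 v y i := by
      rw [Finset.sum_comm]
      exact Finset.sum_congr rfl fun i _ => Finset.sum_congr rfl fun j _ => by ring
    have e2 : ∑ j, ∑ i, ∑ i', (x' - x) j * (da j x y i i' * pd2 v y i i') = ∑ i, ∑ i', ∑ j, (x' - x) j * da j x y i i' * pd2 v y i i' := by
      rw [Finset.sum_comm]
      refine Finset.sum_congr rfl fun i _ => ?_
      rw [Finset.sum_comm]
      exact Finset.sum_congr rfl fun i _ => Finset.sum_congr rfl fun j _ => by ring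
    rw [e1, e2]
    ring
  obtain ⟨L, hL, r, hLr⟩ := hR.div_bound (fun x' => sq_nonneg _) (fun x' y h0 => by
    have : x' = x := by
      rw [sq_eq_zero_iff, norm_eq_zero, sub_eq_zero] at h0
      exact h0
    subst this
    simp [R])
  obtain ⟨M, hM, hMw⟩ := hw r
  have main : ∀ x', |∫ y, h x' y ∂(P x') - ∫ y, h x y ∂(P x) - ∑ j, (x' - x) j * ∫ y, g j y ∂(P x')| ≤ L * ‖x' - x‖ ^ 2 * M := by
    intro x'
    have e1 : ∫ y, R x' y ∂(P x') = ∫ y, h x' y ∂(P x') - ∫ y, h x y ∂(P x) - ∑ j, (x' - x) j * ∫ y, g j y ∂(P x') := by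
      simp only [R]
      have i1 : Integrable (fun y => h x' y - h x y) (P x') := (hhi x' x').sub (hhi x x')
      have i2 : Integrable (fun y => genL (f x') (a x') v y - genL (f x) (a x) v y) (P x') := (hGi x' x').sub (hGi x x')
      have i3 : Integrable (fun y => h x' y - h x y - (genL (f x') (a x') v y - genL (f x) (a x) v y)) (P x') := i1.sub i2
      have i4 : Integrable (fun y => ∑ j, (x' - x) j * g j y) (P x') := integrable_finset_sum _ fun j _ => (hgi j x').const_mul _
      rw [integral_sub i3 i4, integral_sub i1 i2, integral_sub (hhi x' x') (hhi x x'),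
        integral_sub (hGi x' x') (hGi x x'), hinv x', integral_finset_sum _ fun j _ => (hgi j x').const_mul _]
      simp only [integral_const_mul, hpde]
      rw [integral_sub (hhi x x') (integrable_const _)]
      simp
    rw [← e1]
    exact int_le_w (hMw x') (by positivity) fun y => hLr x' y
  rw [hasFDerivAt_iff_isLittleO, Asymptotics.isLittleO_iff]
  intro c hc
  have hev1 : ∀ᶠ x' in nhds x, L * ‖x' - x‖ * M < c / 2 := by
    have hc' : ContinuousAt (fun x' : Fin d → ℝ => L * ‖x' - x‖ * M) x := by fun_prop
    exact hc'.eventually_lt continuousAt_const (by simpa using (by positivity : 0 < c / 2))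
  have hev2 : ∀ᶠ x' in nhds x, ∑ j, |∫ y, g j y ∂(P x') - ∫ y, g j y ∂(P x)| < c / 2 := by
    have ht : Filter.Tendsto (fun x' => ∑ j, |∫ y, g j y ∂(P x') - ∫ y, g j y ∂(P x)|) (nhds x) (nhds (∑ j : Fin d, |∫ y, g j y ∂(P x) - ∫ y, g j y ∂(P x)|)) :=
      tendsto_finset_sum _ fun j _ => ((hcont _ (hgc j) (hgb j)).sub_const _).abs
    exact ht.eventually_lt_const (by simpa using (by positivity : 0 < c / 2))
  filter_upwards [hev1, hev2] with x' h1 h2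
  have e : ∫ y, h x' y ∂(P x') - ∫ y, h x y ∂(P x) - (∑ j, (∫ y, g j y ∂(P x)) • (ContinuousLinearMap.proj j : (Fin d → ℝ) →L[ℝ] ℝ)) (x' - x)
      = (∫ y, h x' y ∂(P x') - ∫ y, h x y ∂(P x) - ∑ j, (x' - x) j * ∫ y, g j y ∂(P x'))
        + ∑ j, (x' - x) j * (∫ y, g j y ∂(P x') - ∫ y, g j y ∂(P x)) := by
    simp only [sum_apply, smul_apply, ContinuousLinearMap.proj_apply, smul_eq_mul, mul_sub, Finset.sum_sub_distrib]
    have : ∑ j, (∫ y, g j y ∂(P x)) * (x' - x) j = ∑ j, (x' - x) j * (∫ y, g j y ∂(P x)) :=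
      Finset.sum_congr rfl fun j _ => mul_comm _ _
    rw [this]
    ring
  show ‖∫ y, h x' y ∂(P x') - ∫ y, h x y ∂(P x) - (∑ j, (∫ y, g j y ∂(P x)) • (ContinuousLinearMap.proj j : (Fin d → ℝ) →L[ℝ] ℝ)) (x' - x)‖ ≤ _
  rw [e]
  refine (norm_add_le _ _).trans ?_
  have b1 := main x'
  have b2 : ‖∑ j, (x' - x) j * (∫ y, g j y ∂(P x') - ∫ y, g j y ∂(P x))‖ ≤ ‖x' - x‖ * ∑ j, |∫ y, g j y ∂(P x') - ∫ y, g j y ∂(P x)| := by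
    rw [Finset.mul_sum]
    refine (norm_sum_le _ _).trans (Finset.sum_le_sum fun j _ => ?_)
    rw [norm_mul]
    gcongr
    · exact norm_le_pi_norm (x' - x) j
    · exact le_rfl
  rw [← Real.norm_eq_abs] at b1
  have hn := norm_nonneg (x' - x)
  nlinarith

end PG1

/-- (first-order derivative transfer formula: differentiability in the
frozen parameter `x` of the average `h̄(x,μ) = ∫ h(x,y,μ) π(dy;x,μ)` and the formula
for its partial derivatives in terms of the Poisson solution `v`). -/
theorem derivative_transfer_formula
    (d : ℕ) (hd : 0 < d)
    (f : (Fin d → ℝ) → (Fin d → ℝ) → ProbMeas2 d → Fin d → ℝ)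
    (a : (Fin d → ℝ) → (Fin d → ℝ) → ProbMeas2 d → Fin d → Fin d → ℝ)
    (π : (Fin d → ℝ) → ProbMeas2 d → Measure (Fin d → ℝ))
    (hA1 : AssumptionA1 (fun p : (Fin d → ℝ) × ProbMeas2 d => fun y => a p.1 y p.2))
    (hA2 : AssumptionA2 (fun p : (Fin d → ℝ) × ProbMeas2 d => fun y => f p.1 y p.2))
    (hπ : ∀ x μ, IsInvariantMeasure (fun y => f x y μ) (fun y => a x y μ) (π x μ))
    (hπmom : ∀ q : ℕ, ∃ K : ℝ, ∀ x μ, Integrable (fun y => ‖y‖ ^ q) (π x μ) ∧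
        (∫ y, ‖y‖ ^ q ∂(π x μ)) ≤ K)
    (h : (Fin d → ℝ) → (Fin d → ℝ) → ProbMeas2 d → ℝ)
    (hhx : ∀ y μ, ContDiff ℝ 1 fun x => h x y μ)
    (hfx : ∀ y μ (i : Fin d), ContDiff ℝ 1 fun x => f x y μ i)
    (hax : ∀ y μ (i j : Fin d), ContDiff ℝ 1 fun x => a x y μ i j)
    (hc1 : ∀ μ, Continuous fun p : (Fin d → ℝ) × (Fin d → ℝ) => h p.1 p.2 μ)
    (hc2 : ∀ μ (j : Fin d), Continuous fun p : (Fin d → ℝ) × (Fin d → ℝ) =>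
        fderiv ℝ (fun x => h x p.2 μ) p.1 (Pi.single j 1))
    (hc3 : ∀ μ (i j : Fin d), Continuous fun p : (Fin d → ℝ) × (Fin d → ℝ) =>
        fderiv ℝ (fun x => f x p.2 μ i) p.1 (Pi.single j 1))
    (hc4 : ∀ μ (i i' j : Fin d), Continuous fun p : (Fin d → ℝ) × (Fin d → ℝ) =>
        fderiv ℝ (fun x => a x p.2 μ i i') p.1 (Pi.single j 1))
    (hp1 : PolyY h)
    (hp2 : ∀ j : Fin d, PolyY fun x y μ => fderiv ℝ (fun x' => h x' y μ) x (Pi.single j 1))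
    (hp3 : ∀ i j : Fin d, PolyY fun x y μ => fderiv ℝ (fun x' => f x' y μ i) x (Pi.single j 1))
    (hp4 : ∀ i i' j : Fin d,
        PolyY fun x y μ => fderiv ℝ (fun x' => a x' y μ i i') x (Pi.single j 1))
    (hl1 : MixedHolder h)
    (hl2 : ∀ j : Fin d,
        MixedHolder fun x y μ => fderiv ℝ (fun x' => h x' y μ) x (Pi.single j 1))
    (hl3 : ∀ i j : Fin d,
        MixedHolder fun x y μ => fderiv ℝ (fun x' => f x' y μ i) x (Pi.single j 1))
    (hl4 : ∀ i i' j : Fin d,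
        MixedHolder fun x y μ => fderiv ℝ (fun x' => a x' y μ i i') x (Pi.single j 1))
    (v : (Fin d → ℝ) → (Fin d → ℝ) → ProbMeas2 d → ℝ)
    (hvC2 : ∀ x μ, ContDiff ℝ 2 fun y => v x y μ)
    (hvpoly : ∃ K : ℝ, ∃ q : ℕ, ∀ x y μ,
        |v x y μ| ≤ K * (1 + ‖y‖ ^ q) ∧
        ‖iteratedFDeriv ℝ 1 (fun z => v x z μ) y‖ ≤ K * (1 + ‖y‖ ^ q) ∧
        ‖iteratedFDeriv ℝ 2 (fun z => v x z μ) y‖ ≤ K * (1 + ‖y‖ ^ q))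
    (hvpde : ∀ x y μ, genL (fun z => f x z μ) (fun z => a x z μ) (fun z => v x z μ) y =
        h x y μ - ∫ z, h x z μ ∂(π x μ)) :
    ∀ μ : ProbMeas2 d,
      (Differentiable ℝ fun x => ∫ y, h x y μ ∂(π x μ)) ∧
      ∀ (x : Fin d → ℝ) (j : Fin d),
        fderiv ℝ (fun x' => ∫ y, h x' y μ ∂(π x' μ)) x (Pi.single j 1) =
          ∫ y, (fderiv ℝ (fun x' => h x' y μ) x (Pi.single j 1) -
            (∑ i, fderiv ℝ (fun x' => f x' y μ i) x (Pi.single j 1) *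
              pd1 (fun z => v x z μ) y i) -
            ∑ i, ∑ i', fderiv ℝ (fun x' => a x' y μ i i') x (Pi.single j 1) *
              pd2 (fun z => v x z μ) y i i') ∂(π x μ) := by
  intro μ
  obtain ⟨has, ⟨lm, lp, hlm, hlp, hell⟩, ⟨Ka, hKa⟩, hac, ⟨Ka', hKa'⟩, -⟩ := hA1
  obtain ⟨⟨β, C, hβ, hC, hdis⟩, ⟨Cf, hCf⟩, hfc, ⟨Kf, hKf⟩, -⟩ := hA2
  have hprob : ∀ x, IsProbabilityMeasure (π x μ) := fun x => (hπ x μ).1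
  have hw := mom_w (fun x => π x μ) hprob (fun q => by
    obtain ⟨K, hK⟩ := hπmom q
    exact ⟨K, fun x => hK x μ⟩)
  have cf : ∀ x i, Continuous (fun y => f x y μ i) := fun x i => (hfc (x, μ) i).continuous
  have ca : ∀ x i j, Continuous (fun y => a x y μ i j) := fun x i j => (hac (x, μ) i j).continuous
  have bf : ∀ i, PGb (fun x y => f x y μ i) := fun i =>
    PGb.of_poly (K := Cf) (m := 1) fun x y => by
      have h1 := (norm_le_pi_norm (f x y μ) i).trans (hCf (x, μ) y)
      rw [pow_one]
      exact h1
  have ba : ∀ i j, PGb (fun x y => a x y μ i j) := fun i j =>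
    ⟨|Ka|, abs_nonneg _, 0, fun x y => by
      rw [pow_zero, mul_one]
      exact (hKa (x, μ) y i j).trans (le_abs_self _)⟩
  have polyb : ∀ g : (Fin d → ℝ) → (Fin d → ℝ) → ProbMeas2 d → ℝ, PolyY g → PGb (fun x y => g x y μ) := by
    rintro g ⟨K, m, hg⟩
    exact PGb.of_poly (K := K) (m := m) fun x y => hg x y μ
  have lf : ∀ i, PGb (fun (p : (Fin d → ℝ) × (Fin d → ℝ)) y => (f p.1 y μ i - f p.2 y μ i) / ‖p.1 - p.2‖) := fun i =>
    lip_of_poly (fun x y => f x y μ i) (fun y => hfx y μ i) (fun j => polyb _ (hp3 i j))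
  have la : ∀ i i', PGb (fun (p : (Fin d → ℝ) × (Fin d → ℝ)) y => (a p.1 y μ i i' - a p.2 y μ i i') / ‖p.1 - p.2‖) := fun i i' =>
    lip_of_poly (fun x y => a x y μ i i') (fun y => hax y μ i i') (fun j => polyb _ (hp4 i i' j))
  have hmix : ∀ g : (Fin d → ℝ) → (Fin d → ℝ) → ProbMeas2 d → ℝ, MixedHolder g → ∃ K θ : ℝ, ∃ m : ℕ, 0 < θ ∧ θ ≤ 1 ∧ ∀ x x' y y',
      |g x y μ - g x' y' μ| ≤ K * (min 1 (‖y - y'‖ ^ θ) + ‖x - x'‖) * (1 + ‖y‖ ^ m + ‖y'‖ ^ m) := by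
    rintro g ⟨K, θ, m, h1, h2, h3⟩
    exact ⟨K, θ, m, h1, h2, fun x x' y y' => h3 x x' y y' μ⟩
  obtain ⟨Kv, q, hv⟩ := hvpoly
  have hvb : ∀ x, ∀ n ≤ 2, ∀ y, ‖iteratedFDeriv ℝ n (fun z => v x z μ) y‖ ≤ |Kv| * 2 * (1 + ‖y‖) ^ q := by
    intro x n hn y
    have h1 : 1 ≤ (1 + ‖y‖) ^ q := one_le_pow₀ (by linarith [norm_nonneg y])
    have h2 : ‖y‖ ^ q ≤ (1 + ‖y‖) ^ q := by gcongr; linarith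
    have h3 : Kv * (1 + ‖y‖ ^ q) ≤ |Kv| * 2 * (1 + ‖y‖) ^ q := by
      calc Kv * (1 + ‖y‖ ^ q) ≤ |Kv| * (1 + ‖y‖ ^ q) := by gcongr; exact le_abs_self Kv
        _ ≤ |Kv| * (2 * (1 + ‖y‖) ^ q) := by gcongr; linarith
        _ = _ := by ring
    refine le_trans ?_ h3
    interval_cases n
    · rw [norm_iteratedFDeriv_zero]; exact (hv x y μ).1
    · exact (hv x y μ).2.1
    · exact (hv x y μ).2.2
  have hcc : ∀ x, ∀ φ : (Fin d → ℝ) → ℝ, ContDiff ℝ 3 φ → HasCompactSupport φ → ∀ η : ℝ, 0 < η →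
      ∃ K : ℝ, 0 ≤ K ∧ ∀ x', |∫ y, φ y ∂(π x' μ) - ∫ y, φ y ∂(π x μ)| ≤ η + K * ‖x' - x‖ := by
    intro x φ hφ hφc η hη
    refine avg_cc (f := fun x y => f x y μ) (a := fun x y => a x y μ) (P := fun x => π x μ) (fun x => hπ x μ) hw cf ca bf ba lf la
      φ hφ.continuous hφc (fun x ε hε => ?_) x η hη
    refine key_pi hd (fun y => f x y μ) (fun y => a x y μ) (has (x, μ)) lm lp hlm hlp (hell (x, μ)) (hac (x, μ)) (|Ka'| + |Kf|) ?_
      β C hβ hC.le (hdis (x, μ)) (hfc (x, μ)) ?_ φ hφ hφc ε hε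
    · intro y i j
      have h1 := hKa' (x, μ) y i j
      have h2 := le_abs_self Ka'
      have h3 := abs_nonneg Kf
      exact ⟨h1.1.trans (by linarith), h1.2.trans (by linarith)⟩
    · intro y i
      have h1 := hKf (x, μ) y i
      have h2 := le_abs_self Kf
      have h3 := abs_nonneg Ka'
      exact ⟨h1.1.trans (by linarith), h1.2.trans (by linarith)⟩
  have main : ∀ x, HasFDerivAt (fun x' => ∫ y, h x' y μ ∂(π x' μ))
      (∑ j, (∫ y, (fderiv ℝ (fun x' => h x' y μ) x (Pi.single j 1) -
            (∑ i, fderiv ℝ (fun x' => f x' y μ i) x (Pi.single j 1) *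
              pd1 (fun z => v x z μ) y i) -
            ∑ i, ∑ i', fderiv ℝ (fun x' => a x' y μ i i') x (Pi.single j 1) *
              pd2 (fun z => v x z μ) y i i') ∂(π x μ)) •
        (ContinuousLinearMap.proj j : (Fin d → ℝ) →L[ℝ] ℝ)) x := by
    intro x
    exact transfer_core (f := fun x y => f x y μ) (a := fun x y => a x y μ) (P := fun x => π x μ) hprob hw
      (fun x y => h x y μ) (fun x => (hc1 μ).comp (Continuous.prodMk_right x)) (polyb _ hp1) cf ca bf ba
      (fun j x y => fderiv ℝ (fun x' => h x' y μ) x (Pi.single j 1))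
      (fun j x y i => fderiv ℝ (fun x' => f x' y μ i) x (Pi.single j 1))
      (fun j x y i i' => fderiv ℝ (fun x' => a x' y μ i i') x (Pi.single j 1))
      (fun j x => (hc2 μ j).comp (Continuous.prodMk_right x))
      (fun j x i => (hc3 μ i j).comp (Continuous.prodMk_right x))
      (fun j x i i' => (hc4 μ i i' j).comp (Continuous.prodMk_right x))
      (fun j => polyb _ (hp2 j)) (fun j i => polyb _ (hp3 i j)) (fun j i i' => polyb _ (hp4 i i' j))
      (taylor_of_mixed (fun x y => h x y μ) (fun y => hhx y μ) (fun j => hmix _ (hl2 j)))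
      (fun i => taylor_of_mixed (fun x y => f x y μ i) (fun y => hfx y μ i) (fun j => hmix _ (hl3 i j)))
      (fun i i' => taylor_of_mixed (fun x y => a x y μ i i') (fun y => hax y μ i i') (fun j => hmix _ (hl4 i i' j)))
      x (fun z => v x z μ) (hvC2 x μ) (|Kv| * 2) q (by positivity) (hvb x)
      (fun x' => inv_ext (hπ x' μ) (fun r => by
          obtain ⟨K, -, hK⟩ := hw r
          exact (hK x').1) (cf x') (ca x') (fun i => (bf i).comp fun _ => x') (fun i j => (ba i j).comp fun _ => x')
          (fun z => v x z μ) (hvC2 x μ) (|Kv| * 2) q (by positivity) (hvb x))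
      (fun y => hvpde x y μ)
      (fun ψ hψ hψb => avg_tendsto (P := fun x => π x μ) hprob hw x (hcc x) ψ hψ hψb)
  refine ⟨fun x => (main x).differentiableAt, fun x j => ?_⟩
  rw [(main x).fderiv]
  simp only [sum_apply, smul_apply, ContinuousLinearMap.proj_apply, smul_eq_mul, Pi.single_apply]
  simp

end
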